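/- Let R be a countable unital subring of ℝ. Then there exists a separable unital simple C*-algebra A with a unique tracial state τ such that the fundamental group F(A) equals the group of positive invertible elements of R, i.e. F(A) = {t ∈ ℝ : t > 0, t ∈ R, t⁻¹ ∈ R}. -/

import Mathlib

open scoped Matrix ComplexOrder

section CommonDefs

variable (A : Type*) [CStarAlgebra A]

/-- `τ` is a tracial state on the unital C*-algebra `A`. -/
structure IsTracialState (τ : A →ₗ[ℂ] ℂ) : Prop where
  map_one : τ 1 = 1
  nonneg : ∀ a : A, 0 ≤ τ (star a * a)
  tracial : ∀ a b : A, τ (a * b) = τ (b * a)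

/-- `A` is simple: every closed two-sided ideal is trivial. -/
def IsSimpleCStarAlgebra : Prop :=
  ∀ I : TwoSidedIdeal A, IsClosed (I : Set A) → I = ⊥ ∨ I = ⊤

/-- `φ` is a *-isomorphism from `A` onto the corner `p Mₙ(A) p`. -/
def IsCornerIso {n : ℕ} (p : Matrix (Fin n) (Fin n) A)
    (φ : A → Matrix (Fin n) (Fin n) A) : Prop :=
  Function.Injective φ ∧
  (∀ a b : A, φ (a + b) = φ a + φ b) ∧
  (∀ a b : A, φ (a * b) = φ a * φ b) ∧
  (∀ (c : ℂ) (a : A), φ (c • a) = c • φ a) ∧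
  (∀ a : A, φ (star a) = star (φ a)) ∧
  Set.range φ = {x : Matrix (Fin n) (Fin n) A | p * x * p = x}

/-- The fundamental group of a unital simple C*-algebra with unique tracial state `τ`:
the set of values `(τ ⊗ Tr)(p)` over projections `p ∈ Mₙ(A)` whose corner `p Mₙ(A) p`
is *-isomorphic to `A`. -/
def fundamentalGroup (τ : A →ₗ[ℂ] ℂ) : Set ℝ :=
  {t : ℝ | ∃ (n : ℕ) (p : Matrix (Fin n) (Fin n) A), 0 < n ∧
    p * p = p ∧ star p = p ∧ (∃ φ, IsCornerIso A p φ) ∧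
    (∑ i, τ (p i i)) = (t : ℂ)}

end CommonDefs


/-!
Let `G` be a countable subgroup of `ℝ` containing `1`; for the theorem `G` is the ring itself. The
positive cone of `G` is an increasing union of free cones `ℕ S₀ ⊆ ℕ S₁ ⊆ ⋯`. Inside the bounded
operators on `ℓ²` this is realized by finite families of isometries `w` with orthogonal ranges
exhausting the space, where `w` carries a weight in `Sₙ` and the weights sum to `1`; each isometry
`w` of weight `s` is then split into isometries `w z` in a way that depends on `s` only. The
products `w z*` of members of equal weight are matrix units of a finite-dimensional algebra, these
algebras increase, and the closure `A` of their union is simple with a unique trace `τ`, whose value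
at `w w*` is the weight of `w`.

Projections over `A` have traces in `G`, and the traces of projections of `A` generate `G`. An
isomorphism of `A` onto a corner of trace `t` multiplies traces by `t`, so `t G = G`. Conversely, if
`t G = G`, then multiplying all weights by `t` leaves `A` unchanged, while the same splitting
process started from a family of total weight `t` gives a corner of trace `t`. An intertwining
argument shows that the algebra depends only on `G` and on the total weight, so this corner is
isomorphic to `A`. When `G` is a ring, `t G = G` says that `t` is a unit.
-/

/-! ### Weighted Cuntz families -/

/-- A finite set of pairs `(w, s)`. The element `w` is meant to be an isometry of `B` and the real
number `s` the trace of its range projection `w w*`. -/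
abbrev WeightedFamily (B : Type*) := Finset (B × ℝ)

namespace WeightedFamily

variable {B : Type*}

/-- The multiset of weights of a family; its sum is the trace of the unit. -/
def weights (E : WeightedFamily B) : Multiset ℝ := E.val.map Prod.snd

theorem sum_weights (E : WeightedFamily B) : E.weights.sum = ∑ x ∈ E, x.2 := rfl

theorem sum_map_weights {M : Type*} [AddCommMonoid M] (E : WeightedFamily B) (f : ℝ → M) :
    (E.weights.map f).sum = ∑ x ∈ E, f x.2 := by
  rw [weights, Multiset.map_map]
  rfl

theorem mem_weights {E : WeightedFamily B} {s : ℝ} : s ∈ E.weights ↔ ∃ x ∈ E, x.2 = s := by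
  simp only [weights, Multiset.mem_map, Finset.mem_val]

theorem snd_mem_weights {E : WeightedFamily B} {x : B × ℝ} (hx : x ∈ E) : x.2 ∈ E.weights :=
  mem_weights.2 ⟨x, hx, rfl⟩

theorem exists_equiv_of_weights_eq {E F : WeightedFamily B} (h : E.weights = F.weights) :
    ∃ e : E ≃ F, ∀ x, (e x).1.2 = x.1.2 := by
  classical
  have hcard (H : WeightedFamily B) (s : ℝ) :
      Fintype.card {x : H // x.1.2 = s} = H.weights.count s := by
    rw [Fintype.card_subtype, weights, Multiset.count_map, ← Finset.filter_val, Finset.card_val,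
      ← Finset.card_map (Function.Embedding.subtype (· ∈ H))]
    congr 1
    ext z
    simp only [Finset.mem_map, Finset.mem_filter, Finset.mem_univ, true_and, Subtype.exists,
      Function.Embedding.subtype_apply]
    aesop
  have hfiber (s : ℝ) : Nonempty ({x : E // x.1.2 = s} ≃ {x : F // x.1.2 = s}) :=
    Fintype.card_eq.1 (by rw [hcard, hcard, h])
  exact ⟨Equiv.ofFiberEquiv fun s => (hfiber s).some,
    Equiv.ofFiberEquiv_map (g := fun x : F => x.1.2) _⟩

section Monoid

variable [Monoid B] {E : WeightedFamily B} {ρ : ℝ → WeightedFamily B}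

open scoped Classical in
/-- The family `{(u w, s) | (w, s) ∈ E}`. -/
noncomputable def translate (u : B) (E : WeightedFamily B) : WeightedFamily B :=
  E.image fun x => (u * x.1, x.2)

open scoped Classical in
/-- Substitution of the family `ρ s` for every member of `E` of weight `s`. That the substituted
family depends only on the weight is what makes the block algebras of `E` and `E.subst ρ` nested. -/
noncomputable def subst (E : WeightedFamily B) (ρ : ℝ → WeightedFamily B) : WeightedFamily B :=
  E.biUnion fun x => (ρ x.2).translate x.1

theorem mem_translate {u : B} {z : B × ℝ} : z ∈ E.translate u ↔ ∃ x ∈ E, (u * x.1, x.2) = z := by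
  simp only [translate, Finset.mem_image]

theorem mem_subst {z : B × ℝ} :
    z ∈ E.subst ρ ↔ ∃ x ∈ E, ∃ y ∈ ρ x.2, (x.1 * y.1, y.2) = z := by
  simp only [subst, Finset.mem_biUnion, mem_translate]

theorem mul_mem_subst {x y : B × ℝ} (hx : x ∈ E) (hy : y ∈ ρ x.2) :
    (x.1 * y.1, y.2) ∈ E.subst ρ :=
  mem_subst.2 ⟨x, hx, y, hy, rfl⟩

theorem mem_weights_subst {s : ℝ} :
    s ∈ (E.subst ρ).weights ↔ ∃ r ∈ E.weights, s ∈ (ρ r).weights := by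
  simp only [mem_weights, mem_subst]
  constructor
  · rintro ⟨_, ⟨x, hx, y, hy, rfl⟩, rfl⟩
    exact ⟨x.2, ⟨x, hx, rfl⟩, y, hy, rfl⟩
  · rintro ⟨_, ⟨x, hx, rfl⟩, y, hy, rfl⟩
    exact ⟨_, ⟨x, hx, y, hy, rfl⟩, rfl⟩

theorem subst_subst (E : WeightedFamily B) (ρ σ : ℝ → WeightedFamily B) :
    (E.subst ρ).subst σ = E.subst fun s => (ρ s).subst σ := by
  ext z
  simp only [mem_subst]
  constructor
  · rintro ⟨_, ⟨x, hx, y, hy, rfl⟩, w, hw, rfl⟩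
    exact ⟨x, hx, _, ⟨y, hy, w, hw, rfl⟩, by simp only [mul_assoc]⟩
  · rintro ⟨x, hx, _, ⟨y, hy, w, hw, rfl⟩, rfl⟩
    exact ⟨_, ⟨x, hx, y, hy, rfl⟩, w, hw, by simp only [mul_assoc]⟩

theorem subst_singleton_one (E : WeightedFamily B) : E.subst (fun s => {(1, s)}) = E := by
  ext z
  simp [mem_subst]

end Monoid

section StarRing

variable [Ring B] [StarRing B] {E F H : WeightedFamily B} {ρ : ℝ → WeightedFamily B}

/-- The isometries of `E` generate a Cuntz algebra: they have pairwise orthogonal ranges, and their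
range projections sum to `1`. -/
structure IsCuntz (E : WeightedFamily B) : Prop where
  star_mul_of_ne : ∀ x ∈ E, ∀ y ∈ E, x ≠ y → star x.1 * y.1 = 0
  star_mul_self : ∀ x ∈ E, star x.1 * x.1 = 1
  sum_mul_star : ∑ x ∈ E, x.1 * star x.1 = 1

/-- `F` arises from `E` by substituting Cuntz families and preserving total weights. -/
def Refines (E F : WeightedFamily B) : Prop :=
  ∃ ρ : ℝ → WeightedFamily B,
    (∀ x ∈ E, (ρ x.2).IsCuntz ∧ (ρ x.2).weights.sum = x.2) ∧ F = E.subst ρ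

theorem isCuntz_singleton_one (s : ℝ) : IsCuntz ({(1, s)} : WeightedFamily B) := by
  constructor <;> simp

theorem IsCuntz.sum_coe_mul_star (hE : E.IsCuntz) : ∑ x : E, x.1.1 * star x.1.1 = 1 :=
  (Finset.sum_coe_sort E fun x => x.1 * star x.1).trans hE.sum_mul_star

theorem IsCuntz.star_mul_eq_ite (hE : E.IsCuntz) {x y : B × ℝ} (hx : x ∈ E) (hy : y ∈ E)
    [Decidable (x = y)] : star x.1 * y.1 = if x = y then 1 else 0 := by
  split_ifs with h
  · rw [← h, hE.star_mul_self x hx]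
  · exact hE.star_mul_of_ne x hx y hy h

theorem IsCuntz.eq_of_forall_mul_eq (hE : E.IsCuntz) {b c : B}
    (h : ∀ x ∈ E, b * x.1 = c * x.1) : b = c := by
  rw [← mul_one b, ← mul_one c, ← hE.sum_mul_star, Finset.mul_sum, Finset.mul_sum]
  exact Finset.sum_congr rfl fun x hx => by rw [← mul_assoc, h x hx, mul_assoc]

theorem star_mul_mul_mul_of_star_mul_self {x y z : B} (hx : star x * x = 1) :
    star (x * y) * (x * z) = star y * z := by
  rw [star_mul, mul_assoc, ← mul_assoc (star x), hx, one_mul]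

theorem star_mul_mul_mul_of_star_mul {x x' y y' : B} (h : star x * x' = 0) :
    star (x * y) * (x' * y') = 0 := by
  rw [star_mul, mul_assoc, ← mul_assoc (star x), h, zero_mul, mul_zero]

section Nontrivial

variable [Nontrivial B]

theorem IsCuntz.nonempty (hE : E.IsCuntz) : E.Nonempty := by
  rw [Finset.nonempty_iff_ne_empty]
  rintro rfl
  exact zero_ne_one (α := B) (by simpa using hE.sum_mul_star)

theorem IsCuntz.subst_inj (hE : E.IsCuntz) (hρ : ∀ x ∈ E, (ρ x.2).IsCuntz) {x x' y y' : B × ℝ}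
    (hx : x ∈ E) (hx' : x' ∈ E) (hy : y ∈ ρ x.2) (hy' : y' ∈ ρ x'.2)
    (h : x.1 * y.1 = x'.1 * y'.1) : x = x' ∧ y = y' := by
  have hself : star (x.1 * y.1) * (x'.1 * y'.1) = 1 := by
    rw [← h, star_mul_mul_mul_of_star_mul_self (hE.star_mul_self x hx),
      (hρ x hx).star_mul_self y hy]
  have hxx' : x = x' := by
    by_contra hne
    rw [star_mul_mul_mul_of_star_mul (hE.star_mul_of_ne x hx x' hx' hne)] at hself
    exact zero_ne_one hself
  subst hxx'
  refine ⟨rfl, ?_⟩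
  by_contra hne
  rw [star_mul_mul_mul_of_star_mul_self (hE.star_mul_self x hx),
    (hρ x hx).star_mul_of_ne y hy y' hy' hne] at hself
  exact zero_ne_one hself

theorem IsCuntz.sum_subst (hE : E.IsCuntz) (hρ : ∀ x ∈ E, (ρ x.2).IsCuntz) {M : Type*}
    [AddCommMonoid M] (f : B × ℝ → M) :
    ∑ z ∈ E.subst ρ, f z = ∑ x ∈ E, ∑ y ∈ ρ x.2, f (x.1 * y.1, y.2) := by
  classical
  rw [subst, Finset.sum_biUnion]
  · refine Finset.sum_congr rfl fun x hx => ?_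
    rw [translate, Finset.sum_image]
    intro y hy y' hy' h
    exact (hE.subst_inj hρ hx hx hy hy' (Prod.ext_iff.1 h).1).2
  · intro x hx x' hx' hne
    refine Finset.disjoint_left.2 fun z hz hz' => hne ?_
    obtain ⟨y, hy, rfl⟩ := mem_translate.1 hz
    obtain ⟨y', hy', h⟩ := mem_translate.1 hz'
    exact (hE.subst_inj hρ hx hx' hy hy' (Prod.ext_iff.1 h).1.symm).1

theorem IsCuntz.subst (hE : E.IsCuntz) (hρ : ∀ x ∈ E, (ρ x.2).IsCuntz) : (E.subst ρ).IsCuntz where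
  star_mul_of_ne := by
    intro z hz z' hz' hne
    obtain ⟨x, hx, y, hy, rfl⟩ := mem_subst.1 hz
    obtain ⟨x', hx', y', hy', rfl⟩ := mem_subst.1 hz'
    by_cases hxx' : x = x'
    · subst hxx'
      rw [star_mul_mul_mul_of_star_mul_self (hE.star_mul_self x hx)]
      exact (hρ x hx).star_mul_of_ne y hy y' hy' fun h => hne (by rw [h])
    · exact star_mul_mul_mul_of_star_mul (hE.star_mul_of_ne x hx x' hx' hxx')
  star_mul_self := by
    intro z hz
    obtain ⟨x, hx, y, hy, rfl⟩ := mem_subst.1 hz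
    rw [star_mul_mul_mul_of_star_mul_self (hE.star_mul_self x hx), (hρ x hx).star_mul_self y hy]
  sum_mul_star := by
    rw [hE.sum_subst hρ, ← hE.sum_mul_star]
    refine Finset.sum_congr rfl fun x hx => ?_
    calc ∑ y ∈ ρ x.2, x.1 * y.1 * star (x.1 * y.1)
        = x.1 * (∑ y ∈ ρ x.2, y.1 * star y.1) * star x.1 := by
          simp only [star_mul, Finset.mul_sum, Finset.sum_mul, mul_assoc]
      _ = x.1 * star x.1 := by rw [(hρ x hx).sum_mul_star, mul_one]

theorem IsCuntz.weights_subst (hE : E.IsCuntz) (hρ : ∀ x ∈ E, (ρ x.2).IsCuntz) :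
    (E.subst ρ).weights = ∑ x ∈ E, (ρ x.2).weights := by
  have key (G : WeightedFamily B) : G.weights = ∑ z ∈ G, {z.2} := by
    rw [← sum_map_weights G fun s => ({s} : Multiset ℝ), Multiset.sum_map_singleton]
  simp only [key, hE.sum_subst hρ]

theorem IsCuntz.sum_weights_subst (hE : E.IsCuntz)
    (hρ : ∀ x ∈ E, (ρ x.2).IsCuntz ∧ (ρ x.2).weights.sum = x.2) :
    (E.subst ρ).weights.sum = E.weights.sum := by
  simp only [sum_weights, hE.sum_subst fun x hx => (hρ x hx).1]
  exact Finset.sum_congr rfl fun x hx => (hρ x hx).2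

theorem Refines.isCuntz (h : E.Refines F) (hE : E.IsCuntz) : F.IsCuntz := by
  obtain ⟨ρ, hρ, rfl⟩ := h
  exact hE.subst fun x hx => (hρ x hx).1

theorem Refines.sum_weights (h : E.Refines F) (hE : E.IsCuntz) :
    F.weights.sum = E.weights.sum := by
  obtain ⟨ρ, hρ, rfl⟩ := h
  exact hE.sum_weights_subst hρ

theorem Refines.trans (hEF : E.Refines F) (hFH : F.Refines H) : E.Refines H := by
  obtain ⟨ρ, hρ, rfl⟩ := hEF
  obtain ⟨σ, hσ, rfl⟩ := hFH
  have hσρ : ∀ x ∈ E, ∀ y ∈ ρ x.2, (σ y.2).IsCuntz ∧ (σ y.2).weights.sum = y.2 :=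
    fun x hx y hy => hσ (x.1 * y.1, y.2) (mul_mem_subst hx hy)
  refine ⟨fun s => (ρ s).subst σ, fun x hx => ⟨?_, ?_⟩, subst_subst _ _ _⟩
  · exact (hρ x hx).1.subst fun y hy => (hσρ x hx y hy).1
  · rw [(hρ x hx).1.sum_weights_subst (hσρ x hx), (hρ x hx).2]

end Nontrivial

theorem Refines.refl (E : WeightedFamily B) : E.Refines E :=
  ⟨fun s => {(1, s)}, fun x _ => ⟨isCuntz_singleton_one _, by simp [weights]⟩,
    (subst_singleton_one E).symm⟩

/-! ### Existence and uniqueness of families with given weights -/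

variable (B) in
/-- `B` contains two isometries `s₁`, `s₂` with `s₁ s₁* + s₂ s₂* = 1`, that is, a unital copy of the
Cuntz algebra `𝒪₂`. -/
def HasCuntzPair : Prop :=
  ∃ s₁ s₂ : B, star s₁ * s₁ = 1 ∧ star s₂ * s₂ = 1 ∧ star s₁ * s₂ = 0 ∧
    s₁ * star s₁ + s₂ * star s₂ = 1

theorem HasCuntzPair.exists_isCuntz_weights_eq [Nontrivial B] (hB : HasCuntzPair B)
    {l : Multiset ℝ} (hl : l ≠ 0) : ∃ E : WeightedFamily B, E.IsCuntz ∧ E.weights = l := by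
  obtain ⟨s₁, s₂, h₁, h₂, h₁₂, hsum⟩ := hB
  have h₂₁ : star s₂ * s₁ = 0 := by simpa using congrArg star h₁₂
  classical
  have hpair : IsCuntz ({(s₁, 0), (s₂, 1)} : WeightedFamily B) := by
    constructor <;> simp [h₁, h₂, h₁₂, h₂₁, hsum]
  obtain ⟨r, hr⟩ := Multiset.exists_mem_of_ne_zero hl
  obtain ⟨l, rfl⟩ := Multiset.exists_cons_of_mem hr
  clear hr hl
  induction l using Multiset.induction generalizing r with
  | empty => exact ⟨{(1, r)}, isCuntz_singleton_one r, rfl⟩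
  | cons a l ih =>
    obtain ⟨E, hE, hEl⟩ := ih a
    let ρ : ℝ → WeightedFamily B := fun s => if s = 0 then {(1, r)} else E
    have hρ (s : ℝ) : (ρ s).IsCuntz := by
      unfold ρ
      split_ifs
      exacts [isCuntz_singleton_one r, hE]
    refine ⟨_, hpair.subst fun x _ => hρ x.2, ?_⟩
    rw [hpair.weights_subst fun x _ => hρ x.2, Finset.sum_pair (by simp)]
    simp only [ρ, if_true, if_neg one_ne_zero, hEl]
    rfl

theorem exists_unitary_translate_eq (hE : E.IsCuntz) (hF : F.IsCuntz)
    (h : E.weights = F.weights) : ∃ U ∈ unitary B, E.translate U = F := by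
  obtain ⟨e, he⟩ := exists_equiv_of_weights_eq h
  classical
  let U : B := ∑ x : E, (e x).1.1 * star x.1.1
  have hU (x : E) : U * x.1.1 = (e x).1.1 := by
    simp [U, Finset.sum_mul, mul_assoc, hE.star_mul_eq_ite (Subtype.prop _) x.2]
  have hU' (x : E) : star U * (e x).1.1 = x.1.1 := by
    simp [U, Finset.sum_mul, mul_assoc, hF.star_mul_eq_ite (Subtype.prop _) (e x).2]
  refine ⟨U, Unitary.mem_iff.2 ⟨hE.eq_of_forall_mul_eq fun x hx => ?_,
    hF.eq_of_forall_mul_eq fun y hy => ?_⟩, ?_⟩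
  · rw [mul_assoc, hU ⟨x, hx⟩, hU', one_mul]
  · obtain ⟨x, hx⟩ := e.surjective ⟨y, hy⟩
    obtain rfl : (e x).1 = y := congrArg Subtype.val hx
    rw [mul_assoc, hU', hU, one_mul]
  · ext z
    rw [mem_translate]
    constructor
    · rintro ⟨x, hx, rfl⟩
      rw [hU ⟨x, hx⟩, ← he ⟨x, hx⟩]
      exact (e ⟨x, hx⟩).2
    · intro hz
      obtain ⟨x, hx⟩ := e.surjective ⟨z, hz⟩
      exact ⟨x.1, x.2, by rw [hU, ← he, hx]⟩

end StarRing

end WeightedFamily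

/-! ### Linear independence of weights over `ℤ` -/

section LinearIndependence

variable {M : Type*} [AddCommGroup M] {S : Set M}

theorem multiset_eq_of_sum_eq (hS : LinearIndepOn ℤ id S) {P Q : Multiset M}
    (hP : ∀ x ∈ P, x ∈ S) (hQ : ∀ x ∈ Q, x ∈ S) (h : P.sum = Q.sum) : P = Q := by
  classical
  let T : Finset M := P.toFinset ∪ Q.toFinset
  have hT : LinearIndepOn ℤ id (T : Set M) := hS.mono fun x hx => by
    rcases Finset.mem_union.1 (Finset.mem_coe.1 hx) with hx | hx
    · exact hP x (Multiset.mem_toFinset.1 hx)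
    · exact hQ x (Multiset.mem_toFinset.1 hx)
  have hsum : ∑ x ∈ T, ((P.count x : ℤ) - (Q.count x : ℤ)) • id x = 0 := by
    simp only [id, sub_smul, natCast_zsmul, Finset.sum_sub_distrib]
    rw [← Finset.sum_multiset_count_of_subset _ _ Finset.subset_union_left,
      ← Finset.sum_multiset_count_of_subset _ _ Finset.subset_union_right, h, sub_self]
  ext x
  by_cases hx : x ∈ T
  · have := linearIndepOn_finset_iff.1 hT _ hsum x hx
    lia
  · simp only [T, Finset.mem_union, Multiset.mem_toFinset, not_or] at hx
    rw [Multiset.count_eq_zero.2 hx.1, Multiset.count_eq_zero.2 hx.2]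

theorem le_of_sum_sub_sum_mem_closure (hS : LinearIndepOn ℤ id S) {P Q : Multiset M}
    (hP : ∀ x ∈ P, x ∈ S) (hQ : ∀ x ∈ Q, x ∈ S)
    (h : Q.sum - P.sum ∈ AddSubmonoid.closure S) : P ≤ Q := by
  obtain ⟨D, hD, hsum⟩ := AddSubmonoid.exists_multiset_of_mem_closure h
  refine Multiset.le_iff_exists_add.2 ⟨D, multiset_eq_of_sum_eq hS hQ (fun y hy => ?_) ?_⟩
  · exact (Multiset.mem_add.1 hy).elim (hP y) (hD y)
  · rw [Multiset.sum_add, hsum, add_sub_cancel]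

end LinearIndependence

section Euclid

theorem sum_update_add_smul_update_sub {M ι : Type*} [AddCommGroup M] [Fintype ι]
    [DecidableEq ι] (x : ι → M) (c : ι → ℤ) {i j : ι} (hij : i ≠ j) :
    ∑ l, Function.update c i (c i + c j) l • Function.update x j (x j - x i) l =
      ∑ l, c l • x l := by
  have hsplit (f : ι → M) :
      ∑ l, f l = f i + (f j + ∑ l ∈ (Finset.univ.erase i).erase j, f l) := by
    rw [Finset.add_sum_erase _ _ (by simp [hij.symm]), Finset.add_sum_erase _ _ (by simp)]
  have hrest : ∑ l ∈ (Finset.univ.erase i).erase j,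
        Function.update c i (c i + c j) l • Function.update x j (x j - x i) l =
      ∑ l ∈ (Finset.univ.erase i).erase j, c l • x l := by
    refine Finset.sum_congr rfl fun l hl => ?_
    simp only [Finset.mem_erase] at hl
    rw [Function.update_of_ne hl.1, Function.update_of_ne hl.2.1]
  rw [hsplit, hsplit fun l => c l • x l, hrest, Function.update_self, Function.update_self,
    Function.update_of_ne hij, Function.update_of_ne hij.symm, add_smul, smul_sub]
  abel

variable {M : Type*} [AddCommGroup M] [LinearOrder M]

/-- The set `Y` consists of positive elements of the group generated by `X`, and every element of
`X` is a sum of elements of `Y`. -/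
structure IsPositiveRefinement (X Y : Set M) : Prop where
  pos : ∀ y ∈ Y, 0 < y
  subset_closure : Y ⊆ AddSubgroup.closure X
  subset_addSubmonoidClosure : X ⊆ AddSubmonoid.closure Y

theorem IsPositiveRefinement.refl {X : Set M} (hX : ∀ x ∈ X, 0 < x) : IsPositiveRefinement X X :=
  ⟨hX, AddSubgroup.subset_closure, AddSubmonoid.subset_closure⟩

theorem IsPositiveRefinement.trans {X Y Z : Set M} (hXY : IsPositiveRefinement X Y)
    (hYZ : IsPositiveRefinement Y Z) : IsPositiveRefinement X Z where
  pos := hYZ.pos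
  subset_closure :=
    hYZ.subset_closure.trans ((AddSubgroup.closure_le _).2 hXY.subset_closure)
  subset_addSubmonoidClosure :=
    hXY.subset_addSubmonoidClosure.trans
      (AddSubmonoid.closure_le.2 hYZ.subset_addSubmonoidClosure)

theorem isPositiveRefinement_range_update [IsOrderedAddMonoid M] {ι : Type*} [DecidableEq ι]
    {x : ι → M} (hx : ∀ l, 0 < x l) {i j : ι}
    (hij : x i < x j) :
    IsPositiveRefinement (Set.range x) (Set.range (Function.update x j (x j - x i))) where
  pos := by
    rintro _ ⟨l, rfl⟩
    by_cases hl : l = j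
    · simpa [hl] using hij
    · simpa [hl] using hx l
  subset_closure := by
    have hmem (l : ι) : x l ∈ AddSubgroup.closure (Set.range x) :=
      AddSubgroup.subset_closure ⟨l, rfl⟩
    rintro _ ⟨l, rfl⟩
    by_cases hl : l = j
    · simpa [hl] using sub_mem (hmem j) (hmem i)
    · simpa [hl] using hmem l
  subset_addSubmonoidClosure := by
    have hmem (l : ι) : Function.update x j (x j - x i) l ∈
        AddSubmonoid.closure (Set.range (Function.update x j (x j - x i))) :=
      AddSubmonoid.subset_closure ⟨l, rfl⟩
    have hne : i ≠ j := fun h => hij.ne (congrArg x h)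
    rintro _ ⟨l, rfl⟩
    by_cases hl : l = j
    · simpa [hl, hne] using add_mem (hmem j) (hmem i)
    · simpa [hl] using hmem l

variable {ι : Type*} [Fintype ι]

/-- The family `x` has a positive refinement with fewer members than `x`. -/
def IsReducible (x : ι → M) : Prop :=
  ∃ Y : Finset M, Y.card < Fintype.card ι ∧ IsPositiveRefinement (Set.range x) Y

/-- The family `x` is positive and satisfies the nontrivial integer relation `∑ c l • x l = 0`. -/
structure IsPositiveRelation (x : ι → M) (c : ι → ℤ) : Prop where
  pos : ∀ l, 0 < x l
  ne_zero : c ≠ 0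
  sum_smul : ∑ l, c l • x l = 0

theorem IsPositiveRelation.neg {x : ι → M} {c : ι → ℤ} (h : IsPositiveRelation x c) :
    IsPositiveRelation x (-c) where
  pos := h.pos
  ne_zero := neg_ne_zero.2 h.ne_zero
  sum_smul := by simp [h.sum_smul]

theorem isReducible_of_apply_eq {x : ι → M} (hx : ∀ l, 0 < x l) {i j : ι} (hij : i ≠ j)
    (h : x i = x j) : IsReducible x := by
  classical
  have hrange : Set.range x = ((Finset.univ.erase j).image x : Finset M) := by
    ext y
    simp only [Set.mem_range, Finset.coe_image, Finset.coe_erase, Finset.coe_univ, Set.mem_image]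
    constructor
    · rintro ⟨l, rfl⟩
      by_cases hl : l = j
      · exact ⟨i, by simp [hij], by rw [hl, h]⟩
      · exact ⟨l, by simp [hl], rfl⟩
    · rintro ⟨l, -, rfl⟩
      exact ⟨l, rfl⟩
  refine ⟨(Finset.univ.erase j).image x, ?_, hrange ▸ .refl ?_⟩
  · exact Finset.card_image_le.trans_lt (Finset.card_lt_card (Finset.erase_ssubset (by simp)))
  · rintro _ ⟨l, rfl⟩
    exact hx l

section Update

variable [DecidableEq ι]

theorem filter_update_eq_erase {α : Type*} {p : α → Prop} [DecidablePred p] (c : ι → α) (k : ι)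
    {d : α} (hd : ¬ p d) :
    ({l | p (Function.update c k d l)} : Finset ι) = ({l | p (c l)} : Finset ι).erase k := by
  ext l
  by_cases hl : l = k
  · simp [hl, hd]
  · simp [hl]

variable [IsOrderedAddMonoid M] {x : ι → M} {c : ι → ℤ}

theorem IsReducible.of_update {i j : ι} (hx : ∀ l, 0 < x l) (hij : x i < x j)
    (h : IsReducible (Function.update x j (x j - x i))) : IsReducible x := by
  obtain ⟨Y, hcard, hY⟩ := h
  exact ⟨Y, hcard, (isPositiveRefinement_range_update hx hij).trans hY⟩

theorem IsPositiveRelation.update (h : IsPositiveRelation x c) {i j : ι} (hij : x i < x j)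
    (hj : c j ≠ 0) :
    IsPositiveRelation (Function.update x j (x j - x i)) (Function.update c i (c i + c j)) where
  pos l := (isPositiveRefinement_range_update h.pos hij).pos _ ⟨l, rfl⟩
  ne_zero h0 := hj <| by
    have hne : j ≠ i := fun hji => hij.ne (congrArg x hji.symm)
    simpa [hne] using congrFun h0 j
  sum_smul := by
    rw [sum_update_add_smul_update_sub x c fun hji => hij.ne (congrArg x hji), h.sum_smul]

end Update

variable [IsOrderedAddMonoid M] {x : ι → M} {c : ι → ℤ}

theorem IsPositiveRelation.exists_neg (h : IsPositiveRelation x c) {i : ι} (hi : 0 < c i) :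
    ∃ j, c j < 0 := by
  by_contra! hc
  have hzero := (Finset.sum_eq_zero_iff_of_nonneg fun l _ =>
    zsmul_nonneg (h.pos l).le (hc l)).1 h.sum_smul i (Finset.mem_univ i)
  exact (zsmul_pos (h.pos i) hi).ne' hzero

-- Let `c i = B` be maximal and `c j < 0`. Replacing `x i` by `x i - x j` keeps `c i` and makes
-- the other coefficient nonnegative; replacing `x j` by `x j - x i` lowers `c i`.
theorem IsPositiveRelation.isReducible_of_apply_eq_bound {B : ℤ} {n : ℕ}
    (ih : ∀ (x : ι → M) (c : ι → ℤ), IsPositiveRelation x c → (∀ l, |c l| ≤ B) →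
      Finset.card {l | |c l| = B} < n → IsReducible x)
    (h : IsPositiveRelation x c) (hB : 0 < B) (hc : ∀ l, |c l| ≤ B) {i : ι} (hi : c i = B)
    (hn : Finset.card {l | |c l| = B} ≤ n) : IsReducible x := by
  classical
  induction hk : Finset.card {l | c l < 0} using Nat.strong_induction_on generalizing x c with
  | _ k ihk =>
  obtain ⟨j, hj⟩ := h.exists_neg (hi ▸ hB)
  have hne : i ≠ j := fun hij => by lia
  have hd : 0 ≤ c i + c j ∧ c i + c j < B := by
    have := abs_le.1 (hc j)
    lia
  have hdB : |c i + c j| < B := (abs_of_nonneg hd.1).trans_lt hd.2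
  have hbound (l l' : ι) : |Function.update c l (c i + c j) l'| ≤ B := by
    rw [Function.update_apply]
    split_ifs
    exacts [hdB.le, hc l']
  rcases lt_trichotomy (x i) (x j) with hlt | heq | hgt
  · refine .of_update h.pos hlt (ih _ _ (h.update hlt hj.ne) (hbound i) ?_)
    rw [filter_update_eq_erase (p := fun d => |d| = B) c i hdB.ne]
    refine (Finset.card_erase_lt_of_mem ?_).trans_le hn
    simp [hi, abs_of_pos hB]
  · exact isReducible_of_apply_eq h.pos hne heq
  · refine .of_update h.pos hgt (ihk _ ?_ (h.update hgt (hi ▸ hB.ne')) ?_ ?_ ?_ rfl)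
    · rw [← hk, add_comm, filter_update_eq_erase (p := fun d => d < 0) c j hd.1.not_gt]
      exact Finset.card_erase_lt_of_mem (by simp [hj])
    · simpa only [add_comm (c j)] using hbound j
    · rwa [Function.update_of_ne hne]
    · rw [add_comm, filter_update_eq_erase (p := fun d => |d| = B) c j hdB.ne]
      exact (Finset.card_le_card (Finset.erase_subset _ _)).trans hn

theorem IsPositiveRelation.isReducible (h : IsPositiveRelation x c) : IsReducible x := by
  obtain ⟨B, hB⟩ : ∃ B : ℕ, ∀ l, |c l| ≤ B :=
    ⟨∑ l, (c l).natAbs, fun l => by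
      rw [Int.abs_eq_natAbs]
      exact_mod_cast Finset.single_le_sum (f := fun l => (c l).natAbs)
        (fun _ _ => Nat.zero_le _) (Finset.mem_univ l)⟩
  induction B generalizing x c with
  | zero => exact absurd (funext fun l => by simpa using hB l) h.ne_zero
  | succ B ihB =>
    induction hn : Finset.card {l | |c l| = (B + 1 : ℕ)} using Nat.strong_induction_on
      generalizing x c with
    | _ n ihn =>
    have ih (x : ι → M) (c : ι → ℤ) (h : IsPositiveRelation x c)
        (hB : ∀ l, |c l| ≤ (B + 1 : ℕ)) (hlt : Finset.card {l | |c l| = (B + 1 : ℕ)} < n) :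
        IsReducible x := ihn _ hlt h hB rfl
    by_cases hmax : ∃ i, |c i| = (B + 1 : ℕ)
    · obtain ⟨i, hi⟩ := hmax
      rcases (abs_eq (by positivity)).1 hi with hi | hi
      · exact h.isReducible_of_apply_eq_bound ih (by positivity) hB hi hn.le
      · refine h.neg.isReducible_of_apply_eq_bound ih (by positivity) ?_ (i := i) ?_ ?_
        · simpa using hB
        · rw [Pi.neg_apply, hi, neg_neg]
        · simpa using hn.le
    · push Not at hmax
      exact ihB h fun l => by
        have := (hB l).lt_of_ne (hmax l)
        lia

theorem exists_linearIndepOn_isPositiveRefinement (X : Finset M) (hX : ∀ x ∈ X, 0 < x) :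
    ∃ S : Finset M, LinearIndepOn ℤ id (S : Set M) ∧ IsPositiveRefinement (X : Set M) S := by
  induction h : X.card using Nat.strong_induction_on generalizing X with
  | _ n ih =>
  by_cases hli : LinearIndepOn ℤ id (X : Set M)
  · exact ⟨X, hli, .refl hX⟩
  · obtain ⟨c, hc, hne⟩ : ∃ c : X → ℤ, ∑ x : X, c x • (x : M) = 0 ∧ c ≠ 0 := by
      simpa [LinearIndepOn, Fintype.linearIndependent_iff, funext_iff] using hli
    obtain ⟨Y, hcard, hXY⟩ := IsPositiveRelation.isReducible ⟨fun x : X => hX x x.2, hne, hc⟩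
    rw [Subtype.range_coe] at hXY
    obtain ⟨S, hS, hYS⟩ := ih Y.card (by simpa [h] using hcard) Y hXY.pos rfl
    exact ⟨S, hS, hXY.trans hYS⟩

end Euclid

/-! ### Simplicial chains in a totally ordered group -/

section SimplicialChain

variable {M : Type*} [AddCommGroup M] [LinearOrder M] {G : AddSubgroup M} {S S' : ℕ → Finset M}

/-- The cones `closure (S n)` are an increasing sequence of simplicial (free) cones exhausting the
positive cone of `G`. This presents `G` as a limit of the groups `ℤ ^ (S n)` with their
coordinatewise order. -/
structure IsSimplicialChain (G : AddSubgroup M) (S : ℕ → Finset M) : Prop where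
  pos : ∀ n, ∀ s ∈ S n, 0 < s
  mem : ∀ n, ∀ s ∈ S n, s ∈ G
  linearIndepOn : ∀ n, LinearIndepOn ℤ id (S n : Set M)
  subset_closure_succ : ∀ n, (S n : Set M) ⊆ AddSubmonoid.closure (S (n + 1) : Set M)
  exists_mem_closure : ∀ g ∈ G, 0 < g → ∃ n, g ∈ AddSubmonoid.closure (S n : Set M)

namespace IsSimplicialChain

theorem monotone_closure (hS : IsSimplicialChain G S) :
    Monotone fun n => AddSubmonoid.closure (S n : Set M) :=
  monotone_nat_of_le_succ fun n => AddSubmonoid.closure_le.2 (hS.subset_closure_succ n)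

theorem exists_forall_mem_closure (hS : IsSimplicialChain G S) (F : Finset M)
    (hpos : ∀ x ∈ F, 0 < x) (hmem : ∀ x ∈ F, x ∈ G) :
    ∃ n, ∀ m ≥ n, (F : Set M) ⊆ AddSubmonoid.closure (S m : Set M) := by
  choose! f hf using hS.exists_mem_closure
  exact ⟨F.sup f, fun m hm x hx => hS.monotone_closure ((Finset.le_sup hx).trans hm)
    (hf x (hmem x hx) (hpos x hx))⟩

theorem comp (hS : IsSimplicialChain G S) {f : ℕ → ℕ} (hf : StrictMono f) :
    IsSimplicialChain G fun n => S (f n) where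
  pos n := hS.pos _
  mem n := hS.mem _
  linearIndepOn n := hS.linearIndepOn _
  subset_closure_succ n := AddSubmonoid.subset_closure.trans
    (hS.monotone_closure (hf.monotone n.le_succ))
  exists_mem_closure g hg hpos := by
    obtain ⟨n, hn⟩ := hS.exists_mem_closure g hg hpos
    exact ⟨n, hS.monotone_closure hf.le_apply hn⟩

theorem exists_merge (hS : IsSimplicialChain G S) (hS' : IsSimplicialChain G S') :
    ∃ (Z : ℕ → Finset M) (f f' : ℕ → ℕ), IsSimplicialChain G Z ∧ StrictMono f ∧ StrictMono f' ∧
      (∀ n, Z (2 * n) = S (f n)) ∧ ∀ n, Z (2 * n + 1) = S' (f' n) := by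
  choose p hp using fun n => hS'.exists_forall_mem_closure (S n) (hS.pos n) (hS.mem n)
  choose q hq using fun n => hS.exists_forall_mem_closure (S' n) (hS'.pos n) (hS'.mem n)
  let f : ℕ → ℕ := Nat.rec 0 fun _ k => q (p k + k) + (p k + k) + 1
  let f' : ℕ → ℕ := fun n => p (f n) + f n
  have hfsucc (n : ℕ) : f (n + 1) = q (f' n) + f' n + 1 := rfl
  have hf : StrictMono f := strictMono_nat_of_lt_succ fun n => by
    rw [hfsucc]
    lia
  have hf' : StrictMono f' := strictMono_nat_of_lt_succ fun n => by
    simp only [f', hfsucc]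
    lia
  let Z : ℕ → Finset M := fun n => if Even n then S (f (n / 2)) else S' (f' (n / 2))
  have hZ₀ (n : ℕ) : Z (2 * n) = S (f n) := by simp [Z]
  have hZ₁ (n : ℕ) : Z (2 * n + 1) = S' (f' n) := by
    simp [Z, show (2 * n + 1) / 2 = n by lia]
  have hparity {P : ℕ → Prop} (h₀ : ∀ n, P (2 * n)) (h₁ : ∀ n, P (2 * n + 1)) (n : ℕ) : P n := by
    obtain ⟨k, rfl | rfl⟩ := n.even_or_odd'
    exacts [h₀ k, h₁ k]
  refine ⟨Z, f, f', ⟨hparity ?_ ?_, hparity ?_ ?_, hparity ?_ ?_, hparity ?_ ?_, ?_⟩,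
    hf, hf', hZ₀, hZ₁⟩
  · exact fun n => hZ₀ n ▸ hS.pos _
  · exact fun n => hZ₁ n ▸ hS'.pos _
  · exact fun n => hZ₀ n ▸ hS.mem _
  · exact fun n => hZ₁ n ▸ hS'.mem _
  · exact fun n => hZ₀ n ▸ hS.linearIndepOn _
  · exact fun n => hZ₁ n ▸ hS'.linearIndepOn _
  · intro n
    rw [hZ₀, hZ₁]
    exact hp _ _ (Nat.le_add_right _ _)
  · intro n
    rw [hZ₁, show 2 * n + 1 + 1 = 2 * (n + 1) by ring, hZ₀, hfsucc]
    exact hq _ _ (by lia)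
  · intro g hg hpos
    obtain ⟨n, hn⟩ := hS.exists_mem_closure g hg hpos
    exact ⟨2 * n, hZ₀ n ▸ hS.monotone_closure hf.le_apply hn⟩

end IsSimplicialChain

theorem exists_isSimplicialChain [IsOrderedAddMonoid M] (G : AddSubgroup M) [Countable G] :
    ∃ S, IsSimplicialChain G S := by
  classical
  obtain ⟨g, hg⟩ := exists_surjective_nat G
  let P : Type _ := {X : Finset M // (∀ x ∈ X, 0 < x) ∧ ∀ x ∈ X, x ∈ G}
  have hstep (X : P) (n : ℕ) : ∃ Y : P, LinearIndepOn ℤ id (Y.1 : Set M) ∧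
      (X.1 : Set M) ⊆ AddSubmonoid.closure (Y.1 : Set M) ∧
      (0 < (g n : M) → (g n : M) ∈ AddSubmonoid.closure (Y.1 : Set M)) := by
    let X' : Finset M := X.1 ∪ ({(g n : M)} : Finset M).filter (0 < ·)
    have hX' : (∀ x ∈ X', 0 < x) ∧ ∀ x ∈ X', x ∈ G := by
      constructor <;> intro x hx <;>
        simp only [X', Finset.mem_union, Finset.mem_filter, Finset.mem_singleton] at hx
      · exact hx.elim (X.2.1 x) And.right
      · exact hx.elim (X.2.2 x) fun hx => hx.1 ▸ (g n).2
    obtain ⟨Y, hli, hY⟩ := exists_linearIndepOn_isPositiveRefinement X' hX'.1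
    refine ⟨⟨Y, hY.pos, fun y hy => ?_⟩, hli, fun x hx => ?_, fun hpos => ?_⟩
    · exact (AddSubgroup.closure_le G).2 hX'.2 (hY.subset_closure hy)
    · exact hY.subset_addSubmonoidClosure (Finset.mem_union_left _ hx)
    · exact hY.subset_addSubmonoidClosure (by simp [X', hpos])
  choose next hli hsub hmem using hstep
  let T : ℕ → P := Nat.rec (next ⟨∅, by simp⟩ 0) fun n X => next X (n + 1)
  refine ⟨fun n => (T n).1, fun n => (T n).2.1, fun n => (T n).2.2, fun n => ?_,
    fun n => hsub _ _, fun x hx hpos => ?_⟩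
  · cases n <;> exact hli _ _
  · obtain ⟨n, hn⟩ := hg ⟨x, hx⟩
    obtain rfl : (g n : M) = x := congrArg Subtype.val hn
    exact ⟨n, by cases n <;> exact hmem _ _ hpos⟩

/-- The positive inner multipliers of `G`: the group of all `t > 0` with `t G = G`. -/
def positiveInnerMultipliers (G : AddSubgroup ℝ) : Set ℝ :=
  {t | 0 < t ∧ ∀ g, t * g ∈ G ↔ g ∈ G}

theorem inv_mem_positiveInnerMultipliers {G : AddSubgroup ℝ} {t : ℝ}
    (ht : t ∈ positiveInnerMultipliers G) : t⁻¹ ∈ positiveInnerMultipliers G :=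
  ⟨inv_pos.2 ht.1, fun g => by rw [← ht.2, mul_inv_cancel_left₀ ht.1.ne']⟩

theorem IsSimplicialChain.image_mul {G : AddSubgroup ℝ} {S : ℕ → Finset ℝ}
    (hS : IsSimplicialChain G S) {t : ℝ} (ht : t ∈ positiveInnerMultipliers G) :
    IsSimplicialChain G fun n => (S n).image (t * ·) := by
  have hclosure (n : ℕ) {x : ℝ} (hx : x ∈ AddSubmonoid.closure (S n : Set ℝ)) :
      t * x ∈ AddSubmonoid.closure ((S n).image (t * ·) : Set ℝ) := by
    rw [Finset.coe_image, ← AddMonoidHom.coe_mulLeft, ← AddMonoidHom.map_mclosure]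
    exact ⟨x, hx, rfl⟩
  constructor
  · intro n
    simpa using fun s hs => mul_pos ht.1 (hS.pos n s hs)
  · intro n
    simpa using fun s hs => (ht.2 s).2 (hS.mem n s hs)
  · intro n
    rw [Finset.coe_image]
    exact ((hS.linearIndepOn n).map_injOn (AddMonoidHom.mulLeft t).toIntLinearMap
      (mul_right_injective₀ ht.1.ne').injOn).id_image
  · rintro n _ hx
    obtain ⟨s, hs, rfl⟩ := Finset.mem_image.1 (Finset.mem_coe.1 hx)
    exact hclosure _ (hS.subset_closure_succ n hs)
  · intro g hg hpos
    obtain ⟨n, hn⟩ := hS.exists_mem_closure (t⁻¹ * g)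
      (((inv_mem_positiveInnerMultipliers ht).2 g).2 hg) (mul_pos (inv_pos.2 ht.1) hpos)
    exact ⟨n, by simpa [mul_inv_cancel_left₀ ht.1.ne'] using hclosure n hn⟩

end SimplicialChain

/-! ### Towers of Cuntz families -/

namespace WeightedFamily

variable {B : Type*} [Ring B] [StarRing B]

theorem Refines.mem_closure {E F : WeightedFamily B} (h : E.Refines F) {s : ℝ}
    (hs : s ∈ E.weights) : s ∈ AddSubmonoid.closure (F.weights.toFinset : Set ℝ) := by
  obtain ⟨ρ, hρ, rfl⟩ := h
  obtain ⟨x, hx, rfl⟩ := mem_weights.1 hs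
  rw [← (hρ x hx).2]
  refine AddSubmonoid.multiset_sum_mem _ _ fun r hr => AddSubmonoid.subset_closure ?_
  exact Multiset.mem_toFinset.2 (mem_weights_subst.2 ⟨x.2, snd_mem_weights hx, hr⟩)

variable [Nontrivial B]

theorem HasCuntzPair.exists_isCuntz_sum_weights_eq (hB : HasCuntzPair B) {S : Set ℝ} {t : ℝ}
    (ht : t ∈ AddSubmonoid.closure S) (ht₀ : 0 < t) :
    ∃ E : WeightedFamily B, E.IsCuntz ∧ (∀ s ∈ E.weights, s ∈ S) ∧ E.weights.sum = t := by
  obtain ⟨l, hl, rfl⟩ := AddSubmonoid.exists_multiset_of_mem_closure ht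
  obtain ⟨E, hE, rfl⟩ := hB.exists_isCuntz_weights_eq (l := l) (by
    rintro rfl
    exact ht₀.ne' Multiset.sum_zero)
  exact ⟨E, hE, hl, rfl⟩

theorem HasCuntzPair.exists_refines (hB : HasCuntzPair B) {S : Set ℝ} {E : WeightedFamily B}
    (hE : ∀ s ∈ E.weights, 0 < s ∧ s ∈ AddSubmonoid.closure S) :
    ∃ F, E.Refines F ∧ ∀ s ∈ F.weights, s ∈ S := by
  choose! ρ hρ using fun s (hs : s ∈ E.weights) =>
    hB.exists_isCuntz_sum_weights_eq (hE s hs).2 (hE s hs).1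
  refine ⟨E.subst ρ, ⟨ρ, fun x hx => ?_, rfl⟩, fun s hs => ?_⟩
  · have := hρ x.2 (snd_mem_weights hx)
    exact ⟨this.1, this.2.2⟩
  · obtain ⟨r, hr, hs⟩ := mem_weights_subst.1 hs
    exact (hρ r hr).2.1 s hs

end WeightedFamily

section Tower

open WeightedFamily

variable {B : Type*} [Ring B] [StarRing B] {T : ℝ} {E : ℕ → WeightedFamily B}
  {G : AddSubgroup ℝ} {S : ℕ → Finset ℝ}

/-- A sequence of Cuntz families of total weight `T`, each refining the previous one. -/
structure IsCuntzTower (T : ℝ) (E : ℕ → WeightedFamily B) : Prop where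
  isCuntz : ∀ n, (E n).IsCuntz
  sum_weights : ∀ n, (E n).weights.sum = T
  refines_succ : ∀ n, (E n).Refines (E (n + 1))

/-- A tower of Cuntz families whose weights form a simplicial chain of `G`. -/
structure IsSimplicialTower (G : AddSubgroup ℝ) (T : ℝ) (E : ℕ → WeightedFamily B) : Prop
    extends IsCuntzTower T E where
  isSimplicialChain : IsSimplicialChain G fun n => (E n).weights.toFinset

namespace IsCuntzTower

variable [Nontrivial B]

theorem refines (hE : IsCuntzTower T E) {n m : ℕ} (hnm : n ≤ m) : (E n).Refines (E m) := by
  induction m, hnm using Nat.le_induction with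
  | base => exact .refl _
  | succ m _ ih => exact ih.trans (hE.refines_succ m)

theorem comp (hE : IsCuntzTower T E) {f : ℕ → ℕ} (hf : StrictMono f) :
    IsCuntzTower T fun n => E (f n) where
  isCuntz _ := hE.isCuntz _
  sum_weights _ := hE.sum_weights _
  refines_succ n := hE.refines (hf.monotone n.le_succ)

theorem total_pos (hE : IsCuntzTower T E) (h : ∀ s ∈ (E 0).weights, 0 < s) : 0 < T := by
  rw [← hE.sum_weights 0, WeightedFamily.sum_weights]
  exact Finset.sum_pos (fun x hx => h _ (snd_mem_weights hx)) (hE.isCuntz 0).nonempty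

theorem exists_subst (hE : IsCuntzTower T E) (N : ℕ) :
    ∃ ρ : ℕ → ℝ → WeightedFamily B, (∀ j, E (N + j) = (E N).subst (ρ j)) ∧
      ∀ C : WeightedFamily B, C.IsCuntz → (∀ s ∈ C.weights, s ∈ (E N).weights) →
        IsCuntzTower C.weights.sum fun j => C.subst (ρ j) := by
  choose σ hσ hEσ using fun j => hE.refines_succ (N + j)
  let ρ : ℕ → ℝ → WeightedFamily B :=
    Nat.rec (fun s => {(1, s)}) fun j ρ s => (ρ s).subst (σ j)
  have hρ_succ (C : WeightedFamily B) (j : ℕ) :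
      C.subst (ρ (j + 1)) = (C.subst (ρ j)).subst (σ j) := (subst_subst _ _ _).symm
  have hEρ (j : ℕ) : E (N + j) = (E N).subst (ρ j) := by
    induction j with
    | zero => exact (subst_singleton_one _).symm
    | succ j ih => rw [hρ_succ, ← ih, ← hEσ, add_assoc]
  refine ⟨ρ, hEρ, fun C hC hCE => ?_⟩
  have hrefines (j : ℕ) : (C.subst (ρ j)).Refines (C.subst (ρ (j + 1))) := by
    refine ⟨σ j, fun z hz => ?_, hρ_succ C j⟩
    obtain ⟨x, hx, y, hy, rfl⟩ := mem_subst.1 hz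
    obtain ⟨x', hx', hxx'⟩ := mem_weights.1 (hCE _ (snd_mem_weights hx))
    exact hσ j (x'.1 * y.1, y.2) (hEρ j ▸ mul_mem_subst hx' (hxx' ▸ hy))
  have hzero : C.subst (ρ 0) = C := subst_singleton_one C
  have htower (j : ℕ) : (C.subst (ρ j)).IsCuntz ∧ (C.subst (ρ j)).weights.sum = C.weights.sum := by
    induction j with
    | zero => exact hzero.symm ▸ ⟨hC, rfl⟩
    | succ j ih => exact ⟨(hrefines j).isCuntz ih.1, ((hrefines j).sum_weights ih.1).trans ih.2⟩
  exact ⟨fun j => (htower j).1, fun j => (htower j).2, hrefines⟩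

-- A multiple of `T` exceeds a given `g > 0`, and its expansion in the basis `S n` involves only the
-- weights of `E n`; so does the expansion of `g`.
theorem isSimplicialTower (hE : IsCuntzTower T E) (hS : IsSimplicialChain G S)
    (hES : ∀ n, ∀ s ∈ (E n).weights, s ∈ S n) : IsSimplicialTower G T E where
  toIsCuntzTower := hE
  isSimplicialChain.pos n s hs := hS.pos n s (hES n s (Multiset.mem_toFinset.1 hs))
  isSimplicialChain.mem n s hs := hS.mem n s (hES n s (Multiset.mem_toFinset.1 hs))
  isSimplicialChain.linearIndepOn n := (hS.linearIndepOn n).mono fun s hs =>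
    hES n s (Multiset.mem_toFinset.1 hs)
  isSimplicialChain.subset_closure_succ n _ hs :=
    (hE.refines_succ n).mem_closure (Multiset.mem_toFinset.1 hs)
  isSimplicialChain.exists_mem_closure g hg hg₀ := by
    have hT₀ : 0 < T := hE.total_pos fun s hs => hS.pos 0 s (hES 0 s hs)
    have hT : T ∈ G := hE.sum_weights 0 ▸
      AddSubmonoid.multiset_sum_mem G.toAddSubmonoid _ fun s hs => hS.mem 0 _ (hES 0 s hs)
    obtain ⟨m, hm⟩ := exists_lt_nsmul hT₀ g
    obtain ⟨n₁, hn₁⟩ := hS.exists_mem_closure g hg hg₀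
    obtain ⟨n₂, hn₂⟩ := hS.exists_mem_closure (m • T - g)
      (sub_mem (nsmul_mem hT m) hg) (sub_pos.2 hm)
    let n := max n₁ n₂
    obtain ⟨P, hP, rfl⟩ := AddSubmonoid.exists_multiset_of_mem_closure
      (hS.monotone_closure (le_max_left n₁ n₂) hn₁)
    have hle : P ≤ m • (E n).weights := by
      refine le_of_sum_sub_sum_mem_closure (hS.linearIndepOn n) hP
        (fun s hs => hES n s (Multiset.mem_of_mem_nsmul hs)) ?_
      rw [Multiset.sum_nsmul, hE.sum_weights]
      exact hS.monotone_closure (le_max_right n₁ n₂) hn₂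
    exact ⟨n, AddSubmonoid.multiset_sum_mem _ _ fun s hs => AddSubmonoid.subset_closure
      (Multiset.mem_toFinset.2 (Multiset.mem_of_mem_nsmul (Multiset.mem_of_le hle hs)))⟩

end IsCuntzTower

theorem IsSimplicialTower.comp [Nontrivial B] (hE : IsSimplicialTower G T E) {f : ℕ → ℕ}
    (hf : StrictMono f) : IsSimplicialTower G T fun n => E (f n) where
  toIsCuntzTower := hE.toIsCuntzTower.comp hf
  isSimplicialChain := hE.isSimplicialChain.comp hf

theorem exists_isCuntzTower [Nontrivial B] (hB : HasCuntzPair B) (hS : IsSimplicialChain G S)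
    (hT : T ∈ AddSubmonoid.closure (S 0 : Set ℝ)) (hT₀ : 0 < T) :
    ∃ E : ℕ → WeightedFamily B, IsCuntzTower T E ∧ ∀ n, ∀ s ∈ (E n).weights, s ∈ S n := by
  obtain ⟨E₀, hE₀, hE₀S, hE₀T⟩ := hB.exists_isCuntz_sum_weights_eq hT hT₀
  choose! next hrefines hnext using fun n (E : WeightedFamily B)
      (hE : ∀ s ∈ E.weights, s ∈ (S n : Set ℝ)) =>
    hB.exists_refines (S := S (n + 1)) fun s hs =>
      ⟨hS.pos n s (hE s hs), hS.subset_closure_succ n (hE s hs)⟩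
  let E : ℕ → WeightedFamily B := Nat.rec E₀ next
  have hES (n : ℕ) : ∀ s ∈ (E n).weights, s ∈ (S n : Set ℝ) := by
    induction n with
    | zero => exact hE₀S
    | succ n ih => exact hnext n _ ih
  have hEn (n : ℕ) : (E n).IsCuntz ∧ (E n).weights.sum = T := by
    induction n with
    | zero => exact ⟨hE₀, hE₀T⟩
    | succ n ih =>
      exact ⟨(hrefines n _ (hES n)).isCuntz ih.1,
        ((hrefines n _ (hES n)).sum_weights ih.1).trans ih.2⟩
  exact ⟨E, ⟨fun n => (hEn n).1, fun n => (hEn n).2, fun n => hrefines n _ (hES n)⟩, hES⟩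

end Tower

/-! ### Block algebras and their limits -/

namespace WeightedFamily

section Algebra

variable {B : Type*} [Ring B] [StarRing B] {E F : WeightedFamily B}

/-- The elements `v w*`, where `v` and `w` are members of `E` of the same weight. -/
def matrixUnits (E : WeightedFamily B) : Set B :=
  {b | ∃ x ∈ E, ∃ y ∈ E, x.2 = y.2 ∧ x.1 * star y.1 = b}

theorem finite_matrixUnits (E : WeightedFamily B) : E.matrixUnits.Finite := by
  refine (E.finite_toSet.image2 (fun x y : B × ℝ => x.1 * star y.1) E.finite_toSet).subset ?_
  rintro _ ⟨x, hx, y, hy, _, rfl⟩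
  exact ⟨x, hx, y, hy, rfl⟩

variable [Algebra ℂ B]

theorem IsCuntz.mul_mem_span_matrixUnits (hE : E.IsCuntz) {a b : B}
    (ha : a ∈ Submodule.span ℂ E.matrixUnits) (hb : b ∈ Submodule.span ℂ E.matrixUnits) :
    a * b ∈ Submodule.span ℂ E.matrixUnits := by
  classical
  refine Submodule.span_mul_span ℂ _ _ |>.le.trans (Submodule.span_le.2 ?_)
    (Submodule.mul_mem_mul ha hb)
  rintro _ ⟨_, ⟨x, hx, y, hy, hxy, rfl⟩, _, ⟨x', hx', y', hy', hxy', rfl⟩, rfl⟩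
  have hmul : x.1 * star y.1 * (x'.1 * star y'.1) = x.1 * (star y.1 * x'.1) * star y'.1 := by
    simp only [mul_assoc]
  simp only [hmul, hE.star_mul_eq_ite hy hx', SetLike.mem_coe]
  split_ifs with h
  · subst h
    exact Submodule.subset_span ⟨x, hx, y', hy', hxy.trans hxy', by rw [mul_one]⟩
  · simp

variable [StarModule ℂ B]

/-- The C*-algebra generated by the matrix units of `E`. For a Cuntz family it is finite-dimensional
with one matrix block for each weight of `E`, of size the multiplicity of that weight. -/
noncomputable def blockAlgebra (E : WeightedFamily B) : StarSubalgebra ℂ B :=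
  StarAlgebra.adjoin ℂ E.matrixUnits

theorem mul_star_mem_blockAlgebra {x y : B × ℝ} (hx : x ∈ E) (hy : y ∈ E) (h : x.2 = y.2) :
    x.1 * star y.1 ∈ E.blockAlgebra :=
  StarAlgebra.subset_adjoin ℂ _ ⟨x, hx, y, hy, h, rfl⟩

theorem blockAlgebra_le {A : StarSubalgebra ℂ B}
    (h : ∀ x ∈ E, ∀ y ∈ E, x.2 = y.2 → x.1 * star y.1 ∈ A) : E.blockAlgebra ≤ A := by
  refine StarAlgebra.adjoin_le ?_
  rintro _ ⟨x, hx, y, hy, hxy, rfl⟩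
  exact h x hx y hy hxy

theorem IsCuntz.span_matrixUnits (hE : E.IsCuntz) :
    Submodule.span ℂ E.matrixUnits = Subalgebra.toSubmodule E.blockAlgebra.toSubalgebra := by
  refine le_antisymm (Submodule.span_le.2 (StarAlgebra.subset_adjoin ℂ _)) ?_
  change ∀ b ∈ StarAlgebra.adjoin ℂ E.matrixUnits, b ∈ Submodule.span ℂ E.matrixUnits
  have hone : (1 : B) ∈ Submodule.span ℂ E.matrixUnits := hE.sum_mul_star ▸
    Submodule.sum_mem _ fun x hx => Submodule.subset_span ⟨x, hx, x, hx, rfl, rfl⟩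
  intro b hb
  induction hb using StarAlgebra.adjoin_induction with
  | mem b hb => exact Submodule.subset_span hb
  | algebraMap r => exact Algebra.algebraMap_eq_smul_one (A := B) r ▸ Submodule.smul_mem _ r hone
  | add a b _ _ ha hb => exact add_mem ha hb
  | mul a b _ _ ha hb => exact hE.mul_mem_span_matrixUnits ha hb
  | star b hmem hb =>
    clear hmem
    induction hb using Submodule.span_induction with
    | mem b hb =>
      obtain ⟨x, hx, y, hy, hxy, rfl⟩ := hb
      exact Submodule.subset_span ⟨y, hy, x, hx, hxy.symm, by rw [star_mul, star_star]⟩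
    | zero => simp
    | add a b _ _ ha hb => exact star_add a b ▸ add_mem ha hb
    | smul c b _ hb => exact star_smul c b ▸ Submodule.smul_mem _ _ hb

theorem IsCuntz.mem_blockAlgebra (hE : E.IsCuntz) {b : B} :
    b ∈ E.blockAlgebra ↔ b ∈ Submodule.span ℂ E.matrixUnits := by
  rw [hE.span_matrixUnits, Subalgebra.mem_toSubmodule, StarSubalgebra.mem_toSubalgebra]

theorem IsCuntz.finiteDimensional_blockAlgebra (hE : E.IsCuntz) :
    FiniteDimensional ℂ E.blockAlgebra :=
  have := FiniteDimensional.span_of_finite ℂ E.finite_matrixUnits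
  (LinearEquiv.ofEq _ _ hE.span_matrixUnits).finiteDimensional

theorem IsCuntz.exists_star_mul_mul_eq_smul_one (hE : E.IsCuntz) {x y : B × ℝ} (hx : x ∈ E)
    (hy : y ∈ E) {b : B} (hb : b ∈ E.blockAlgebra) :
    ∃ c : ℂ, star x.1 * b * y.1 = c • 1 ∧ (x.2 ≠ y.2 → c = 0) := by
  classical
  rw [hE.mem_blockAlgebra] at hb
  induction hb using Submodule.span_induction with
  | mem b hb =>
    obtain ⟨v, hv, w, hw, hvw, rfl⟩ := hb
    refine ⟨if x = v ∧ w = y then 1 else 0, ?_, fun hne => if_neg ?_⟩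
    · rw [← mul_assoc, mul_assoc, hE.star_mul_eq_ite hx hv, hE.star_mul_eq_ite hw hy]
      split_ifs <;> simp_all
    · rintro ⟨rfl, rfl⟩
      exact hne hvw
  | zero => exact ⟨0, by simp, fun _ => rfl⟩
  | add a b _ _ ha hb =>
    obtain ⟨c, hc, hc'⟩ := ha
    obtain ⟨d, hd, hd'⟩ := hb
    exact ⟨c + d, by rw [mul_add, add_mul, hc, hd, add_smul],
      fun h => by rw [hc' h, hd' h, add_zero]⟩
  | smul r b _ hb =>
    obtain ⟨c, hc, hc'⟩ := hb
    exact ⟨r * c, by rw [mul_smul_comm, smul_mul_assoc, hc, mul_smul],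
      fun h => by rw [hc' h, mul_zero]⟩

theorem Refines.blockAlgebra_le (h : E.Refines F) : E.blockAlgebra ≤ F.blockAlgebra := by
  obtain ⟨ρ, hρ, rfl⟩ := h
  refine WeightedFamily.blockAlgebra_le fun x hx y hy hxy => ?_
  have hsum : x.1 * star y.1 = ∑ z ∈ ρ x.2, x.1 * z.1 * star (y.1 * z.1) := by
    calc x.1 * star y.1 = x.1 * (∑ z ∈ ρ x.2, z.1 * star z.1) * star y.1 := by
          rw [(hρ x hx).1.sum_mul_star, mul_one]
      _ = ∑ z ∈ ρ x.2, x.1 * z.1 * star (y.1 * z.1) := by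
          simp only [star_mul, Finset.mul_sum, Finset.sum_mul, mul_assoc]
  rw [hsum]
  exact sum_mem fun z hz => mul_star_mem_blockAlgebra (x := (x.1 * z.1, z.2))
    (y := (y.1 * z.1, z.2)) (mul_mem_subst hx hz) (mul_mem_subst hy (hxy ▸ hz)) rfl

end Algebra

section CStarAlgebra

variable {B : Type*} [CStarAlgebra B]

theorem IsCuntz.isClosed_blockAlgebra {E : WeightedFamily B} (hE : E.IsCuntz) :
    IsClosed (E.blockAlgebra : Set B) :=
  have := hE.finiteDimensional_blockAlgebra
  Submodule.closed_of_finiteDimensional (Subalgebra.toSubmodule E.blockAlgebra.toSubalgebra)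

/-- The C*-algebra generated by the matrix units of all the families `E n`; it is AF when they form
a tower. -/
noncomputable def limitAlgebra (E : ℕ → WeightedFamily B) : StarSubalgebra ℂ B :=
  (⨆ n, (E n).blockAlgebra).topologicalClosure

variable (E : ℕ → WeightedFamily B)

theorem isClosed_limitAlgebra : IsClosed (limitAlgebra E : Set B) :=
  StarSubalgebra.isClosed_topologicalClosure _

noncomputable instance limitAlgebra.instCStarAlgebra : CStarAlgebra (limitAlgebra E) :=
  have : IsClosed (limitAlgebra E : Set B) := isClosed_limitAlgebra E
  inferInstance

theorem blockAlgebra_le_limitAlgebra (n : ℕ) : (E n).blockAlgebra ≤ limitAlgebra E :=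
  (le_iSup (fun n => (E n).blockAlgebra) n).trans (StarSubalgebra.le_topologicalClosure _)

end CStarAlgebra

end WeightedFamily

namespace IsCuntzTower

open WeightedFamily

variable {B : Type*} [CStarAlgebra B] [Nontrivial B] {T : ℝ} {E : ℕ → WeightedFamily B}

theorem monotone_blockAlgebra (hE : IsCuntzTower T E) : Monotone fun n => (E n).blockAlgebra :=
  fun _ _ hnm => (hE.refines hnm).blockAlgebra_le

theorem coe_limitAlgebra (hE : IsCuntzTower T E) :
    (limitAlgebra E : Set B) = closure (⋃ n, ((E n).blockAlgebra : Set B)) := by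
  rw [limitAlgebra, StarSubalgebra.topologicalClosure_coe,
    StarSubalgebra.coe_iSup_of_directed hE.monotone_blockAlgebra.directed_le]

theorem limitAlgebra_subset_of_isClosed (hE : IsCuntzTower T E) {s : Set B} (hs : IsClosed s)
    (h : ∀ n, ∀ b ∈ (E n).blockAlgebra, b ∈ s) : (limitAlgebra E : Set B) ⊆ s := by
  rw [hE.coe_limitAlgebra]
  exact closure_minimal (Set.iUnion_subset h) hs

theorem exists_mem_blockAlgebra_of_isOpen (hE : IsCuntzTower T E) {U : Set B} (hU : IsOpen U)
    {x : B} (hx : x ∈ limitAlgebra E) (hxU : x ∈ U) : ∃ n, ∃ d ∈ (E n).blockAlgebra, d ∈ U := by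
  rw [← SetLike.mem_coe, hE.coe_limitAlgebra] at hx
  obtain ⟨d, hdU, hd⟩ := mem_closure_iff.1 hx U hU hxU
  obtain ⟨n, hn⟩ := Set.mem_iUnion.1 hd
  exact ⟨n, d, hn, hdU⟩

theorem limitAlgebra_comp (hE : IsCuntzTower T E) {f : ℕ → ℕ} (hf : StrictMono f) :
    limitAlgebra (fun n => E (f n)) = limitAlgebra E := by
  rw [limitAlgebra, limitAlgebra]
  congr 1
  exact hE.monotone_blockAlgebra.iSup_comp_eq fun n => ⟨n, hf.le_apply⟩

theorem separableSpace_limitAlgebra (hE : IsCuntzTower T E) :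
    TopologicalSpace.SeparableSpace (limitAlgebra E) := by
  have h : TopologicalSpace.IsSeparable (limitAlgebra E : Set B) := by
    rw [hE.coe_limitAlgebra]
    refine (TopologicalSpace.IsSeparable.iUnion fun n => ?_).closure
    have := (E n).finite_matrixUnits.isSeparable.span (R := ℂ)
    rwa [(hE.isCuntz n).span_matrixUnits] at this
  exact h.separableSpace

end IsCuntzTower

/-! ### Isomorphism of limit algebras by approximate intertwining -/

section Limits

open Filter Topology

theorem isClosed_setOf_exists_tendsto {X Y : Type*} [PseudoMetricSpace X] [PseudoMetricSpace Y]
    [CompleteSpace Y] {K : NNReal} {f : ℕ → X → Y} (hf : ∀ n, LipschitzWith K (f n)) {s : Set Y}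
    (hs : IsClosed s) : IsClosed {x | ∃ y ∈ s, Tendsto (fun n => f n x) atTop (𝓝 y)} := by
  refine isClosed_of_closure_subset fun x hx => ?_
  obtain ⟨u, hu, hux⟩ := mem_closure_iff_seq_limit.1 hx
  choose y hys hy using hu
  have hdist (k l : ℕ) : dist (y k) (y l) ≤ K * dist (u k) (u l) :=
    le_of_tendsto' ((hy k).dist (hy l)) fun n => (hf n).dist_le_mul _ _
  have hycauchy : CauchySeq y := by
    rw [cauchySeq_iff_tendsto_dist_atTop_0]
    have := (cauchySeq_iff_tendsto_dist_atTop_0.1 hux.cauchySeq).const_mul (K : ℝ)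
    rw [mul_zero] at this
    exact squeeze_zero (fun _ => dist_nonneg) (fun n => hdist n.1 n.2) this
  obtain ⟨z, hz⟩ := cauchySeq_tendsto_of_complete hycauchy
  have hunif : TendstoUniformly (fun k n => f n (u k)) (fun n => f n x) atTop := by
    rw [Metric.tendstoUniformly_iff]
    intro ε hε
    have hmul := (tendsto_iff_dist_tendsto_zero.1 hux).const_mul (K : ℝ)
    rw [mul_zero] at hmul
    filter_upwards [hmul.eventually_lt_const hε] with k hk n
    rw [dist_comm]
    exact ((hf n).dist_le_mul _ _).trans_lt hk
  exact ⟨z, hs.mem_of_tendsto hz (Eventually.of_forall hys),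
    hunif.tendsto_of_eventually_tendsto (Eventually.of_forall hy) hz⟩

variable {A B : Type*} [CStarAlgebra A] [CStarAlgebra B] {θ : ℕ → A ≃⋆ₐ[ℂ] B}

theorem tendsto_symm_apply_of_tendsto {x : A} {y : B}
    (h : Tendsto (fun n => θ n x) atTop (𝓝 y)) :
    Tendsto (fun n => (θ n).symm y) atTop (𝓝 x) := by
  rw [tendsto_iff_norm_sub_tendsto_zero] at h ⊢
  refine h.congr fun n => ?_
  rw [← StarAlgEquiv.norm_map (θ n) ((θ n).symm y - x), map_sub, StarAlgEquiv.apply_symm_apply,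
    norm_sub_rev]

theorem exists_starAlgEquiv_of_tendsto {A₀ : StarSubalgebra ℂ A} {B₀ : StarSubalgebra ℂ B}
    (h : ∀ x ∈ A₀, ∃ y ∈ B₀, Tendsto (fun n => θ n x) atTop (𝓝 y))
    (h' : ∀ y ∈ B₀, ∃ x ∈ A₀, Tendsto (fun n => (θ n).symm y) atTop (𝓝 x)) :
    Nonempty (A₀ ≃⋆ₐ[ℂ] B₀) := by
  choose! Θ hΘ hlim using h
  refine ⟨StarAlgEquiv.ofBijective (F := A₀ →⋆ₐ[ℂ] B₀)
    { toFun x := ⟨Θ x, hΘ x x.2⟩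
      map_one' := Subtype.ext (tendsto_nhds_unique (hlim _ (one_mem A₀)) (by simp))
      map_mul' x y := Subtype.ext (tendsto_nhds_unique (hlim _ (mul_mem x.2 y.2))
        (((hlim _ x.2).mul (hlim _ y.2)).congr fun n => (map_mul (θ n) _ _).symm))
      map_zero' := Subtype.ext (tendsto_nhds_unique (hlim _ (zero_mem A₀)) (by simp))
      map_add' x y := Subtype.ext (tendsto_nhds_unique (hlim _ (add_mem x.2 y.2))
        (((hlim _ x.2).add (hlim _ y.2)).congr fun n => (map_add (θ n) _ _).symm))
      commutes' c := Subtype.ext (tendsto_nhds_unique (hlim _ (algebraMap_mem A₀ c))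
        (by simp [Algebra.algebraMap_eq_smul_one]))
      map_star' x := Subtype.ext (tendsto_nhds_unique (hlim _ (star_mem x.2))
        ((hlim _ x.2).star.congr fun n => (map_star (θ n) _).symm)) } ⟨?_, ?_⟩⟩
  · intro x x' hxx'
    have hx := tendsto_symm_apply_of_tendsto (hlim x x.2)
    have hx' := tendsto_symm_apply_of_tendsto (hlim x' x'.2)
    have hΘ' : Θ x = Θ x' := congrArg Subtype.val hxx'
    rw [hΘ'] at hx
    exact Subtype.ext (tendsto_nhds_unique hx hx')
  · intro y
    obtain ⟨x, hx, hxy⟩ := h' y y.2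
    have hy := tendsto_symm_apply_of_tendsto (θ := fun n => (θ n).symm) hxy
    exact ⟨⟨x, hx⟩, Subtype.ext (tendsto_nhds_unique (hlim x hx) hy)⟩

end Limits

namespace WeightedFamily

section Monoid

variable {B : Type*} [Monoid B]

theorem translate_mul (u v : B) (E : WeightedFamily B) :
    E.translate (u * v) = (E.translate v).translate u := by
  simp only [translate, Finset.image_image, Function.comp_def, mul_assoc]

theorem translate_one (E : WeightedFamily B) : E.translate 1 = E := by
  simp [translate]

theorem translate_subst (u : B) (E : WeightedFamily B) (ρ : ℝ → WeightedFamily B) :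
    (E.subst ρ).translate u = (E.translate u).subst ρ := by
  classical
  rw [subst, translate, Finset.biUnion_image, subst, translate, Finset.image_biUnion]
  exact Finset.biUnion_congr rfl fun x _ => (translate_mul u x.1 _).symm

theorem mem_weights_translate {u : B} {E : WeightedFamily B} {s : ℝ}
    (h : s ∈ (E.translate u).weights) : s ∈ E.weights := by
  obtain ⟨z, hz, rfl⟩ := mem_weights.1 h
  obtain ⟨x, hx, rfl⟩ := mem_translate.1 hz
  exact mem_weights.2 ⟨x, hx, rfl⟩

end Monoid

section StarRing

variable {B : Type*} [Ring B] [StarRing B] {E F : WeightedFamily B} {V : ℝ → B}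

theorem Refines.translate (h : E.Refines F) (u : B) : (E.translate u).Refines (F.translate u) := by
  obtain ⟨ρ, hρ, rfl⟩ := h
  refine ⟨ρ, fun z hz => ?_, translate_subst u E ρ⟩
  obtain ⟨x, hx, rfl⟩ := mem_translate.1 hz
  exact hρ x hx

/-- The element `∑ w V_s w*` of `B`, the sum being over the members `(w, s)` of `E`: the diagonal
operator with entry `V s` at each member of weight `s`. -/
noncomputable def diagonal (E : WeightedFamily B) (V : ℝ → B) : B :=
  ∑ x ∈ E, x.1 * V x.2 * star x.1

theorem star_diagonal : star (E.diagonal V) = E.diagonal fun s => star (V s) := by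
  simp only [diagonal, star_sum, star_mul, star_star, mul_assoc]

theorem IsCuntz.diagonal_mul (hE : E.IsCuntz) {x : B × ℝ} (hx : x ∈ E) :
    E.diagonal V * x.1 = x.1 * V x.2 := by
  rw [diagonal, Finset.sum_mul, Finset.sum_eq_single x]
  · rw [mul_assoc, hE.star_mul_self x hx, mul_one]
  · intro y hy hne
    rw [mul_assoc, hE.star_mul_of_ne y hy x hx hne, mul_zero]
  · exact fun h => absurd hx h

theorem IsCuntz.star_mul_diagonal (hE : E.IsCuntz) {x : B × ℝ} (hx : x ∈ E) :
    star x.1 * E.diagonal V = V x.2 * star x.1 := by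
  rw [← star_inj, star_mul, star_mul, star_star, star_diagonal, hE.diagonal_mul hx]

theorem IsCuntz.diagonal_mem_unitary (hE : E.IsCuntz) (hV : ∀ x ∈ E, V x.2 ∈ unitary B) :
    E.diagonal V ∈ unitary B := by
  rw [Unitary.mem_iff, star_diagonal]
  constructor <;> refine hE.eq_of_forall_mul_eq fun x hx => ?_
  · rw [mul_assoc, hE.diagonal_mul hx, ← mul_assoc, hE.diagonal_mul hx, mul_assoc,
      (Unitary.mem_iff.1 (hV x hx)).1, mul_one, one_mul]
  · rw [mul_assoc, hE.diagonal_mul hx, ← mul_assoc, hE.diagonal_mul hx, mul_assoc,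
      (Unitary.mem_iff.1 (hV x hx)).2, mul_one, one_mul]

theorem IsCuntz.translate_diagonal_subst (hE : E.IsCuntz) {ρ ρ' : ℝ → WeightedFamily B}
    (h : ∀ x ∈ E, (ρ x.2).translate (V x.2) = ρ' x.2) :
    (E.subst ρ).translate (E.diagonal V) = E.subst ρ' := by
  classical
  rw [WeightedFamily.subst, WeightedFamily.translate, Finset.biUnion_image, WeightedFamily.subst]
  refine Finset.biUnion_congr rfl fun x hx => ?_
  change ((ρ x.2).translate x.1).translate (E.diagonal V) = _
  rw [← h x hx, ← translate_mul, ← translate_mul, hE.diagonal_mul hx]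

theorem IsCuntz.commute_diagonal [Algebra ℂ B] [StarModule ℂ B] (hE : E.IsCuntz) {b : B}
    (hb : b ∈ E.blockAlgebra) : Commute (E.diagonal V) b := by
  rw [hE.mem_blockAlgebra] at hb
  induction hb using Submodule.span_induction with
  | mem b hb =>
    obtain ⟨x, hx, y, hy, hxy, rfl⟩ := hb
    rw [Commute, SemiconjBy, ← mul_assoc, hE.diagonal_mul hx, mul_assoc, mul_assoc,
      hE.star_mul_diagonal hy, hxy]
  | zero => exact Commute.zero_right _
  | add a b _ _ ha hb => exact ha.add_right hb
  | smul c b _ hb => exact hb.smul_right c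

theorem map_conj_blockAlgebra [Algebra ℂ B] [StarModule ℂ B] (U : unitary B)
    (E : WeightedFamily B) {b : B} (hb : b ∈ E.blockAlgebra) :
    Unitary.conjStarAlgAut ℂ B U b ∈ (E.translate (U : B)).blockAlgebra := by
  suffices h : E.blockAlgebra ≤ ((E.translate (U : B)).blockAlgebra).comap
    (Unitary.conjStarAlgAut ℂ B U : B →⋆ₐ[ℂ] B) from h hb
  refine blockAlgebra_le fun x hx y hy hxy => ?_
  have := mul_star_mem_blockAlgebra (mem_translate.2 ⟨x, hx, rfl⟩)
    (mem_translate (u := (U : B)).2 ⟨y, hy, rfl⟩) hxy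
  simpa [mul_assoc] using this

-- The two refinements have the same weights over each member of `E`, because linear independence
-- makes a multiset of weights recoverable from its sum.
theorem IsCuntz.exists_unitary_translate_eq_of_refines [Nontrivial B] [Algebra ℂ B]
    [StarModule ℂ B] (hE : E.IsCuntz) {S : Set ℝ} (hS : LinearIndepOn ℤ id S)
    {F' : WeightedFamily B} (hF : E.Refines F) (hF' : E.Refines F')
    (hFS : ∀ s ∈ F.weights, s ∈ S) (hFS' : ∀ s ∈ F'.weights, s ∈ S) :
    ∃ W ∈ unitary B, F.translate W = F' ∧ ∀ b ∈ E.blockAlgebra, Commute W b := by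
  obtain ⟨ρ, hρ, rfl⟩ := hF
  obtain ⟨ρ', hρ', rfl⟩ := hF'
  have h : ∀ s ∈ E.weights, ∃ V ∈ unitary B, (ρ s).translate V = ρ' s := by
    intro s hs
    obtain ⟨x, hx, rfl⟩ := mem_weights.1 hs
    exact exists_unitary_translate_eq (hρ x hx).1 (hρ' x hx).1 (multiset_eq_of_sum_eq hS
      (fun r hr => hFS r (mem_weights_subst.2 ⟨x.2, hs, hr⟩))
      (fun r hr => hFS' r (mem_weights_subst.2 ⟨x.2, hs, hr⟩))
      ((hρ x hx).2.trans (hρ' x hx).2.symm))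
  choose! V hV hVρ using h
  exact ⟨E.diagonal V, hE.diagonal_mem_unitary fun x hx => hV _ (snd_mem_weights hx),
    hE.translate_diagonal_subst fun x hx => hVρ _ (snd_mem_weights hx),
    fun b hb => hE.commute_diagonal hb⟩

end StarRing

end WeightedFamily

namespace IsCuntzTower

open WeightedFamily Filter Topology

variable {B : Type*} [CStarAlgebra B] [Nontrivial B] {T : ℝ} {E E' : ℕ → WeightedFamily B}
  {S : ℕ → Set ℝ}

theorem exists_unitary_translate_eq_succ (hE : IsCuntzTower T E) (hE' : IsCuntzTower T E') {n : ℕ}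
    (hS : LinearIndepOn ℤ id (S (n + 1))) (hES : ∀ s ∈ (E (n + 1)).weights, s ∈ S (n + 1))
    (hES' : ∀ s ∈ (E' (n + 1)).weights, s ∈ S (n + 1)) {U : unitary B}
    (hU : (E n).translate (U : B) = E' n) :
    ∃ U' : unitary B, (E (n + 1)).translate (U' : B) = E' (n + 1) ∧ ∀ b ∈ (E n).blockAlgebra,
      Unitary.conjStarAlgAut ℂ B U' b = Unitary.conjStarAlgAut ℂ B U b := by
  have hUE : (E' n).translate (star (U : B)) = E n := by
    rw [← hU, ← translate_mul, Unitary.coe_star_mul_self, translate_one]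
  have hrefines : (E n).Refines ((E' (n + 1)).translate (star (U : B))) :=
    hUE ▸ (hE'.refines_succ n).translate (star (U : B))
  obtain ⟨W, hW, hWE, hcomm⟩ := (hE.isCuntz n).exists_unitary_translate_eq_of_refines hS
    (hE.refines_succ n) hrefines hES fun s hs => hES' s (mem_weights_translate hs)
  refine ⟨U * ⟨W, hW⟩, ?_, fun b hb => ?_⟩
  · change (E (n + 1)).translate ((U : B) * W) = _
    rw [translate_mul, hWE, ← translate_mul, Unitary.mul_star_self_of_mem U.2, translate_one]
  · rw [map_mul, StarAlgEquiv.mul_apply]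
    congr 1
    rw [Unitary.conjStarAlgAut_apply, (hcomm b hb).eq, mul_assoc, Unitary.mul_star_self_of_mem hW,
      mul_one]

theorem exists_unitary_seq_translate_eq (hE : IsCuntzTower T E) (hE' : IsCuntzTower T E')
    (hS : ∀ n, LinearIndepOn ℤ id (S n)) (hES : ∀ n, ∀ s ∈ (E n).weights, s ∈ S n)
    (hES' : ∀ n, ∀ s ∈ (E' n).weights, s ∈ S n) :
    ∃ U : ℕ → unitary B, ∀ n, (E n).translate (U n : B) = E' n ∧ ∀ b ∈ (E n).blockAlgebra,
      Unitary.conjStarAlgAut ℂ B (U (n + 1)) b = Unitary.conjStarAlgAut ℂ B (U n) b := by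
  obtain ⟨U₀, hU₀, hEU₀⟩ := exists_unitary_translate_eq (hE.isCuntz 0) (hE'.isCuntz 0)
    (multiset_eq_of_sum_eq (hS 0) (hES 0) (hES' 0)
      ((hE.sum_weights 0).trans (hE'.sum_weights 0).symm))
  choose! next hnext hconj using fun n (U : unitary B) (hU : (E n).translate (U : B) = E' n) =>
    hE.exists_unitary_translate_eq_succ hE' (hS (n + 1)) (hES (n + 1)) (hES' (n + 1)) hU
  obtain ⟨U, hU0, hU_succ⟩ : ∃ U : ℕ → unitary B, U 0 = ⟨U₀, hU₀⟩ ∧ ∀ n, U (n + 1) = next n (U n) :=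
    ⟨Nat.rec ⟨U₀, hU₀⟩ next, rfl, fun _ => rfl⟩
  have hU (n : ℕ) : (E n).translate (U n : B) = E' n := by
    induction n with
    | zero => rwa [hU0]
    | succ n ih => exact hU_succ n ▸ hnext n _ ih
  exact ⟨U, fun n => ⟨hU n, hU_succ n ▸ hconj n _ (hU n)⟩⟩

theorem exists_tendsto_conjStarAlgAut (hE : IsCuntzTower T E) {U : ℕ → unitary B}
    (hU : ∀ n, (E n).translate (U n : B) = E' n ∧ ∀ b ∈ (E n).blockAlgebra,
      Unitary.conjStarAlgAut ℂ B (U (n + 1)) b = Unitary.conjStarAlgAut ℂ B (U n) b)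
    {x : B} (hx : x ∈ limitAlgebra E) :
    ∃ y ∈ limitAlgebra E', Tendsto (fun n => Unitary.conjStarAlgAut ℂ B (U n) x) atTop (𝓝 y) := by
  refine hE.limitAlgebra_subset_of_isClosed (isClosed_setOf_exists_tendsto
    (fun n => (StarAlgEquiv.isometry (Unitary.conjStarAlgAut ℂ B (U n))).lipschitz)
    (isClosed_limitAlgebra E')) (fun n b hb => ?_) hx
  refine ⟨Unitary.conjStarAlgAut ℂ B (U n) b, blockAlgebra_le_limitAlgebra E' n
    ((hU n).1 ▸ map_conj_blockAlgebra (U n) (E n) hb), tendsto_const_nhds.congr' ?_⟩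
  filter_upwards [eventually_ge_atTop n] with m hm
  induction m, hm using Nat.le_induction with
  | base => rfl
  | succ m hm ih => rw [ih, (hU m).2 b (hE.monotone_blockAlgebra hm hb)]

theorem nonempty_limitAlgebra_starAlgEquiv (hE : IsCuntzTower T E) (hE' : IsCuntzTower T E')
    (hS : ∀ n, LinearIndepOn ℤ id (S n)) (hES : ∀ n, ∀ s ∈ (E n).weights, s ∈ S n)
    (hES' : ∀ n, ∀ s ∈ (E' n).weights, s ∈ S n) :
    Nonempty (limitAlgebra E ≃⋆ₐ[ℂ] limitAlgebra E') := by
  obtain ⟨U, hU⟩ := hE.exists_unitary_seq_translate_eq hE' hS hES hES'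
  refine exists_starAlgEquiv_of_tendsto (θ := fun n => Unitary.conjStarAlgAut ℂ B (U n))
    (fun x hx => hE.exists_tendsto_conjStarAlgAut hU hx) fun y hy => ?_
  have htranslate (n : ℕ) : (E' n).translate (star (U n : B)) = E n := by
    rw [← (hU n).1, ← translate_mul, Unitary.coe_star_mul_self, translate_one]
  simp only [Unitary.conjStarAlgAut_symm]
  refine hE'.exists_tendsto_conjStarAlgAut (U := fun n => star (U n))
    (fun n => ⟨htranslate n, fun b hb => ?_⟩) hy
  have hb' := htranslate n ▸ map_conj_blockAlgebra (star (U n)) (E' n) hb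
  rw [← Unitary.conjStarAlgAut_symm, StarAlgEquiv.symm_apply_eq, ← Unitary.conjStarAlgAut_symm,
    (hU n).2, StarAlgEquiv.apply_symm_apply]
  rwa [Unitary.conjStarAlgAut_symm]

end IsCuntzTower

theorem IsSimplicialTower.nonempty_limitAlgebra_starAlgEquiv {B : Type*} [CStarAlgebra B]
    [Nontrivial B] (hB : WeightedFamily.HasCuntzPair B) {G : AddSubgroup ℝ} {T : ℝ}
    {E E' : ℕ → WeightedFamily B} (hE : IsSimplicialTower G T E) (hE' : IsSimplicialTower G T E') :
    Nonempty (WeightedFamily.limitAlgebra E ≃⋆ₐ[ℂ] WeightedFamily.limitAlgebra E') := by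
  obtain ⟨Z, f, f', hZ, hf, hf', hZf, hZf'⟩ :=
    hE.isSimplicialChain.exists_merge hE'.isSimplicialChain
  have hT : T ∈ AddSubmonoid.closure (Z 0 : Set ℝ) := by
    rw [hZf 0, ← hE.sum_weights (f 0)]
    exact AddSubmonoid.multiset_sum_mem _ _ fun s hs =>
      AddSubmonoid.subset_closure (Multiset.mem_toFinset.2 hs)
  have hT₀ : 0 < T := hE.total_pos fun s hs =>
    hE.isSimplicialChain.pos 0 s (Multiset.mem_toFinset.2 hs)
  obtain ⟨W, hW, hWZ⟩ := exists_isCuntzTower hB hZ hT hT₀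
  have h2 : StrictMono fun n : ℕ => 2 * n := fun _ _ h => by lia
  have h2' : StrictMono fun n : ℕ => 2 * n + 1 := fun _ _ h => by lia
  have hEW := (hE.toIsCuntzTower.comp hf).nonempty_limitAlgebra_starAlgEquiv (hW.comp h2)
    (fun n => hZ.linearIndepOn (2 * n))
    (fun n s hs => Finset.mem_coe.2 (hZf n ▸ Multiset.mem_toFinset.2 hs))
    (fun n s hs => hWZ (2 * n) s hs)
  have hEW' := (hW.comp h2').nonempty_limitAlgebra_starAlgEquiv (hE'.toIsCuntzTower.comp hf')
    (fun n => hZ.linearIndepOn (2 * n + 1)) (fun n s hs => hWZ (2 * n + 1) s hs)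
    (fun n s hs => Finset.mem_coe.2 (hZf' n ▸ Multiset.mem_toFinset.2 hs))
  rw [hE.toIsCuntzTower.limitAlgebra_comp hf, hW.limitAlgebra_comp h2] at hEW
  rw [hW.limitAlgebra_comp h2', hE'.toIsCuntzTower.limitAlgebra_comp hf'] at hEW'
  exact hEW.map2 StarAlgEquiv.trans hEW'

/-! ### Tracial states on limit algebras -/

section StarAlgebra

variable {A : Type*} [CStarAlgebra A]

theorem norm_le_one_of_star_mul_self_eq_one {v : A} (hv : star v * v = 1) : ‖v‖ ≤ 1 := by
  nontriviality A
  have h : ‖v‖ * ‖v‖ = 1 := by rw [← CStarRing.norm_star_mul_self, hv, CStarRing.norm_one]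
  exact abs_le_one_iff_mul_self_le_one.2 h.le |> (abs_norm v).symm.le.trans

theorem nonneg_of_star_mul_self_eq_smul_one [Nontrivial A] {a : A} {c : ℂ}
    (h : star a * a = c • 1) : 0 ≤ c := by
  have hc : star c = c := by
    have := congrArg star h
    rw [star_mul, star_star, h, star_smul, star_one] at this
    exact smul_left_injective ℂ one_ne_zero this.symm
  obtain ⟨r, rfl⟩ := Complex.conj_eq_iff_real.1 hc
  have hr : r ∈ spectrum ℝ (star a * a) := by
    rw [h, Complex.coe_smul, ← Algebra.algebraMap_eq_smul_one, spectrum.scalar_eq]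
    rfl
  exact Complex.zero_le_real.2 (spectrum_star_mul_self_nonneg r hr)

theorem IsTracialState.continuous {τ : A →ₗ[ℂ] ℂ} (hτ : IsTracialState A τ) : Continuous τ := by
  let _ := CStarAlgebra.spectralOrder A
  have := CStarAlgebra.spectralOrderedRing A
  have hpos (a : A) (ha : 0 ≤ a) : 0 ≤ τ a := by
    obtain ⟨b, rfl⟩ := CStarAlgebra.nonneg_iff_eq_star_mul_self.1 ha
    exact hτ.nonneg b
  exact map_continuous (PositiveLinearMap.mk₀ τ hpos)

end StarAlgebra

namespace WeightedFamily

section BlockTrace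

variable {B : Type*} [Ring B] [StarRing B] [Algebra ℂ B]
  {E F : WeightedFamily B} {ω : B →ₗ[ℂ] ℂ}

/-- The functional `b ↦ ∑ s ω(v* b v)`, the sum being over the members `(v, s)` of `E`. If `E` is a
Cuntz family and `ω 1 = 1`, then on `blockAlgebra E` it is the trace giving every minimal projection
`v v*` its weight, whatever `ω` is. -/
noncomputable def blockTrace (ω : B →ₗ[ℂ] ℂ) (E : WeightedFamily B) : B →ₗ[ℂ] ℂ :=
  ∑ x ∈ E, (x.2 : ℂ) • ω ∘ₗ LinearMap.mulLeftRight ℂ (star x.1, x.1)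

theorem blockTrace_apply (b : B) :
    E.blockTrace ω b = ∑ x ∈ E, (x.2 : ℂ) * ω (star x.1 * b * x.1) := by
  simp [blockTrace, LinearMap.sum_apply]

theorem IsCuntz.blockTrace_mul_star_mul (hE : E.IsCuntz) {x : B × ℝ} (hx : x ∈ E) (w b : B) :
    E.blockTrace ω (x.1 * star w * b) = x.2 * ω (star w * b * x.1) := by
  rw [blockTrace_apply, Finset.sum_eq_single x]
  · rw [mul_assoc x.1, ← mul_assoc (star x.1), hE.star_mul_self x hx, one_mul]
  · intro y hy hne
    rw [mul_assoc x.1, ← mul_assoc (star y.1), hE.star_mul_of_ne y hy x hx hne, zero_mul, zero_mul,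
      map_zero, mul_zero]
  · exact fun h => absurd hx h

theorem IsCuntz.blockTrace_mul_mul_star (hE : E.IsCuntz) {y : B × ℝ} (hy : y ∈ E) (v b : B) :
    E.blockTrace ω (b * (v * star y.1)) = y.2 * ω (star y.1 * b * v) := by
  rw [blockTrace_apply, Finset.sum_eq_single y]
  · rw [mul_assoc, mul_assoc, mul_assoc, hE.star_mul_self y hy, mul_one, mul_assoc]
  · intro z hz hne
    rw [mul_assoc, mul_assoc, mul_assoc, hE.star_mul_of_ne y hy z hz hne.symm, mul_zero, mul_zero,
      mul_zero, map_zero, mul_zero]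
  · exact fun h => absurd hy h

variable [StarModule ℂ B]

theorem IsCuntz.blockTrace_mul_comm (hE : E.IsCuntz) {a : B} (ha : a ∈ E.blockAlgebra) (b : B) :
    E.blockTrace ω (a * b) = E.blockTrace ω (b * a) := by
  rw [hE.mem_blockAlgebra] at ha
  induction ha using Submodule.span_induction with
  | mem a ha =>
    obtain ⟨x, hx, y, hy, hxy, rfl⟩ := ha
    rw [hE.blockTrace_mul_star_mul hx, hE.blockTrace_mul_mul_star hy, hxy]
  | zero => simp
  | add a a' _ _ ha ha' => simp only [add_mul, mul_add, map_add, ha, ha']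
  | smul c a _ ha => simp only [smul_mul_assoc, mul_smul_comm, map_smul, ha]

theorem Refines.blockTrace_eq [Nontrivial B] (h : E.Refines F) (hE : E.IsCuntz) {b : B}
    (hb : b ∈ E.blockAlgebra) : F.blockTrace ω b = E.blockTrace ω b := by
  obtain ⟨ρ, hρ, rfl⟩ := h
  rw [blockTrace_apply, blockTrace_apply, hE.sum_subst fun x hx => (hρ x hx).1]
  refine Finset.sum_congr rfl fun x hx => ?_
  obtain ⟨c, hc, -⟩ := hE.exists_star_mul_mul_eq_smul_one hx hx hb
  have hterm (y : B × ℝ) (hy : y ∈ ρ x.2) : star (x.1 * y.1) * b * (x.1 * y.1) = c • 1 := by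
    calc star (x.1 * y.1) * b * (x.1 * y.1) = star y.1 * (star x.1 * b * x.1) * y.1 := by
          simp only [star_mul, mul_assoc]
      _ = c • 1 := by
          rw [hc, mul_smul_comm, mul_one, smul_mul_assoc, (hρ x hx).1.star_mul_self y hy]
  rw [Finset.sum_congr rfl fun y hy => by rw [hterm y hy], ← Finset.sum_mul, hc]
  congr 1
  exact_mod_cast (hρ x hx).2

end BlockTrace

section CStarAlgebra

variable {B : Type*} [CStarAlgebra B] {E : WeightedFamily B} {ω : B →ₗ[ℂ] ℂ}

theorem IsCuntz.norm_blockTrace_le (hE : E.IsCuntz) (hpos : ∀ s ∈ E.weights, 0 ≤ s)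
    (hω : ∀ b, ‖ω b‖ ≤ ‖b‖) (b : B) : ‖E.blockTrace ω b‖ ≤ E.weights.sum * ‖b‖ := by
  rw [blockTrace_apply, sum_weights, Finset.sum_mul]
  refine norm_sum_le_of_le _ fun x hx => ?_
  have hx₀ : 0 ≤ x.2 := hpos _ (snd_mem_weights hx)
  have hx₁ : ‖x.1‖ ≤ 1 := norm_le_one_of_star_mul_self_eq_one (hE.star_mul_self x hx)
  rw [norm_mul, Complex.norm_real, Real.norm_of_nonneg hx₀]
  gcongr
  calc ‖ω (star x.1 * b * x.1)‖ ≤ ‖star x.1 * b * x.1‖ := hω _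
    _ ≤ ‖star x.1‖ * ‖b‖ * ‖x.1‖ := norm_mul₃_le
    _ ≤ 1 * ‖b‖ * 1 := by rw [norm_star]; gcongr
    _ = ‖b‖ := by rw [one_mul, mul_one]

theorem IsCuntz.blockTrace_star_mul_self_nonneg [Nontrivial B] (hE : E.IsCuntz)
    (hpos : ∀ s ∈ E.weights, 0 ≤ s) (hω : ω 1 = 1) {b : B} (hb : b ∈ E.blockAlgebra) :
    0 ≤ E.blockTrace ω (star b * b) := by
  rw [blockTrace_apply]
  refine Finset.sum_nonneg fun x hx => ?_
  obtain ⟨c, hc, -⟩ := hE.exists_star_mul_mul_eq_smul_one hx hx (mul_mem (star_mem hb) hb)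
  have hc₀ : 0 ≤ c := nonneg_of_star_mul_self_eq_smul_one (a := b * x.1) (by
    rw [← hc, star_mul]; simp only [mul_assoc])
  rw [hc, map_smul, hω, smul_eq_mul, mul_one]
  exact mul_nonneg (Complex.zero_le_real.2 (hpos _ (snd_mem_weights hx))) hc₀

end CStarAlgebra

end WeightedFamily

namespace IsCuntzTower

open WeightedFamily Filter Topology

variable {B : Type*} [CStarAlgebra B] [Nontrivial B] {T : ℝ} {E : ℕ → WeightedFamily B}

theorem isClosed_induction (hE : IsCuntzTower T E) {p : limitAlgebra E → Prop}
    (hp : IsClosed {x | p x}) (h : ∀ n, ∀ x : limitAlgebra E, (x : B) ∈ (E n).blockAlgebra → p x)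
    (x : limitAlgebra E) : p x := by
  obtain ⟨y, hy, hyx⟩ := hE.limitAlgebra_subset_of_isClosed
    ((isClosed_limitAlgebra E).isClosedEmbedding_subtypeVal.isClosedMap _ hp)
    (fun n b hb => ⟨⟨b, blockAlgebra_le_limitAlgebra E n hb⟩, h n _ hb, rfl⟩) x.2
  exact Subtype.ext hyx ▸ hy

theorem exists_continuous_eq_blockTrace (hE : IsCuntzTower T E)
    (hpos : ∀ n, ∀ s ∈ (E n).weights, 0 ≤ s) {ω : B →ₗ[ℂ] ℂ}
    (hω : ∀ b, ‖ω b‖ ≤ ‖b‖) :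
    ∃ τ : limitAlgebra E →ₗ[ℂ] ℂ, Continuous τ ∧
      ∀ n, ∀ x : limitAlgebra E, (x : B) ∈ (E n).blockAlgebra →
        τ x = (E n).blockTrace ω x := by
  have hbound (n : ℕ) (b : B) : ‖(E n).blockTrace ω b‖ ≤ T * ‖b‖ :=
    hE.sum_weights n ▸ (hE.isCuntz n).norm_blockTrace_le (hpos n) hω b
  have heventually {n : ℕ} {b : B} (hb : b ∈ (E n).blockAlgebra) :
      Tendsto (fun m => (E m).blockTrace ω b) atTop (𝓝 ((E n).blockTrace ω b)) := by
    refine tendsto_const_nhds.congr' ?_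
    filter_upwards [eventually_ge_atTop n] with m hm
    exact ((hE.refines hm).blockTrace_eq (hE.isCuntz n) hb).symm
  have hlim (x : limitAlgebra E) : ∃ c, Tendsto (fun n => (E n).blockTrace ω x) atTop (𝓝 c) := by
    obtain ⟨c, -, hc⟩ := hE.limitAlgebra_subset_of_isClosed (isClosed_setOf_exists_tendsto
      (fun n => AddMonoidHomClass.lipschitz_of_bound ((E n).blockTrace ω) T (hbound n))
      isClosed_univ) (fun n b hb => ⟨_, Set.mem_univ _, heventually hb⟩) x.2
    exact ⟨c, hc⟩
  choose τ hτ using hlim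
  refine ⟨linearMapOfTendsto τ (fun n => (E n).blockTrace ω ∘ₗ (limitAlgebra E).subtype.toLinearMap)
    (tendsto_pi_nhds.2 hτ), ?_, fun n x hx => ?_⟩
  · exact AddMonoidHomClass.continuous_of_bound _ T fun x =>
      le_of_tendsto' (hτ x).norm fun n => hbound n x
  · exact tendsto_nhds_unique (hτ x) (heventually hx)

theorem exists_isTracialState (hE : IsCuntzTower T E) (hpos : ∀ n, ∀ s ∈ (E n).weights, 0 < s) :
    ∃ τ, IsTracialState (limitAlgebra E) τ := by
  obtain ⟨ω, hω, hω1⟩ := exists_dual_vector' ℂ (1 : B)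
  rw [CStarRing.norm_one, RCLike.ofReal_one] at hω1
  have hpos' (n : ℕ) : ∀ s ∈ (E n).weights, 0 ≤ s := fun s hs => (hpos n s hs).le
  obtain ⟨τ, hcont, hτ⟩ := hE.exists_continuous_eq_blockTrace hpos' (ω := (ω : B →ₗ[ℂ] ℂ))
    fun b => (ω.le_of_opNorm_le hω.le b).trans_eq (one_mul _)
  have hT₀ : 0 < T := hE.total_pos (hpos 0)
  refine ⟨(T⁻¹ : ℂ) • τ, ?_, fun a => ?_, fun a b => ?_⟩
  · rw [LinearMap.smul_apply, hτ 0 1 (one_mem (E 0).blockAlgebra), smul_eq_mul,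
      inv_mul_eq_one₀ (by exact_mod_cast hT₀.ne'), ← hE.sum_weights 0, WeightedFamily.sum_weights,
      Complex.ofReal_sum, blockTrace_apply]
    refine Finset.sum_congr rfl fun x hx => ?_
    simp [(hE.isCuntz 0).star_mul_self x hx, hω1]
  · refine mul_nonneg (by exact_mod_cast (inv_pos.2 hT₀).le) ?_
    refine hE.isClosed_induction (p := fun a => 0 ≤ τ (star a * a))
      (isClosed_le continuous_const (by fun_prop)) (fun n x hx => ?_) a
    rw [hτ n _ (mul_mem (star_mem hx) hx)]
    exact (hE.isCuntz n).blockTrace_star_mul_self_nonneg (hpos' n) hω1 hx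
  · rw [LinearMap.smul_apply, LinearMap.smul_apply]
    congr 1
    refine hE.isClosed_induction (p := fun a => τ (a * b) = τ (b * a))
      (isClosed_eq (by fun_prop) (by fun_prop)) (fun n a ha => ?_) a
    refine hE.isClosed_induction (p := fun b => τ (a * b) = τ (b * a))
      (isClosed_eq (by fun_prop) (by fun_prop)) (fun m b hb => ?_) b
    have ha' := hE.monotone_blockAlgebra (le_max_left n m) ha
    have hb' := hE.monotone_blockAlgebra (le_max_right n m) hb
    rw [hτ _ _ (mul_mem ha' hb'), hτ _ _ (mul_mem hb' ha')]
    exact (hE.isCuntz _).blockTrace_mul_comm ha' b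

end IsCuntzTower

namespace IsCuntzTower

open WeightedFamily

variable {B : Type*} [CStarAlgebra B] {T : ℝ} {E : ℕ → WeightedFamily B}
  {τ : limitAlgebra E →ₗ[ℂ] ℂ} {n : ℕ} {x y : B × ℝ}

theorem map_mul_star_eq_map (hE : IsCuntzTower T E) (hτ : IsTracialState (limitAlgebra E) τ)
    (hx : x ∈ E n) (hy : y ∈ E n) (hxy : x.2 = y.2) {a b : limitAlgebra E}
    (ha : (a : B) = x.1 * star x.1) (hb : (b : B) = y.1 * star y.1) : τ a = τ b := by
  have hv := blockAlgebra_le_limitAlgebra E n (mul_star_mem_blockAlgebra hx hy hxy)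
  have hw := blockAlgebra_le_limitAlgebra E n (mul_star_mem_blockAlgebra hy hx hxy.symm)
  have hvw : a = ⟨_, hv⟩ * ⟨_, hw⟩ := Subtype.ext <| ha.trans <| by
    change _ = x.1 * star y.1 * (y.1 * star x.1)
    rw [mul_assoc, ← mul_assoc (star y.1),
      (hE.isCuntz n).star_mul_self y hy, one_mul]
  have hwv : b = ⟨_, hw⟩ * ⟨_, hv⟩ := Subtype.ext <| hb.trans <| by
    change _ = y.1 * star x.1 * (x.1 * star y.1)
    rw [mul_assoc, ← mul_assoc (star x.1),
      (hE.isCuntz n).star_mul_self x hx, one_mul]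
  rw [hvw, hwv, hτ.tracial]

theorem map_mul_star_eq_zero (hE : IsCuntzTower T E) (hτ : IsTracialState (limitAlgebra E) τ)
    (hx : x ∈ E n) (hy : y ∈ E n) (hne : x ≠ y) {a : limitAlgebra E}
    (ha : (a : B) = x.1 * star y.1) : τ a = 0 := by
  have he := blockAlgebra_le_limitAlgebra E n (mul_star_mem_blockAlgebra hx hx rfl)
  have hea : a = ⟨_, he⟩ * a := Subtype.ext <| by
    rw [MulMemClass.coe_mul, ha, mul_assoc, ← mul_assoc (star x.1),
      (hE.isCuntz n).star_mul_self x hx, one_mul]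
  have hae : a * ⟨_, he⟩ = 0 := Subtype.ext <| by
    rw [MulMemClass.coe_mul, ha, mul_assoc, ← mul_assoc (star y.1),
      (hE.isCuntz n).star_mul_of_ne y hy x hx hne.symm, zero_mul, mul_zero]
    rfl
  rw [hea, hτ.tracial, hae, map_zero]

theorem exists_map_mul_star_eq (hE : IsCuntzTower T E) (hτ : IsTracialState (limitAlgebra E) τ)
    (n : ℕ) : ∃ f : ℝ → ℝ, (∀ s, 0 ≤ f s) ∧
      ∀ x ∈ E n, ∀ a : limitAlgebra E, (a : B) = x.1 * star x.1 → τ a = f x.2 := by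
  have h (s : ℝ) : ∃ r : ℝ, 0 ≤ r ∧ ∀ x ∈ E n, x.2 = s → ∀ a : limitAlgebra E,
      (a : B) = x.1 * star x.1 → τ a = r := by
    by_cases hs : ∃ y ∈ E n, y.2 = s
    · obtain ⟨y, hy, rfl⟩ := hs
      let b : limitAlgebra E :=
        ⟨_, blockAlgebra_le_limitAlgebra E n (mul_star_mem_blockAlgebra hy hy rfl)⟩
      have hb : star b * b = b := Subtype.ext <| by
        change star (y.1 * star y.1) * (y.1 * star y.1) = y.1 * star y.1
        rw [star_mul, star_star, mul_assoc, ← mul_assoc (star y.1),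
          (hE.isCuntz n).star_mul_self y hy, one_mul]
      obtain ⟨r, hr, hrb⟩ := RCLike.nonneg_iff_exists_ofReal.1 (hτ.nonneg b)
      exact ⟨r, hr, fun x hx hxy a ha =>
        (hE.map_mul_star_eq_map hτ hx hy hxy ha rfl).trans (hb ▸ hrb.symm)⟩
    · exact ⟨0, le_rfl, fun x hx hxs => absurd ⟨x, hx, hxs⟩ hs⟩
  choose f hf₀ hf using h
  exact ⟨f, hf₀, fun x hx => hf _ x hx rfl⟩

variable {m : ℕ} {f : ℝ → ℝ}

theorem sum_map_weights_eq_one (hE : IsCuntzTower T E) (hτ : IsTracialState (limitAlgebra E) τ)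
    (hf : ∀ x ∈ E m, ∀ a : limitAlgebra E, (a : B) = x.1 * star x.1 → τ a = f x.2) :
    ((E m).weights.map f).sum = 1 := by
  let e (x : E m) : limitAlgebra E :=
    ⟨_, blockAlgebra_le_limitAlgebra E m (mul_star_mem_blockAlgebra x.2 x.2 rfl)⟩
  have hone : ∑ x, e x = 1 := Subtype.ext <| by
    rw [AddSubmonoidClass.coe_finsetSum]
    exact (hE.isCuntz m).sum_coe_mul_star
  rw [sum_map_weights, ← Complex.ofReal_inj, Complex.ofReal_sum, ← Finset.sum_coe_sort,
    Complex.ofReal_one, ← hτ.map_one, ← hone, map_sum]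
  exact Finset.sum_congr rfl fun x _ => (hf x x.2 (e x) rfl).symm

theorem exists_map_eq_sum_map [Nontrivial B] (hE : IsCuntzTower T E) (hnm : n ≤ m)
    (hf : ∀ x ∈ E m, ∀ a : limitAlgebra E, (a : B) = x.1 * star x.1 → τ a = f x.2) (hx : x ∈ E n)
    {a : limitAlgebra E} (ha : (a : B) = x.1 * star x.1) :
    ∃ P : Multiset ℝ, (∀ s ∈ P, s ∈ (E m).weights) ∧ P.sum = x.2 ∧ τ a = (P.map f).sum := by
  obtain ⟨ρ, hρ, hm⟩ := hE.refines hnm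
  have hmem (z : ρ x.2) : (x.1 * z.1.1, z.1.2) ∈ E m := hm ▸ mul_mem_subst hx z.2
  let e (z : ρ x.2) : limitAlgebra E :=
    ⟨_, blockAlgebra_le_limitAlgebra E m (mul_star_mem_blockAlgebra (hmem z) (hmem z) rfl)⟩
  have hsum : a = ∑ z, e z := Subtype.ext <| by
    rw [AddSubmonoidClass.coe_finsetSum, ha]
    change _ = ∑ z : ρ x.2, x.1 * z.1.1 * star (x.1 * z.1.1)
    rw [Finset.sum_coe_sort (ρ x.2) fun z => x.1 * z.1 * star (x.1 * z.1)]
    calc x.1 * star x.1 = x.1 * (∑ z ∈ ρ x.2, z.1 * star z.1) * star x.1 := by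
          rw [(hρ x hx).1.sum_mul_star, mul_one]
      _ = ∑ z ∈ ρ x.2, x.1 * z.1 * star (x.1 * z.1) := by
          simp only [star_mul, Finset.mul_sum, Finset.sum_mul, mul_assoc]
  refine ⟨(ρ x.2).weights, fun s hs => ?_, (hρ x hx).2, ?_⟩
  · obtain ⟨z, hz, rfl⟩ := mem_weights.1 hs
    exact mem_weights.2 ⟨_, hmem ⟨z, hz⟩, rfl⟩
  · rw [sum_map_weights, Complex.ofReal_sum, ← Finset.sum_coe_sort, hsum, map_sum]
    exact Finset.sum_congr rfl fun z _ => hf _ (hmem z) (e z) rfl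

end IsCuntzTower

namespace IsSimplicialTower

open WeightedFamily

variable {B : Type*} [CStarAlgebra B] {G : AddSubgroup ℝ} {T : ℝ}
  {E : ℕ → WeightedFamily B} {τ : limitAlgebra E →ₗ[ℂ] ℂ} {n : ℕ} {x : B × ℝ}

theorem pos (hE : IsSimplicialTower G T E) (n : ℕ) {s : ℝ} (hs : s ∈ (E n).weights) : 0 < s :=
  hE.isSimplicialChain.pos n s (Multiset.mem_toFinset.2 hs)

theorem mem (hE : IsSimplicialTower G T E) (n : ℕ) {s : ℝ} (hs : s ∈ (E n).weights) : s ∈ G :=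
  hE.isSimplicialChain.mem n s (Multiset.mem_toFinset.2 hs)

theorem total_mem (hE : IsSimplicialTower G T E) : T ∈ G :=
  hE.sum_weights 0 ▸ AddSubmonoid.multiset_sum_mem G.toAddSubmonoid _ fun _ hs => hE.mem 0 hs

variable [Nontrivial B]

-- If `k s < l T`, then `l T - k s` is a sum of weights of `E m` for large `m`, so in the limit
-- algebra `k` copies of `v v*` embed in `l` copies of the unit.
theorem nsmul_map_mul_star_le (hE : IsSimplicialTower G T E)
    (hτ : IsTracialState (limitAlgebra E) τ) (hx : x ∈ E n) {a : limitAlgebra E}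
    (ha : (a : B) = x.1 * star x.1) {k l : ℕ} (hkl : k • x.2 < l • T) :
    (k : ℂ) * τ a ≤ l := by
  obtain ⟨m', hm'⟩ := hE.isSimplicialChain.exists_mem_closure (l • T - k • x.2)
    (sub_mem (nsmul_mem hE.total_mem l) (nsmul_mem (hE.mem n (snd_mem_weights hx)) k))
    (sub_pos.2 hkl)
  let m := max n m'
  obtain ⟨f, hf₀, hf⟩ := hE.toIsCuntzTower.exists_map_mul_star_eq hτ m
  obtain ⟨P, hP, hPx, haP⟩ :=
    hE.toIsCuntzTower.exists_map_eq_sum_map (le_max_left n m') hf hx ha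
  have hle : k • P ≤ l • (E m).weights := by
    refine le_of_sum_sub_sum_mem_closure (hE.isSimplicialChain.linearIndepOn m)
      (fun s hs => Multiset.mem_toFinset.2 (hP s (Multiset.mem_of_mem_nsmul hs)))
      (fun s hs => Multiset.mem_toFinset.2 (Multiset.mem_of_mem_nsmul hs)) ?_
    rw [Multiset.sum_nsmul, Multiset.sum_nsmul, hE.sum_weights, hPx]
    exact hE.isSimplicialChain.monotone_closure (le_max_right n m') hm'
  obtain ⟨D, hD⟩ := Multiset.le_iff_exists_add.1 hle
  have hsum := congrArg (fun Q => (Q.map f).sum) hD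
  simp only [Multiset.map_add, Multiset.map_nsmul, Multiset.sum_add, Multiset.sum_nsmul,
    hE.sum_map_weights_eq_one hτ hf, nsmul_eq_mul, mul_one] at hsum
  have hD₀ : 0 ≤ (D.map f).sum := Multiset.sum_nonneg fun r hr => by
    obtain ⟨s, -, rfl⟩ := Multiset.mem_map.1 hr
    exact hf₀ s
  rw [haP]
  exact_mod_cast (by linarith : k * (P.map f).sum ≤ (l : ℝ))

theorem map_mul_star_eq_div (hE : IsSimplicialTower G T E)
    (hτ : IsTracialState (limitAlgebra E) τ) (hx : x ∈ E n) {a : limitAlgebra E}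
    (ha : (a : B) = x.1 * star x.1) : τ a = (x.2 / T : ℝ) := by
  have hT₀ : 0 < T := hE.total_pos fun s hs => hE.pos 0 hs
  obtain ⟨f, -, hf⟩ := hE.toIsCuntzTower.exists_map_mul_star_eq hτ n
  have hle (y : B × ℝ) (hy : y ∈ E n) : f y.2 ≤ y.2 / T := by
    by_contra! hlt
    obtain ⟨q, hq, hq'⟩ := exists_rat_btwn hlt
    have hq₀ : 0 < q := by
      exact_mod_cast (div_pos (hE.pos n (snd_mem_weights hy)) hT₀).trans hq
    obtain ⟨l, hl⟩ := Int.eq_ofNat_of_zero_le (Rat.num_nonneg.2 hq₀.le)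
    have hden : (0 : ℝ) < q.den := by exact_mod_cast q.den_pos
    have hql : (q : ℝ) * q.den = l := by exact_mod_cast hl ▸ Rat.mul_den_eq_num q
    have hle := hE.nsmul_map_mul_star_le hτ hy (k := q.den) (l := l)
      (a := ⟨_, blockAlgebra_le_limitAlgebra E n (mul_star_mem_blockAlgebra hy hy rfl)⟩) rfl (by
        rw [nsmul_eq_mul, nsmul_eq_mul, ← hql, mul_comm (q : ℝ), mul_assoc]
        exact mul_lt_mul_of_pos_left ((div_lt_iff₀ hT₀).1 hq) hden)
    rw [hf y hy _ rfl] at hle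
    have hle' : (q.den : ℝ) * f y.2 ≤ l := by exact_mod_cast hle
    rw [← hql, mul_comm] at hle'
    exact hq'.not_ge (le_of_mul_le_mul_right hle' hden)
  have hsum : ∑ y ∈ E n, f y.2 = ∑ y ∈ E n, y.2 / T := by
    rw [← sum_map_weights, hE.sum_map_weights_eq_one hτ hf, ← Finset.sum_div,
      ← WeightedFamily.sum_weights, hE.sum_weights, div_self hT₀.ne']
  rw [hf x hx a ha, (Finset.sum_eq_sum_iff_of_le hle).1 hsum x hx]

theorem mul_map_eq_blockTrace (hE : IsSimplicialTower G T E)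
    (hτ : IsTracialState (limitAlgebra E) τ) {ω : B →ₗ[ℂ] ℂ} (hω : ω 1 = 1) {b : limitAlgebra E}
    (hb : (b : B) ∈ (E n).blockAlgebra) : T * τ b = (E n).blockTrace ω b := by
  have hcuntz := hE.isCuntz n
  have hmem {a : B} (ha : a ∈ Submodule.span ℂ (E n).matrixUnits) : a ∈ limitAlgebra E :=
    blockAlgebra_le_limitAlgebra E n (hcuntz.mem_blockAlgebra.2 ha)
  have hT₀ : (T : ℂ) ≠ 0 := by exact_mod_cast (hE.total_pos fun s hs => hE.pos 0 hs).ne'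
  suffices ∀ (a : B) (ha : a ∈ Submodule.span ℂ (E n).matrixUnits),
      T * τ ⟨a, hmem ha⟩ = (E n).blockTrace ω a from this b (hcuntz.mem_blockAlgebra.1 hb)
  intro a ha
  induction ha using Submodule.span_induction with
  | mem a ha =>
    obtain ⟨x, hx, y, hy, -, rfl⟩ := ha
    have htrace := hcuntz.blockTrace_mul_star_mul (ω := ω) hx y.1 1
    rw [mul_one, mul_one] at htrace
    rw [htrace]
    by_cases hxy : x = y
    · subst hxy
      rw [hE.map_mul_star_eq_div hτ hx rfl, hcuntz.star_mul_self x hx, hω, mul_one,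
        Complex.ofReal_div, mul_div_cancel₀ _ hT₀]
    · rw [hE.map_mul_star_eq_zero hτ hx hy hxy rfl, hcuntz.star_mul_of_ne y hy x hx (Ne.symm hxy),
        map_zero, mul_zero, mul_zero]
  | zero => rw [map_zero, show (⟨0, _⟩ : limitAlgebra E) = 0 from rfl, map_zero, mul_zero]
  | add a b ha hb iha ihb =>
    rw [map_add, ← iha, ← ihb, ← mul_add, ← map_add]
    rfl
  | smul c a ha iha =>
    rw [map_smul, ← iha, smul_eq_mul, mul_left_comm, ← smul_eq_mul c, ← map_smul]
    rfl

theorem isTracialState_unique (hE : IsSimplicialTower G T E) {σ : limitAlgebra E →ₗ[ℂ] ℂ}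
    (hτ : IsTracialState (limitAlgebra E) τ) (hσ : IsTracialState (limitAlgebra E) σ) :
    σ = τ := by
  obtain ⟨ω, -, hω⟩ := exists_dual_vector' ℂ (1 : B)
  rw [CStarRing.norm_one, RCLike.ofReal_one] at hω
  have hT₀ : (T : ℂ) ≠ 0 := by exact_mod_cast (hE.total_pos fun s hs => hE.pos 0 hs).ne'
  refine LinearMap.ext fun x => hE.isClosed_induction (p := fun x => σ x = τ x)
    (isClosed_eq hσ.continuous hτ.continuous) (fun n x hx => mul_left_cancel₀ hT₀ ?_) x
  rw [hE.mul_map_eq_blockTrace hσ (ω := (ω : B →ₗ[ℂ] ℂ)) hω hx,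
    hE.mul_map_eq_blockTrace hτ (ω := (ω : B →ₗ[ℂ] ℂ)) hω hx]

end IsSimplicialTower

/-! ### Simplicity of limit algebras -/

theorem mem_twoSidedIdeal_of_norm_sub_lt_one {A : Type*} [NormedRing A] [CompleteSpace A]
    {I : TwoSidedIdeal A} {e a : A} (he : IsIdempotentElem e) (ha : a ∈ I) (h : ‖e - a‖ < 1) :
    e ∈ I := by
  obtain ⟨r, hr⟩ := (isUnit_one_sub_of_norm_lt_one h).exists_right_inv
  have her : e = e * a * r := by
    calc e = e * ((1 - (e - a)) * r) := by rw [hr, mul_one]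
      _ = (e - e * e + e * a) * r := by noncomm_ring
      _ = e * a * r := by rw [he.eq, sub_self, zero_add]
  exact her ▸ I.mul_mem_right _ _ (I.mul_mem_left _ _ ha)

theorem exists_ne_zero_star_mul_self_mul_eq {A : Type*} [CStarAlgebra A] [Nontrivial A]
    [FiniteDimensional ℂ A] (d : A) :
    ∃ u : A, u ≠ 0 ∧ star d * d * u = ((‖d‖ ^ 2 : ℝ) : ℂ) • u := by
  let _ := CStarAlgebra.spectralOrder A
  have := CStarAlgebra.spectralOrderedRing A
  have : IsArtinianRing A := IsArtinianRing.of_finite ℂ A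
  have hspec := CStarAlgebra.norm_mem_spectrum_of_nonneg (star_mul_self_nonneg d)
  rw [spectrum.mem_iff, IsArtinianRing.isUnit_iff_isRightRegular,
    isRightRegular_iff_left_eq_zero_of_mul] at hspec
  push Not at hspec
  obtain ⟨w, hw, hw₀⟩ := hspec
  refine ⟨star w, star_ne_zero.2 hw₀, ?_⟩
  have hstar := congrArg star hw
  rw [mul_sub, star_zero, star_sub, sub_eq_zero, star_mul, star_mul, star_mul, star_star,
    CStarRing.norm_star_mul_self, ← sq, Algebra.algebraMap_eq_smul_one, star_smul, star_trivial,
    star_one, smul_one_mul] at hstar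
  exact hstar.symm

namespace WeightedFamily

variable {B : Type*} [CStarAlgebra B] [Nontrivial B] {E : WeightedFamily B}

theorem IsCuntz.exists_star_mul_self_mul_eq (hE : E.IsCuntz) {d : B} (hd : d ∈ E.blockAlgebra) :
    ∃ x ∈ E, ∃ y : B, y * star x.1 ∈ E.blockAlgebra ∧ star y * y = 1 ∧
      star d * d * y = ((‖d‖ ^ 2 : ℝ) : ℂ) • y := by
  have : IsClosed (E.blockAlgebra : Set B) := hE.isClosed_blockAlgebra
  have := hE.finiteDimensional_blockAlgebra
  obtain ⟨⟨u, hu⟩, hu₀, hdu⟩ := exists_ne_zero_star_mul_self_mul_eq (⟨d, hd⟩ : E.blockAlgebra)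
  replace hdu : star d * d * u = ((‖d‖ ^ 2 : ℝ) : ℂ) • u := congrArg Subtype.val hdu
  obtain ⟨x, hx, hux⟩ : ∃ x ∈ E, u * x.1 ≠ 0 := by
    by_contra! h
    exact hu₀ (Subtype.ext (hE.eq_of_forall_mul_eq fun x hx => by simp [h x hx]))
  obtain ⟨c, hc, -⟩ := hE.exists_star_mul_mul_eq_smul_one hx hx (mul_mem (star_mem hu) hu)
  have hcu : star (u * x.1) * (u * x.1) = c • 1 := by
    rw [← hc, star_mul]
    simp only [mul_assoc]
  obtain ⟨r, hr, rfl⟩ := RCLike.nonneg_iff_exists_ofReal.1 (nonneg_of_star_mul_self_eq_smul_one hcu)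
  have hr₀ : r ≠ 0 := by
    rintro rfl
    exact hux (CStarRing.star_mul_self_eq_zero_iff _ |>.1 (by simpa using hcu))
  refine ⟨x, hx, (√r)⁻¹ • (u * x.1), ?_, ?_, ?_⟩
  · rw [smul_mul_assoc, mul_assoc]
    exact (E.blockAlgebra.toSubalgebra.restrictScalars ℝ).smul_mem
      (mul_mem hu (mul_star_mem_blockAlgebra hx hx rfl)) _
  · rw [star_smul, star_trivial, smul_mul_smul_comm, hcu, ← mul_inv, Real.mul_self_sqrt hr,
      RCLike.ofReal_eq_complex_ofReal, Complex.coe_smul, smul_smul, inv_mul_cancel₀ hr₀, one_smul]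
  · rw [mul_smul_comm, ← mul_assoc, hdu, smul_mul_assoc, smul_comm]

theorem IsCuntz.exists_norm_mul_star_sub_lt_one (hE : E.IsCuntz) {d b : B}
    (hd : d ∈ E.blockAlgebra) (hdb : ‖star d * d - b‖ < ‖d‖ ^ 2) :
    ∃ x ∈ E, ∃ u ∈ E.blockAlgebra, ∃ v ∈ E.blockAlgebra, ‖x.1 * star x.1 - u * b * v‖ < 1 := by
  have hd₀ : 0 < ‖d‖ ^ 2 := (norm_nonneg _).trans_lt hdb
  obtain ⟨x, hx, y, hyx, hy, hdy⟩ := hE.exists_star_mul_self_mul_eq hd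
  have hv : ‖y * star x.1‖ ≤ 1 := by
    refine (norm_mul_le _ _).trans (mul_le_one₀ (norm_le_one_of_star_mul_self_eq_one hy)
      (norm_nonneg _) ?_)
    exact (norm_star x.1).trans_le (norm_le_one_of_star_mul_self_eq_one (hE.star_mul_self x hx))
  have hvd : star (y * star x.1) * (star d * d) * (y * star x.1) =
      ‖d‖ ^ 2 • (x.1 * star x.1) := by
    rw [star_mul, star_star, mul_assoc, ← mul_assoc (star d * d), hdy, Complex.coe_smul,
      smul_mul_assoc, mul_smul_comm, mul_assoc, ← mul_assoc (star y), hy, one_mul]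
  refine ⟨x, hx, (‖d‖ ^ 2)⁻¹ • star (y * star x.1), ?_, _, hyx, ?_⟩
  · have : star (y * star x.1) ∈ E.blockAlgebra := star_mem hyx
    exact (E.blockAlgebra.toSubalgebra.restrictScalars ℝ).smul_mem this _
  calc ‖x.1 * star x.1 - ((‖d‖ ^ 2)⁻¹ • star (y * star x.1)) * b * (y * star x.1)‖
      = (‖d‖ ^ 2)⁻¹ * ‖star (y * star x.1) * (star d * d - b) * (y * star x.1)‖ := by
        rw [← norm_smul_of_nonneg (inv_nonneg.2 hd₀.le), mul_sub, sub_mul, smul_sub, hvd,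
          inv_smul_smul₀ hd₀.ne', smul_mul_assoc, smul_mul_assoc]
    _ ≤ (‖d‖ ^ 2)⁻¹ * (1 * ‖star d * d - b‖ * 1) := by
        gcongr
        refine (norm_mul_le _ _).trans ?_
        gcongr
        refine (norm_mul_le _ _).trans ?_
        gcongr
        exact (norm_star _).trans_le hv
    _ < 1 := by
        rw [one_mul, mul_one]
        exact (inv_mul_lt_one₀ hd₀).2 hdb

end WeightedFamily

namespace IsSimplicialTower

open WeightedFamily

variable {B : Type*} [CStarAlgebra B] [Nontrivial B] {G : AddSubgroup ℝ} {T : ℝ}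
  {E : ℕ → WeightedFamily B} {n : ℕ} {x : B × ℝ}

theorem one_mem_of_mul_star_mem (hE : IsSimplicialTower G T E)
    {I : TwoSidedIdeal (limitAlgebra E)} (hx : x ∈ E n) {a : limitAlgebra E}
    (ha : (a : B) = x.1 * star x.1) (haI : a ∈ I) : 1 ∈ I := by
  obtain ⟨k, hk⟩ := exists_nat_gt (T / x.2)
  rw [div_lt_iff₀ (hE.pos n (snd_mem_weights hx)), ← nsmul_eq_mul] at hk
  obtain ⟨m', hm'⟩ := hE.isSimplicialChain.exists_mem_closure (k • x.2 - T)
    (sub_mem (nsmul_mem (hE.mem n (snd_mem_weights hx)) k) hE.total_mem) (sub_pos.2 hk)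
  let m := max n m'
  obtain ⟨ρ, hρ, hm⟩ := hE.toIsCuntzTower.refines (le_max_left n m')
  have hmem {z : B × ℝ} (hz : z ∈ ρ x.2) : (x.1 * z.1, z.2) ∈ E m :=
    (congrArg (_ ∈ ·) hm).mpr (mul_mem_subst hx hz)
  have hle : (E m).weights ≤ k • (ρ x.2).weights := by
    refine le_of_sum_sub_sum_mem_closure (hE.isSimplicialChain.linearIndepOn m)
      (fun s hs => Multiset.mem_toFinset.2 hs) (fun s hs => Multiset.mem_toFinset.2 ?_) ?_
    · obtain ⟨z, hz, rfl⟩ := mem_weights.1 (Multiset.mem_of_mem_nsmul hs)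
      exact mem_weights.2 ⟨_, hmem hz, rfl⟩
    · rw [Multiset.sum_nsmul, hE.sum_weights, (hρ x hx).2]
      exact hE.isSimplicialChain.monotone_closure (le_max_right n m') hm'
  have hunit (y : E m) : (⟨_, blockAlgebra_le_limitAlgebra E m
      (mul_star_mem_blockAlgebra y.2 y.2 rfl)⟩ : limitAlgebra E) ∈ I := by
    obtain ⟨z, hz, hzy⟩ := mem_weights.1
      (Multiset.mem_of_mem_nsmul (Multiset.mem_of_le hle (snd_mem_weights y.2)))
    have hu := blockAlgebra_le_limitAlgebra E m (mul_star_mem_blockAlgebra y.2 (hmem hz) hzy.symm)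
    convert I.mul_mem_right _ ⟨_, star_mem hu⟩ (I.mul_mem_left ⟨_, hu⟩ _ haI) using 1
    refine Subtype.ext ?_
    change _ = y.1.1 * star (x.1 * z.1) * (a : B) * star (y.1.1 * star (x.1 * z.1))
    have hxz : x.1 * star x.1 * (x.1 * z.1) = x.1 * z.1 := by
      rw [mul_assoc, ← mul_assoc (star x.1), (hE.isCuntz n).star_mul_self x hx, one_mul]
    rw [star_mul y.1.1, star_star, ha, mul_assoc, ← mul_assoc (x.1 * star x.1), hxz, mul_assoc,
      ← mul_assoc (star (x.1 * z.1)), (hE.isCuntz m).star_mul_self _ (hmem hz), one_mul]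
  rw [show (1 : limitAlgebra E) = ∑ y : E m, ⟨_, blockAlgebra_le_limitAlgebra E m
      (mul_star_mem_blockAlgebra y.2 y.2 rfl)⟩ from Subtype.ext ?_]
  · exact sum_mem fun y _ => hunit y
  · rw [AddSubmonoidClass.coe_finsetSum]
    exact (hE.isCuntz m).sum_coe_mul_star.symm

theorem isSimpleCStarAlgebra (hE : IsSimplicialTower G T E) :
    IsSimpleCStarAlgebra (limitAlgebra E) := by
  refine fun I _ => or_iff_not_imp_left.2 fun hI => I.one_mem_iff.1 ?_
  obtain ⟨a, haI, ha₀⟩ : ∃ a ∈ I, a ≠ 0 := by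
    by_contra! h
    exact hI (TwoSidedIdeal.ext fun a => ⟨h a, fun h => h ▸ zero_mem _⟩)
  obtain ⟨n, d, hd, had⟩ := hE.toIsCuntzTower.exists_mem_blockAlgebra_of_isOpen
    (isOpen_lt (f := fun d : B => ‖star d * d - star (a : B) * a‖) (g := fun d => ‖d‖ ^ 2)
      (by fun_prop) (by fun_prop)) a.2 (by simpa [sq_pos_iff] using ha₀)
  obtain ⟨x, hx, u, hu, v, hv, huv⟩ := (hE.isCuntz n).exists_norm_mul_star_sub_lt_one hd had
  have hle := blockAlgebra_le_limitAlgebra E n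
  refine hE.one_mem_of_mul_star_mem hx
    (a := ⟨_, hle (mul_star_mem_blockAlgebra hx hx rfl)⟩) rfl
    (mem_twoSidedIdeal_of_norm_sub_lt_one (Subtype.ext ?_)
      (I.mul_mem_right _ ⟨v, hle hv⟩ (I.mul_mem_left ⟨u, hle hu⟩ _ (I.mul_mem_left (star a) _ haI)))
      huv)
  change x.1 * star x.1 * (x.1 * star x.1) = x.1 * star x.1
  rw [mul_assoc, ← mul_assoc (star x.1), (hE.isCuntz n).star_mul_self x hx, one_mul]

end IsSimplicialTower

/-! ### Traces of projections -/

section StarAlgebra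

variable {A : Type*} [CStarAlgebra A]

theorem exists_isStarProjection_norm_sub_le {a : A} (ha : IsSelfAdjoint a)
    (h : ‖a * a - a‖ < 4⁻¹) :
    ∃ q : A, IsStarProjection q ∧ ‖q - a‖ ≤ 2 * ‖a * a - a‖ := by
  have hspec : ∀ t ∈ spectrum ℝ a, |t * t - t| ≤ ‖a * a - a‖ := fun t ht => by
    have := norm_apply_le_norm_cfc (fun t : ℝ => t * t - t) a ht
    rwa [cfc_sub (fun t : ℝ => t * t) (fun t => t) a, cfc_mul (fun t : ℝ => t) (fun t => t) a,
      cfc_id' ℝ a] at this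
  have hcont : ContinuousOn (fun t : ℝ => if 2⁻¹ < t then (1 : ℝ) else 0) (spectrum ℝ a) := by
    refine ContinuousOn.if (fun t ht => ?_) continuousOn_const continuousOn_const
    obtain ⟨ht, htf⟩ := ht
    have : t = 2⁻¹ := by simpa [frontier_Ioi] using (show t ∈ frontier (Set.Ioi (2⁻¹ : ℝ)) from htf)
    have := (hspec t ht).trans_lt h
    norm_num [*] at this
  refine ⟨cfc (fun t : ℝ => if 2⁻¹ < t then 1 else 0) a, ⟨?_, cfc_predicate _ a⟩, ?_⟩
  · rw [IsIdempotentElem, ← cfc_mul _ _ a hcont hcont]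
    exact cfc_congr fun t _ => by simp
  · nth_rw 2 [← cfc_id' ℝ a]
    rw [← cfc_sub _ _ a hcont]
    refine norm_cfc_le (by positivity) fun t ht => le_trans ?_
      (mul_le_mul_of_nonneg_left (hspec t ht) zero_le_two)
    rw [show t * t - t = t * (t - 1) by ring, abs_mul, Real.norm_eq_abs]
    split_ifs with h
    · rw [abs_sub_comm, abs_of_pos (by linarith : 0 < t)]
      nlinarith [abs_nonneg (t - 1)]
    · rw [zero_sub, abs_neg, abs_of_nonpos (by linarith : t - 1 ≤ 0)]
      nlinarith [abs_nonneg t]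

theorem exists_unit_mul_eq_mul_of_norm_sub_lt_one {p q : A} (hp : IsStarProjection p)
    (hq : IsIdempotentElem q) (h : ‖p - q‖ < 1) : ∃ z : Aˣ, p * z = z * q := by
  have hz : ‖(2 * p - 1) * (p - q)‖ < 1 := by
    nontriviality A
    refine (norm_mul_le _ _).trans_lt ?_
    rwa [CStarRing.norm_of_mem_unitary hp.two_mul_sub_one_mem_unitary, one_mul]
  refine ⟨Units.oneSub _ hz, ?_⟩
  have hpp : p * p = p := hp.isIdempotentElem
  rw [Units.val_oneSub]
  calc p * (1 - (2 * p - 1) * (p - q)) = p - 2 * (p * p) * p + 2 * (p * p) * q + p * p - p * q := by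
        noncomm_ring
    _ = p * q := by rw [hpp, mul_assoc, hpp]; noncomm_ring
    _ = (1 - 2 * (p * p) + p) * q + (2 * p - 1) * (q * q) := by rw [hpp, hq.eq]; noncomm_ring
    _ = (1 - (2 * p - 1) * (p - q)) * q := by noncomm_ring

end StarAlgebra

theorem exists_trace_eq_natCast_of_isIdempotentElem {K ι : Type*} [Field K] [Fintype ι]
    {M : Matrix ι ι K} (hM : IsIdempotentElem M) : ∃ m : ℕ, M.trace = m := by
  classical
  have h : IsIdempotentElem (Matrix.toLin' M) := by
    rw [IsIdempotentElem, Module.End.mul_eq_comp, ← Matrix.toLin'_mul, hM.eq]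
  rw [← Matrix.trace_toLin'_eq]
  exact ⟨_, (LinearMap.IsIdempotentElem.isProj_range _ h).trace⟩

theorem sum_mul_diag_mem_of_isIdempotentElem {K ι : Type*} [Field K] [Fintype ι]
    {G : AddSubgroup K} {w : ι → K} (hw : ∀ i, w i ∈ G) {M : Matrix ι ι K}
    (hM : IsIdempotentElem M) (hwM : ∀ i j, w i ≠ w j → M i j = 0) :
    ∑ i, w i * M i i ∈ G := by
  classical
  let N (s : K) : Matrix ι ι K := .of fun i j => if w i = s then M i j else 0
  have hN (s : K) : IsIdempotentElem (N s) := by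
    ext i j
    simp only [N, Matrix.mul_apply, Matrix.of_apply, ite_mul, zero_mul]
    split_ifs with hi
    · nth_rw 3 [← hM.eq]
      refine Finset.sum_congr rfl fun k _ => ?_
      split_ifs with hk
      · rfl
      · simp [hwM i k fun h => hk (h ▸ hi)]
    · exact Finset.sum_const_zero
  choose m hm using fun s => exists_trace_eq_natCast_of_isIdempotentElem (hN s)
  have hsum : ∑ i, w i * M i i = ∑ s ∈ Finset.univ.image w, m s • s := by
    calc ∑ i, w i * M i i = ∑ i, ∑ s ∈ Finset.univ.image w, (if w i = s then M i i else 0) * s := by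
          refine Finset.sum_congr rfl fun i _ => ?_
          simp [mul_comm]
      _ = ∑ s ∈ Finset.univ.image w, m s • s := by
          rw [Finset.sum_comm]
          simp only [← Finset.sum_mul, nsmul_eq_mul, ← hm, N, Matrix.trace, Matrix.diag,
            Matrix.of_apply]
  rw [hsum]
  refine sum_mem fun s hs => nsmul_mem ?_ _
  obtain ⟨i, -, rfl⟩ := Finset.mem_image.1 hs
  exact hw i

namespace WeightedFamily

variable {B : Type*} [Ring B] [StarRing B] [Algebra ℂ B] [StarModule ℂ B] [Nontrivial B]
  {E : WeightedFamily B} {G : AddSubgroup ℝ} {ω : B →ₗ[ℂ] ℂ}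

theorem IsCuntz.exists_blockTrace_eq_of_isIdempotentElem (hE : E.IsCuntz)
    (hG : ∀ s ∈ E.weights, s ∈ G) (hω : ω 1 = 1) {q : B} (hq : q ∈ E.blockAlgebra)
    (hqq : IsIdempotentElem q) : ∃ g ∈ G, E.blockTrace ω q = (g : ℂ) := by
  choose c hc hc₀ using fun x y : E => hE.exists_star_mul_mul_eq_smul_one x.2 y.2 hq
  have hcc : IsIdempotentElem (Matrix.of c) := by
    ext x y
    rw [Matrix.mul_apply]
    refine smul_left_injective ℂ (one_ne_zero (α := B)) ?_
    calc (∑ z, c x z * c z y) • (1 : B)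
        = ∑ z : E, star x.1.1 * q * z.1.1 * (star z.1.1 * q * y.1.1) := by
          simp only [hc, smul_mul_smul_comm, mul_one, Finset.sum_smul]
      _ = star x.1.1 * q * (∑ z : E, z.1.1 * star z.1.1) * q * y.1.1 := by
          simp only [Finset.mul_sum, Finset.sum_mul, mul_assoc]
      _ = c x y • 1 := by
          rw [hE.sum_coe_mul_star, mul_one, mul_assoc (star x.1.1), hqq.eq, hc]
  obtain ⟨g, hg, hgc⟩ := sum_mul_diag_mem_of_isIdempotentElem
    (G := G.map (Complex.ofRealHom : ℝ →+ ℂ)) (w := fun x : E => (x.1.2 : ℂ))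
    (fun x => ⟨_, hG _ (snd_mem_weights x.2), rfl⟩) hcc
    fun x y hxy => hc₀ x y fun h => hxy (congrArg _ h)
  refine ⟨g, hg, ?_⟩
  rw [blockTrace_apply, ← Finset.sum_coe_sort]
  refine Eq.trans (Finset.sum_congr rfl fun x _ => ?_) hgc.symm
  simp [hc, hω]

end WeightedFamily

namespace IsSimplicialTower

open WeightedFamily

variable {B : Type*} [CStarAlgebra B] [Nontrivial B] {G : AddSubgroup ℝ} {T : ℝ}
  {E : ℕ → WeightedFamily B} {τ : limitAlgebra E →ₗ[ℂ] ℂ}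

theorem exists_total_mul_map_eq_of_isStarProjection (hE : IsSimplicialTower G T E)
    (hτ : IsTracialState (limitAlgebra E) τ) {p : limitAlgebra E} (hp : IsStarProjection p) :
    ∃ g ∈ G, T * τ p = (g : ℂ) := by
  obtain ⟨n, d, hd, hdp⟩ := hE.toIsCuntzTower.exists_mem_blockAlgebra_of_isOpen
    (isOpen_lt (f := fun d : B => ‖(p : B) - star d * d‖ +
      4 * ‖star d * d * (star d * d) - star d * d‖) (g := fun _ => 1) (by fun_prop) (by fun_prop))
    p.2 (by
      have hpp : star (p : B) * p = p := congrArg Subtype.val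
        (hp.isSelfAdjoint.star_eq.symm ▸ hp.isIdempotentElem.eq : star p * p = p)
      have hpp' : (p : B) * p = p := congrArg Subtype.val hp.isIdempotentElem.eq
      simp [hpp, hpp'])
  have : IsClosed ((E n).blockAlgebra : Set B) := (hE.isCuntz n).isClosed_blockAlgebra
  let a : (E n).blockAlgebra := star ⟨d, hd⟩ * ⟨d, hd⟩
  replace hdp : ‖(p : B) - a‖ + 4 * ‖a * a - a‖ < 1 := hdp
  obtain ⟨q, hq, hqa⟩ := exists_isStarProjection_norm_sub_le (.star_mul_self _ : IsSelfAdjoint a)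
    (by linarith [norm_nonneg ((p : B) - a)])
  let q' : limitAlgebra E := ⟨q, blockAlgebra_le_limitAlgebra E n q.2⟩
  have hpq : ‖p - q'‖ < 1 := by
    calc ‖p - q'‖ = ‖(p : B) - q‖ := rfl
      _ ≤ ‖(p : B) - a‖ + ‖(a : B) - q‖ := norm_sub_le_norm_sub_add_norm_sub _ _ _
      _ = ‖(p : B) - a‖ + ‖q - a‖ := by rw [norm_sub_rev (a : B)]; rfl
      _ < 1 := by linarith [norm_nonneg (a * a - a)]
  have hqq : IsIdempotentElem (q : B) := congrArg Subtype.val hq.isIdempotentElem.eq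
  obtain ⟨z, hz⟩ := exists_unit_mul_eq_mul_of_norm_sub_lt_one hp
    (Subtype.ext hqq : IsIdempotentElem q') hpq
  have hτpq : τ p = τ q' := by
    calc τ p = τ (p * z * ↑z⁻¹) := by rw [Units.mul_inv_cancel_right]
      _ = τ q' := by rw [hτ.tracial, hz, Units.inv_mul_cancel_left]
  obtain ⟨ω, -, hω⟩ := exists_dual_vector' ℂ (1 : B)
  rw [CStarRing.norm_one, RCLike.ofReal_one] at hω
  rw [hτpq, hE.mul_map_eq_blockTrace hτ (ω := (ω : B →ₗ[ℂ] ℂ)) hω q.2]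
  exact (hE.isCuntz n).exists_blockTrace_eq_of_isIdempotentElem (fun s hs => hE.mem n hs) hω q.2 hqq

end IsSimplicialTower

/-! ### Moving towers by isometries -/

namespace WeightedFamily

section MulMapsTo

variable {B : Type*} [Monoid B] [Zero B] {D E F H : WeightedFamily B} {u v : B}

/-- Left multiplication by `u` either kills a member of `E` or turns it into a member of `F` of the
same weight. -/
def MulMapsTo (u : B) (E F : WeightedFamily B) : Prop :=
  ∀ x ∈ E, u * x.1 = 0 ∨ (u * x.1, x.2) ∈ F

theorem mulMapsTo_subst {x : B × ℝ} (hx : x ∈ D) (ρ : ℝ → WeightedFamily B) :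
    MulMapsTo x.1 (ρ x.2) (D.subst ρ) :=
  fun _ hy => .inr (mul_mem_subst hx hy)

end MulMapsTo

section Ring

variable {B : Type*} [Ring B] {E F H : WeightedFamily B} {u v : B}

theorem MulMapsTo.mul (hv : MulMapsTo v F H) (hu : MulMapsTo u E F) : MulMapsTo (v * u) E H := by
  intro x hx
  rw [mul_assoc]
  rcases hu x hx with h | h
  · exact .inl (by rw [h, mul_zero])
  · exact hv _ h

variable [StarRing B] {D : WeightedFamily B}

theorem IsCuntz.mulMapsTo_star_subst (hD : D.IsCuntz) {x : B × ℝ} (hx : x ∈ D)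
    (ρ : ℝ → WeightedFamily B) : MulMapsTo (star x.1) (D.subst ρ) (ρ x.2) := by
  intro z hz
  obtain ⟨x', hx', y, hy, rfl⟩ := mem_subst.1 hz
  by_cases h : x = x'
  · subst h
    exact .inr (by rwa [← mul_assoc, hD.star_mul_self x hx, one_mul])
  · exact .inl (by rw [← mul_assoc, hD.star_mul_of_ne x hx x' hx' h, zero_mul])

theorem IsCuntz.mulMapsTo_mul_star_subst (hD : D.IsCuntz) {x y : B × ℝ} (hx : x ∈ D) (hy : y ∈ F)
    (hyx : y.2 = x.2) (ρ : ℝ → WeightedFamily B) :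
    MulMapsTo (y.1 * star x.1) (D.subst ρ) (F.subst ρ) :=
  .mul (mulMapsTo_subst hy ρ) (hyx ▸ hD.mulMapsTo_star_subst hx ρ)

variable [Algebra ℂ B] [StarModule ℂ B]

theorem MulMapsTo.mul_mul_star_mem_blockAlgebra (hE : E.IsCuntz)
    (hu : MulMapsTo u E F) (hv : MulMapsTo v E F) {b : B} (hb : b ∈ E.blockAlgebra) :
    u * b * star v ∈ F.blockAlgebra := by
  rw [hE.mem_blockAlgebra] at hb
  induction hb using Submodule.span_induction with
  | mem b hb =>
    obtain ⟨x, hx, y, hy, hxy, rfl⟩ := hb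
    have heq : u * (x.1 * star y.1) * star v = u * x.1 * star (v * y.1) := by
      simp only [star_mul, mul_assoc]
    rw [heq]
    rcases hu x hx with hux | hux
    · simp [hux]
    rcases hv y hy with hvy | hvy
    · simp [hvy]
    exact mul_star_mem_blockAlgebra hux hvy hxy
  | zero => simp
  | add a b _ _ ha hb => simpa only [mul_add, add_mul] using add_mem ha hb
  | smul c b _ hb => simpa only [mul_smul_comm, smul_mul_assoc] using SMulMemClass.smul_mem c hb

/-- If conjugating with the isometries of a Cuntz family `D` exchanges `A'` with the matrices over
`A`, then `A'` is the algebra of matrices over `A` indexed by `D`. -/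
noncomputable def IsCuntz.matrixStarAlgEquiv (hD : D.IsCuntz) {A A' : StarSubalgebra ℂ B}
    (hA : ∀ x ∈ D, ∀ y ∈ D, ∀ a ∈ A', star x.1 * a * y.1 ∈ A)
    (hA' : ∀ x ∈ D, ∀ y ∈ D, ∀ a ∈ A, x.1 * a * star y.1 ∈ A') : A' ≃⋆ₐ[ℂ] Matrix D D A where
  toFun a := .of fun x y => ⟨star x.1.1 * a * y.1.1, hA x x.2 y y.2 a a.2⟩
  invFun M := ⟨∑ x : D, ∑ y : D, x.1.1 * M x y * star y.1.1,
    sum_mem fun x _ => sum_mem fun y _ => hA' x x.2 y y.2 _ (M x y).2⟩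
  left_inv a := Subtype.ext <| by
    calc ∑ x : D, ∑ y : D, x.1.1 * (star x.1.1 * a * y.1.1) * star y.1.1
        = (∑ x : D, x.1.1 * star x.1.1) * a * ∑ y : D, y.1.1 * star y.1.1 := by
          simp only [Finset.sum_mul, Finset.mul_sum, mul_assoc]
          exact Finset.sum_comm
      _ = a := by rw [hD.sum_coe_mul_star, one_mul, mul_one]
  right_inv M := by
    classical
    ext x y
    calc star x.1.1 * (∑ x' : D, ∑ y' : D, x'.1.1 * M x' y' * star y'.1.1) * y.1.1
        = ∑ x' : D, ∑ y' : D, star x.1.1 * x'.1.1 * M x' y' * (star y'.1.1 * y.1.1) := by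
          simp only [Finset.sum_mul, Finset.mul_sum, mul_assoc]
      _ = M x y := by simp [hD.star_mul_eq_ite]
  map_mul' a b := by
    ext x y
    calc star x.1.1 * (a * b) * y.1.1
        = star x.1.1 * a * (∑ z : D, z.1.1 * star z.1.1) * b * y.1.1 := by
          rw [hD.sum_coe_mul_star, mul_one]; simp only [mul_assoc]
      _ = ∑ z : D, star x.1.1 * a * z.1.1 * (star z.1.1 * b * y.1.1) := by
          simp only [Finset.mul_sum, Finset.sum_mul, mul_assoc]
      _ = _ := by rw [Matrix.mul_apply, AddSubmonoidClass.coe_finsetSum]; rfl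
  map_add' a b := by
    ext x y
    exact (congrArg (· * y.1.1) (mul_add _ _ _)).trans (add_mul _ _ _)
  map_star' a := by
    ext x y
    change star x.1.1 * star (a : B) * y.1.1 = star (star y.1.1 * a * x.1.1)
    simp only [star_mul, star_star, mul_assoc]
  map_smul' c a := by
    ext x y
    change star x.1.1 * (c • (a : B)) * y.1.1 = c • (star x.1.1 * a * y.1.1)
    rw [mul_smul_comm, smul_mul_assoc]

end Ring

end WeightedFamily

namespace IsCuntzTower

open WeightedFamily

variable {B : Type*} [CStarAlgebra B] [Nontrivial B] {T : ℝ} {D : WeightedFamily B}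
  {E E' : ℕ → WeightedFamily B} {u v b : B}

theorem mul_mul_star_mem_limitAlgebra (hE : IsCuntzTower T E)
    (hu : ∀ n, MulMapsTo u (E n) (E' n)) (hv : ∀ n, MulMapsTo v (E n) (E' n))
    (hb : b ∈ limitAlgebra E) : u * b * star v ∈ limitAlgebra E' :=
  hE.limitAlgebra_subset_of_isClosed
    ((isClosed_limitAlgebra E').preimage (by fun_prop : Continuous fun b => u * b * star v))
    (fun n _ hb => blockAlgebra_le_limitAlgebra E' n
      ((hu n).mul_mul_star_mem_blockAlgebra (hE.isCuntz n) (hv n) hb)) hb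

theorem subst_const (hE : IsCuntzTower T E) (hD : D.IsCuntz) :
    IsCuntzTower (D.card * T) fun n => D.subst fun _ => E n where
  isCuntz n := hD.subst fun _ _ => hE.isCuntz n
  sum_weights n := by
    rw [WeightedFamily.sum_weights, hD.sum_subst fun _ _ => hE.isCuntz n]
    simp [← WeightedFamily.sum_weights, hE.sum_weights]
  refines_succ n := by
    obtain ⟨ρ, hρ, h⟩ := hE.refines_succ n
    refine ⟨ρ, fun z hz => ?_, by rw [h, subst_subst]⟩
    obtain ⟨x, -, y, hy, rfl⟩ := mem_subst.1 hz
    exact hρ y hy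

theorem nonempty_limitAlgebra_starAlgEquiv_matrix (hE : IsCuntzTower T E) (hD : D.IsCuntz) :
    Nonempty (limitAlgebra (fun n => D.subst fun _ => E n) ≃⋆ₐ[ℂ] Matrix D D (limitAlgebra E)) := by
  refine ⟨hD.matrixStarAlgEquiv (fun x hx y hy a ha => ?_) fun x hx y hy a ha => ?_⟩
  · rw [← star_star y.1]
    exact (hE.subst_const hD).mul_mul_star_mem_limitAlgebra
      (fun n => hD.mulMapsTo_star_subst hx fun _ => E n)
      (fun n => hD.mulMapsTo_star_subst hy fun _ => E n) ha
  · exact hE.mul_mul_star_mem_limitAlgebra (fun n => mulMapsTo_subst hx fun _ => E n)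
      (fun n => mulMapsTo_subst hy fun _ => E n) ha

end IsCuntzTower

section TraceOfMatrices

variable {A : Type*} [CStarAlgebra A] {τ : A →ₗ[ℂ] ℂ} {ι κ : Type*} [Fintype ι] [Fintype κ]

theorem IsTracialState.map_trace_mul_comm (hτ : IsTracialState A τ) (x : Matrix ι κ A)
    (y : Matrix κ ι A) : τ (x * y).trace = τ (y * x).trace := by
  simp only [Matrix.trace, Matrix.diag_apply, Matrix.mul_apply, map_sum]
  rw [Finset.sum_comm]
  exact Finset.sum_congr rfl fun i _ => Finset.sum_congr rfl fun j _ => hτ.tracial _ _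

theorem IsTracialState.map_trace_star_mul_self_nonneg (hτ : IsTracialState A τ)
    (x : Matrix ι κ A) : 0 ≤ τ (xᴴ * x).trace := by
  simp only [Matrix.trace, Matrix.diag_apply, Matrix.mul_apply, map_sum]
  exact Finset.sum_nonneg fun i _ => Finset.sum_nonneg fun j _ => hτ.nonneg _

theorem IsTracialState.exists_card_mul_eq_map_trace {A' : Type*} [CStarAlgebra A'] [Nonempty ι]
    (hτ : IsTracialState A τ) (φ : A' ≃⋆ₐ[ℂ] Matrix ι ι A) :
    ∃ σ, IsTracialState A' σ ∧ ∀ a, Fintype.card ι * σ a = τ (φ a).trace := by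
  classical
  have hι : (Fintype.card ι : ℂ) ≠ 0 := Nat.cast_ne_zero.2 Fintype.card_ne_zero
  let σ : A' →ₗ[ℂ] ℂ :=
    (Fintype.card ι : ℂ)⁻¹ • τ ∘ₗ Matrix.traceLinearMap ι ℂ A ∘ₗ
      IsLinearMap.mk' φ ⟨map_add φ, map_smul φ⟩
  have hσ (a : A') : σ a = (Fintype.card ι : ℂ)⁻¹ * τ (φ a).trace := rfl
  refine ⟨σ, ⟨?_, fun a => ?_, fun a b => ?_⟩, fun a => by rw [hσ, mul_inv_cancel_left₀ hι]⟩
  · have hcard : τ (Fintype.card ι) = Fintype.card ι := by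
      rw [← nsmul_one, map_nsmul, hτ.map_one, nsmul_one]
    rw [hσ, _root_.map_one φ, Matrix.trace_one, hcard, inv_mul_cancel₀ hι]
  · rw [hσ, map_mul, map_star]
    exact mul_nonneg (by positivity) (hτ.map_trace_star_mul_self_nonneg (φ a))
  · rw [hσ, hσ, map_mul, map_mul, hτ.map_trace_mul_comm]

end TraceOfMatrices

namespace IsSimplicialTower

open WeightedFamily

variable {B : Type*} [CStarAlgebra B] [Nontrivial B] {G : AddSubgroup ℝ} {T : ℝ}
  {E : ℕ → WeightedFamily B} {τ : limitAlgebra E →ₗ[ℂ] ℂ}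

theorem exists_total_mul_map_trace_eq_of_isStarProjection (hB : HasCuntzPair B)
    (hE : IsSimplicialTower G T E) (hτ : IsTracialState (limitAlgebra E) τ) {ι : Type*} [Fintype ι]
    {p : Matrix ι ι (limitAlgebra E)} (hp : IsStarProjection p) :
    ∃ g ∈ G, T * τ p.trace = (g : ℂ) := by
  obtain _ | _ := isEmpty_or_nonempty ι
  · exact ⟨0, zero_mem G, by simp [Matrix.trace]⟩
  obtain ⟨D, hD, hDι⟩ := hB.exists_isCuntz_weights_eq (l := .replicate (Fintype.card ι) 1)
    fun h => Fintype.card_ne_zero (α := ι) (by simpa using congrArg Multiset.card h)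
  have hcard : D.card = Fintype.card ι := by simpa [weights] using congrArg Multiset.card hDι
  let e : D ≃ ι := Fintype.equivOfCardEq (by simpa using hcard)
  have hF : IsSimplicialTower G (D.card * T) fun n => D.subst fun _ => E n := by
    refine (hE.toIsCuntzTower.subst_const hD).isSimplicialTower hE.isSimplicialChain
      fun n s hs => ?_
    obtain ⟨-, -, hs⟩ := mem_weights_subst.1 hs
    exact Multiset.mem_toFinset.2 hs
  obtain ⟨φ⟩ := hE.toIsCuntzTower.nonempty_limitAlgebra_starAlgEquiv_matrix hD
  have : Nonempty D := e.nonempty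
  obtain ⟨σ, hσ, hσφ⟩ := hτ.exists_card_mul_eq_map_trace φ
  obtain ⟨Q, hQ⟩ := EquivLike.surjective φ (p.submatrix e e)
  have hQproj : IsStarProjection Q := by
    refine ⟨EquivLike.injective φ ?_, EquivLike.injective φ ?_⟩
    · rw [map_mul, hQ, Matrix.submatrix_mul_equiv, hp.isIdempotentElem.eq]
    · rw [map_star, hQ, Matrix.star_eq_conjTranspose, Matrix.conjTranspose_submatrix,
        ← Matrix.star_eq_conjTranspose, hp.isSelfAdjoint.star_eq]
  obtain ⟨g, hg, h⟩ := hF.exists_total_mul_map_eq_of_isStarProjection hσ hQproj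
  refine ⟨g, hg, ?_⟩
  have htrace : τ p.trace = D.card * σ Q := by
    rw [← Fintype.card_coe, hσφ, hQ]
    exact congrArg τ (e.sum_comp fun i => p i i).symm
  rw [htrace, ← h, Complex.ofReal_mul, Complex.ofReal_natCast]
  ring

end IsSimplicialTower

/-! ### Corners of simple algebras -/

theorem IsSimpleCStarAlgebra.one_mem_of_ne_bot {A : Type*} [CStarAlgebra A]
    (hA : IsSimpleCStarAlgebra A) {I : TwoSidedIdeal A} (hI : I ≠ ⊥) : (1 : A) ∈ I := by
  let J : TwoSidedIdeal A := .mk' (closure (I : Set A)) (subset_closure I.zero_mem)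
    (fun hx hy => map_mem_closure₂ continuous_add hx hy fun _ ha _ hb => I.add_mem ha hb)
    (fun hx => map_mem_closure continuous_neg hx fun _ => I.neg_mem)
    (fun hy => map_mem_closure (continuous_const_mul _) hy fun _ => I.mul_mem_left _ _)
    (fun {_ y} hx => map_mem_closure (f := (· * y)) (continuous_mul_const y) hx
      fun _ => I.mul_mem_right _ y)
  have hJ : (J : Set A) = closure I := TwoSidedIdeal.coe_mk' ..
  have hIJ : I ≤ J := fun x hx => (hJ.symm ▸ subset_closure hx : x ∈ (J : Set A))
  obtain hbot | htop := hA J (hJ ▸ isClosed_closure)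
  · exact absurd (le_bot_iff.1 (hbot ▸ hIJ)) hI
  have h1 : (1 : A) ∈ closure (I : Set A) := hJ ▸ J.one_mem_iff.2 htop
  obtain ⟨a, ha, h⟩ := Metric.mem_closure_iff.1 h1 1 one_pos
  exact mem_twoSidedIdeal_of_norm_sub_lt_one .one ha (by rwa [← dist_eq_norm])

/-- The sums of elements of the form `d* a d`. -/
def conjugateSums {A : Type*} [CStarAlgebra A] (a : A) : AddSubmonoid A :=
  .closure (Set.range fun d => star d * a * d)

section ConjugateSums

variable {A : Type*} [CStarAlgebra A] {a h : A}

theorem star_mul_mul_mem_conjugateSums (hh : h ∈ conjugateSums a) (d : A) :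
    star d * h * d ∈ conjugateSums a := by
  induction hh using AddSubmonoid.closure_induction with
  | mem _ hx =>
    obtain ⟨c, rfl⟩ := hx
    exact AddSubmonoid.subset_closure ⟨c * d, by simp [mul_assoc]⟩
  | zero => simp
  | add x y _ _ hx hy => simpa [mul_add, add_mul] using add_mem hx hy

theorem smul_mem_conjugateSums (hh : h ∈ conjugateSums a) {r : ℝ} (hr : 0 ≤ r) :
    r • h ∈ conjugateSums a := by
  simpa [smul_smul, Real.mul_self_sqrt hr] using
    star_mul_mul_mem_conjugateSums hh (√r • (1 : A))

theorem exists_sum_eq_of_mem_conjugateSums (hh : h ∈ conjugateSums a) :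
    ∃ l : List A, (l.map fun d => star d * a * d).sum = h := by
  induction hh using AddSubmonoid.closure_induction with
  | mem _ hx =>
    obtain ⟨c, rfl⟩ := hx
    exact ⟨[c], by simp⟩
  | zero => exact ⟨[], rfl⟩
  | add x y _ _ hx hy =>
    obtain ⟨l, rfl⟩ := hx
    obtain ⟨m, rfl⟩ := hy
    exact ⟨l ++ m, by simp⟩

/-- The elements `b` for which `b* b` is dominated by a sum of elements `d* a d`. -/
def dominatedIdeal [PartialOrder A] [StarOrderedRing A] (a : A) : TwoSidedIdeal A :=
  .mk' {b | ∃ h ∈ conjugateSums a, star b * b ≤ h} ⟨0, zero_mem _, by simp⟩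
    (by
      rintro x y ⟨h, hh, hx⟩ ⟨k, hk, hy⟩
      refine ⟨2 • h + 2 • k, add_mem (nsmul_mem hh 2) (nsmul_mem hk 2), ?_⟩
      calc star (x + y) * (x + y) ≤ star (x + y) * (x + y) + star (x - y) * (x - y) :=
            le_add_of_nonneg_right (star_mul_self_nonneg _)
        _ = 2 • (star x * x) + 2 • (star y * y) := by
            rw [star_add, star_sub]
            noncomm_ring
        _ ≤ 2 • h + 2 • k := by gcongr)
    (by simp)
    (by
      rintro x y ⟨h, hh, hy⟩
      refine ⟨‖star x * x‖ • h, smul_mem_conjugateSums hh (norm_nonneg _), ?_⟩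
      calc star (x * y) * (x * y) = star y * (star x * x) * y := by simp [mul_assoc]
        _ ≤ ‖star x * x‖ • (star y * y) := CStarAlgebra.star_left_conjugate_le_norm_smul
        _ ≤ ‖star x * x‖ • h := smul_le_smul_of_nonneg_left hy (norm_nonneg _))
    (by
      rintro x y ⟨h, hh, hx⟩
      refine ⟨_, star_mul_mul_mem_conjugateSums hh y, ?_⟩
      simpa [mul_assoc] using star_left_conjugate_le_conjugate hx y)

theorem IsSimpleCStarAlgebra.exists_sum_star_mul_mul_eq_one [PartialOrder A] [StarOrderedRing A]
    (hA : IsSimpleCStarAlgebra A) (ha : 0 ≤ a) (ha₀ : a ≠ 0) :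
    ∃ l : List A, (l.map fun d => star d * a * d).sum = 1 := by
  apply exists_sum_eq_of_mem_conjugateSums
  have hsqrt : CFC.sqrt a ∈ dominatedIdeal a := by
    refine (TwoSidedIdeal.mem_mk' ..).2 ⟨a, AddSubmonoid.subset_closure ⟨1, by simp⟩, ?_⟩
    rw [(CFC.sqrt_nonneg a).isSelfAdjoint.star_eq, CFC.sqrt_mul_sqrt_self a]
  have hbot : dominatedIdeal a ≠ ⊥ := by
    intro hbot
    rw [hbot, TwoSidedIdeal.mem_bot, CFC.sqrt_eq_zero_iff a] at hsqrt
    exact ha₀ hsqrt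
  obtain ⟨h, hh, hle⟩ := (TwoSidedIdeal.mem_mk' ..).1 (hA.one_mem_of_ne_bot hbot)
  rw [star_one, one_mul] at hle
  have hpos : IsStrictlyPositive h := .of_le isStrictlyPositive_one hle
  rw [← CFC.conjugate_rpow_neg_one_half h]
  convert star_mul_mul_mem_conjugateSums hh (h ^ (-(1 / 2) : ℝ))
  exact CFC.rpow_nonneg.isSelfAdjoint.star_eq.symm

end ConjugateSums

section TraceOfMatrices

variable {A : Type*} [CStarAlgebra A] {τ : A →ₗ[ℂ] ℂ} {ι : Type*} [Fintype ι]

theorem IsTracialState.nontrivial (hτ : IsTracialState A τ) : Nontrivial A :=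
  ⟨1, 0, fun h => one_ne_zero (hτ.map_one.symm.trans (h ▸ map_zero τ))⟩

theorem IsTracialState.eq_smul_of_forall_eq (hτ : IsTracialState A τ)
    (hu : ∀ σ, IsTracialState A σ → σ = τ) {ρ : A →ₗ[ℂ] ℂ} (hρ : ∀ a, 0 ≤ ρ (star a * a))
    (hρ_comm : ∀ a b, ρ (a * b) = ρ (b * a)) : ρ = ρ 1 • τ := by
  have h1 : 0 ≤ ρ 1 := by simpa using hρ 1
  have hne : 1 + ρ 1 ≠ 0 := (add_pos_of_pos_of_nonneg one_pos h1).ne'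
  have h := hu ((1 + ρ 1)⁻¹ • (τ + ρ))
    { map_one := by simpa [hτ.map_one, mul_add] using inv_mul_cancel₀ hne
      nonneg a := mul_nonneg (inv_nonneg.2 (add_nonneg zero_le_one h1))
        (add_nonneg (hτ.nonneg a) (hρ a))
      tracial a b := by simp [hτ.tracial a b, hρ_comm a b] }
  rw [inv_smul_eq_iff₀ hne, add_smul, one_smul] at h
  exact add_left_cancel h

theorem IsSimpleCStarAlgebra.exists_sum_conjTranspose_mul_eq_one (hA : IsSimpleCStarAlgebra A)
    {p : Matrix ι ι A} (hp : IsStarProjection p) (hp₀ : p ≠ 0) :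
    ∃ (k : ℕ) (w : Fin k → Matrix ι Unit A), (∀ l, p * w l = w l) ∧ ∑ l, (w l)ᴴ * w l = 1 := by
  let _ := CStarAlgebra.spectralOrder A
  have := CStarAlgebra.spectralOrderedRing A
  have hdiag (j : ι) : p j j = ∑ i, star (p i j) * p i j := by
    conv_lhs => rw [← hp.isIdempotentElem.eq]
    simp_rw [Matrix.mul_apply, ← Matrix.star_apply, hp.isSelfAdjoint.star_eq]
  obtain ⟨j, hj⟩ : ∃ j, p j j ≠ 0 := by
    by_contra! h
    refine hp₀ (Matrix.ext fun i j => ?_)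
    have hsum := (hdiag j).symm.trans (h j)
    rw [Finset.sum_eq_zero_iff_of_nonneg fun i _ => star_mul_self_nonneg _] at hsum
    exact CStarRing.star_mul_self_eq_zero_iff _ |>.1 (hsum i (Finset.mem_univ i))
  obtain ⟨l, hl⟩ := hA.exists_sum_star_mul_mul_eq_one
    (hdiag j ▸ Finset.sum_nonneg fun i _ => star_mul_self_nonneg _) hj
  refine ⟨l.length, fun m => .of fun i _ => p i j * l[m], fun m => ?_, ?_⟩
  · ext i
    conv_rhs => rw [← hp.isIdempotentElem.eq]
    simp [Matrix.mul_apply, ← mul_assoc, Finset.sum_mul]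
  · ext
    simp_rw [hdiag, Finset.mul_sum, Finset.sum_mul] at hl
    rw [← Fin.sum_univ_fun_getElem] at hl
    simpa [Matrix.mul_apply, Matrix.sum_apply, mul_assoc] using hl

end TraceOfMatrices

namespace IsCornerIso

variable {A : Type*} [CStarAlgebra A] {τ : A →ₗ[ℂ] ℂ} {n : ℕ} {p : Matrix (Fin n) (Fin n) A}
  {φ : A → Matrix (Fin n) (Fin n) A}

theorem exists_apply_eq (hφ : IsCornerIso A p φ) {x : Matrix (Fin n) (Fin n) A}
    (hx : p * x * p = x) : ∃ a, φ a = x := by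
  obtain ⟨-, -, -, -, -, hrange⟩ := hφ
  exact (hrange ▸ hx : x ∈ Set.range φ)

theorem isLinearMap (hφ : IsCornerIso A p φ) : IsLinearMap ℂ φ :=
  ⟨hφ.2.1, hφ.2.2.2.1⟩

theorem map_one (hφ : IsCornerIso A p φ) (hp : IsIdempotentElem p) : φ 1 = p := by
  obtain ⟨a, ha⟩ := hφ.exists_apply_eq (x := p) (by rw [hp.eq, hp.eq])
  obtain ⟨-, -, hmul, -, -, hrange⟩ := hφ
  have h1 : p * φ 1 * p = φ 1 := (hrange ▸ Set.mem_range_self (f := φ) 1 :)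
  calc φ 1 = φ 1 * p := by rw [← h1, mul_assoc _ p p, hp.eq]
    _ = p := by rw [← ha, ← hmul, one_mul]

theorem ne_zero [Nontrivial A] (hφ : IsCornerIso A p φ) (hp : IsIdempotentElem p) : p ≠ 0 := by
  rw [← hφ.map_one hp, ← (hφ.isLinearMap.mk' φ).map_zero]
  exact hφ.1.ne one_ne_zero

theorem map_trace_map_eq (hφ : IsCornerIso A p φ) (hp : IsIdempotentElem p)
    (hτ : IsTracialState A τ) (hu : ∀ σ, IsTracialState A σ → σ = τ) (a : A) :
    τ (φ a).trace = τ p.trace * τ a := by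
  have h1 := hφ.map_one hp
  let ψ := hφ.isLinearMap.mk' φ
  have ⟨_, _, hmul, _, hstar, _⟩ := hφ
  have hψ := hτ.eq_smul_of_forall_eq hu (ρ := τ ∘ₗ Matrix.traceLinearMap (Fin n) ℂ A ∘ₗ ψ)
    (fun a => by simpa [ψ, hmul, hstar, Matrix.star_eq_conjTranspose] using
      hτ.map_trace_star_mul_self_nonneg (φ a))
    (fun a b => by simpa [ψ, hmul] using hτ.map_trace_mul_comm (φ a) (φ b))
  simpa [ψ, h1] using LinearMap.congr_fun hψ a

theorem isStarProjection_apply (hφ : IsCornerIso A p φ) {q : A} (hq : IsStarProjection q) :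
    IsStarProjection (φ q) := by
  obtain ⟨-, -, hmul, -, hstar, -⟩ := hφ
  exact ⟨by rw [IsIdempotentElem, ← hmul, hq.isIdempotentElem.eq],
    by rw [IsSelfAdjoint, ← hstar, hq.isSelfAdjoint.star_eq]⟩

theorem exists_trace_mul_trace_eq (hφ : IsCornerIso A p φ) (hp : IsStarProjection p)
    (hA : IsSimpleCStarAlgebra A) (hτ : IsTracialState A τ) (hu : ∀ σ, IsTracialState A σ → σ = τ)
    {q : A} (hq : IsStarProjection q) :
    ∃ (k : ℕ) (Q : Matrix (Fin k) (Fin k) A), IsStarProjection Q ∧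
      τ p.trace * τ Q.trace = τ q := by
  have : Nontrivial A := hτ.nontrivial
  have htr := hφ.map_trace_map_eq hp.isIdempotentElem hτ hu
  have hp₀ := hφ.ne_zero hp.isIdempotentElem
  obtain ⟨k, w, hpw, hw⟩ := hA.exists_sum_conjTranspose_mul_eq_one hp hp₀
  have hwp (l : Fin k) : (w l)ᴴ * p = (w l)ᴴ := by
    rw [← hp.isSelfAdjoint.star_eq, Matrix.star_eq_conjTranspose, ← Matrix.conjTranspose_mul, hpw]
  let c : Matrix Unit Unit A := .of fun _ _ => q
  have hcc : c * c = c := by ext; simp [c, Matrix.mul_apply, hq.isIdempotentElem.eq]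
  have hc : cᴴ = c := by ext; simp [c, hq.isSelfAdjoint.star_eq]
  choose Q hQ using fun l m : Fin k => hφ.exists_apply_eq (x := w l * c * (w m)ᴴ)
    (by rw [← Matrix.mul_assoc, ← Matrix.mul_assoc, hpw, Matrix.mul_assoc, hwp])
  have hsum (f : Fin k → A) : φ (∑ l, f l) = ∑ l, φ (f l) := map_sum (hφ.isLinearMap.mk' φ) _ _
  obtain ⟨hinj, -, hmul, -, hstar, -⟩ := hφ
  refine ⟨k, .of Q, ⟨?_, ?_⟩, ?_⟩
  · ext l m
    refine hinj ?_
    calc φ (∑ r, Q l r * Q r m) = ∑ r, w l * c * ((w r)ᴴ * w r) * c * (w m)ᴴ := by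
          simp only [hsum, hmul, hQ, Matrix.mul_assoc]
      _ = φ (Q l m) := by
          rw [← Matrix.sum_mul, ← Matrix.sum_mul, ← Matrix.mul_sum, hw, Matrix.mul_one,
            Matrix.mul_assoc (w l), hcc, hQ]
  · ext l m
    refine hinj ?_
    rw [Matrix.star_apply, hstar, Matrix.of_apply, Matrix.of_apply, hQ, hQ,
      Matrix.star_eq_conjTranspose]
    simp [Matrix.conjTranspose_mul, Matrix.mul_assoc, hc]
  · calc τ p.trace * τ (Matrix.of Q).trace = ∑ l, τ (w l * c * (w l)ᴴ).trace := by
          change _ * τ (∑ l, Q l l) = _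
          rw [map_sum, Finset.mul_sum]
          exact Finset.sum_congr rfl fun l _ => (htr _).symm.trans (by rw [← hQ])
      _ = ∑ l, τ ((w l)ᴴ * w l * c).trace := by
          refine Finset.sum_congr rfl fun l _ => ?_
          rw [hτ.map_trace_mul_comm, Matrix.mul_assoc]
      _ = τ q := by
          rw [← map_sum, ← Matrix.trace_sum, ← Matrix.sum_mul, hw, Matrix.one_mul]
          simp [Matrix.trace, c]

end IsCornerIso

theorem fundamentalGroup_subset_positiveInnerMultipliers {A : Type*} [CStarAlgebra A]
    (hA : IsSimpleCStarAlgebra A) {τ : A →ₗ[ℂ] ℂ} (hτ : IsTracialState A τ)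
    (hu : ∀ σ, IsTracialState A σ → σ = τ) {G : AddSubgroup ℝ}
    (hG : G ≤ AddSubgroup.closure {g : ℝ | ∃ q : A, IsStarProjection q ∧ τ q = (g : ℂ)})
    (hτG : ∀ (n : ℕ) (p : Matrix (Fin n) (Fin n) A), IsStarProjection p →
      ∃ g ∈ G, τ p.trace = (g : ℂ)) :
    fundamentalGroup A τ ⊆ positiveInnerMultipliers G := by
  rintro t ⟨n, p, -, hpp, hps, ⟨φ, hφ⟩, hpt⟩
  have hp : IsStarProjection p := ⟨hpp, hps⟩
  replace hpt : τ p.trace = t := by simpa [Matrix.trace] using hpt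
  have htr := hφ.map_trace_map_eq hpp hτ hu
  have ht_nonneg : 0 ≤ t := by
    have h := hτ.map_trace_star_mul_self_nonneg p
    rw [← Matrix.star_eq_conjTranspose, hps, hpp, hpt] at h
    exact_mod_cast h
  have hge {q : A} (hq : IsStarProjection q) : ∃ g ∈ G, (t * g : ℂ) = τ q := by
    obtain ⟨k, Q, hQ, hpQ⟩ := hφ.exists_trace_mul_trace_eq hp hA hτ hu hq
    obtain ⟨g, hg, hQg⟩ := hτG k Q hQ
    exact ⟨g, hg, by rw [← hQg, ← hpt, hpQ]⟩
  have ht : t ≠ 0 := by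
    rintro rfl
    obtain ⟨g, -, hg⟩ := hge (.one A)
    simp [hτ.map_one] at hg
  have hGle : G ≤ G.comap (AddMonoidHom.mulLeft t) := by
    refine hG.trans ((AddSubgroup.closure_le _).2 ?_)
    rintro g ⟨q, hq, hqg⟩
    obtain ⟨h, hh, hqh⟩ := hτG n (φ q) (hφ.isStarProjection_apply hq)
    rw [htr, hpt, hqg] at hqh
    rw [← show t * g = h from mod_cast hqh] at hh
    exact hh
  have hGge : G ≤ G.map (AddMonoidHom.mulLeft t) := by
    refine hG.trans ((AddSubgroup.closure_le _).2 ?_)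
    rintro g ⟨q, hq, hqg⟩
    obtain ⟨h, hh, hqh⟩ := hge hq
    exact ⟨h, hh, show t * h = g from mod_cast hqh.trans hqg⟩
  refine ⟨ht_nonneg.lt_of_ne' ht, fun g => ⟨fun hg => ?_, fun hg => hGle hg⟩⟩
  obtain ⟨h, hh, hhg⟩ := hGge hg
  rwa [← mul_left_cancel₀ ht hhg]

/-! ### Realizing multipliers by corners -/

namespace WeightedFamily

section Scale

variable {B : Type*} {t : ℝˣ} {E : WeightedFamily B}

/-- The family `{(w, t s) | (w, s) ∈ E}`. -/
def scale (t : ℝˣ) (E : WeightedFamily B) : WeightedFamily B :=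
  E.map ((Equiv.refl B).prodCongr t.mulLeft).toEmbedding

theorem mem_scale {z : B × ℝ} : z ∈ E.scale t ↔ ∃ x ∈ E, (x.1, t * x.2) = z :=
  Finset.mem_map

theorem weights_scale : (E.scale t).weights = E.weights.map ((t : ℝ) * ·) := by
  simp [weights, scale]

theorem scale_subst [Monoid B] (ρ : ℝ → WeightedFamily B) :
    (E.subst ρ).scale t = (E.scale t).subst fun s => (ρ (t⁻¹ * s)).scale t := by
  ext z
  simp only [mem_scale, mem_subst]
  constructor
  · rintro ⟨_, ⟨x, hx, y, hy, rfl⟩, rfl⟩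
    exact ⟨_, ⟨x, hx, rfl⟩, _, ⟨y, by simpa using hy, rfl⟩, rfl⟩
  · rintro ⟨_, ⟨x, hx, rfl⟩, _, ⟨y, hy, rfl⟩, rfl⟩
    exact ⟨_, ⟨x, hx, y, by simpa using hy, rfl⟩, rfl⟩

variable [Ring B] [StarRing B]

theorem IsCuntz.scale (hE : E.IsCuntz) : (E.scale t).IsCuntz where
  star_mul_of_ne := by
    simp only [mem_scale]
    rintro _ ⟨x, hx, rfl⟩ _ ⟨y, hy, rfl⟩ hne
    exact hE.star_mul_of_ne x hx y hy fun h => hne (h ▸ rfl)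
  star_mul_self := by
    simp only [mem_scale]
    rintro _ ⟨x, hx, rfl⟩
    exact hE.star_mul_self x hx
  sum_mul_star := (Finset.sum_map ..).trans hE.sum_mul_star

theorem Refines.scale {F : WeightedFamily B} (h : E.Refines F) :
    (E.scale t).Refines (F.scale t) := by
  obtain ⟨ρ, hρ, rfl⟩ := h
  refine ⟨_, ?_, scale_subst ρ⟩
  simp only [mem_scale]
  rintro _ ⟨x, hx, rfl⟩
  rw [Units.inv_mul_cancel_left]
  exact ⟨(hρ x hx).1.scale, by
    rw [weights_scale, Multiset.sum_map_mul_left, Multiset.map_id', (hρ x hx).2]⟩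

theorem matrixUnits_scale : (E.scale t).matrixUnits = E.matrixUnits := by
  ext b
  simp [matrixUnits, mem_scale]

end Scale

variable {B : Type*} [CStarAlgebra B]

theorem limitAlgebra_scale (t : ℝˣ) (E : ℕ → WeightedFamily B) :
    limitAlgebra (fun n => (E n).scale t) = limitAlgebra E := by
  simp only [limitAlgebra, blockAlgebra, matrixUnits_scale]

end WeightedFamily

section Corner

variable {B : Type*} [CStarAlgebra B] {A A' : StarSubalgebra ℂ B} {ι : Type*} [Fintype ι]
  {V : ι → B}

/-- The homomorphism `a ↦ V a V*` given by a column `V` with `V* V = 1`. -/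
def columnConjugation (hV : ∑ k, star (V k) * V k = 1)
    (hA : ∀ k l, ∀ a ∈ A', V k * a * star (V l) ∈ A) : A' →⋆ₙₐ[ℂ] Matrix ι ι A where
  toFun a := .of fun k l => ⟨V k * a * star (V l), hA k l a a.2⟩
  map_smul' c a := by
    ext k l
    simp
  map_zero' := by
    ext k l
    simp
  map_add' a b := by
    ext k l
    simp [mul_add, add_mul]
  map_mul' a b := by
    ext k l
    calc V k * (a * b) * star (V l) = V k * a * (∑ m, star (V m) * V m) * b * star (V l) := by
          rw [hV, mul_one, ← mul_assoc]
      _ = ∑ m, V k * a * star (V m) * (V m * b * star (V l)) := by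
          simp only [Finset.mul_sum, Finset.sum_mul, mul_assoc]
      _ = _ := by rw [Matrix.mul_apply, AddSubmonoidClass.coe_finsetSum]; rfl
  map_star' a := by
    ext k l
    simp [mul_assoc]

theorem exists_isCornerIso_columnConjugation [IsClosed (A : Set B)] {n : ℕ} {V : Fin n → B}
    (hV : ∑ k, star (V k) * V k = 1) (hA : ∀ k l, ∀ a ∈ A', V k * a * star (V l) ∈ A)
    (hA' : ∀ k l, ∀ a ∈ A, star (V k) * a * V l ∈ A') (e : A ≃⋆ₐ[ℂ] A') :
    ∃ φ, IsCornerIso A (columnConjugation hV hA 1) φ := by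
  let f := columnConjugation hV hA
  let g (x : Matrix (Fin n) (Fin n) A) : A' :=
    ⟨∑ k, ∑ l, star (V k) * x k l * V l, sum_mem fun k _ => sum_mem fun l _ => hA' k l _ (x k l).2⟩
  have hgf (a : A') : g (f a) = a := Subtype.ext <| by
    calc ∑ k, ∑ l, star (V k) * (V k * a * star (V l)) * V l
        = (∑ k, star (V k) * V k) * a * ∑ l, star (V l) * V l := by
          simp only [Finset.sum_mul, Finset.mul_sum, mul_assoc]
          exact Finset.sum_comm
      _ = a := by rw [hV, one_mul, mul_one]
  have hfg (x) : f (g x) = f 1 * x * f 1 := by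
    ext k l
    simp only [f, g, columnConjugation, NonUnitalStarAlgHom.coe_mk', NonUnitalAlgHom.coe_mk,
      Matrix.of_apply, Matrix.mul_apply, AddSubmonoidClass.coe_finsetSum, MulMemClass.coe_mul,
      OneMemClass.coe_one, Finset.mul_sum, Finset.sum_mul, mul_assoc, one_mul]
    exact Finset.sum_comm
  refine ⟨f ∘ e, (Function.LeftInverse.injective hgf).comp (EquivLike.injective e),
    fun a b => by simp, fun a b => by simp, fun c a => by simp, fun a => by simp [map_star],
    Set.ext fun x => ⟨?_, fun hx => ⟨e.symm (g x), ?_⟩⟩⟩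
  · rintro ⟨a, rfl⟩
    change f 1 * f (e a) * f 1 = f (e a)
    rw [← map_mul, ← map_mul, one_mul, mul_one]
  · rw [Function.comp_apply, e.apply_symm_apply, hfg]
    exact hx

end Corner

namespace IsSimplicialTower

open WeightedFamily

variable {B : Type*} [CStarAlgebra B] {G : AddSubgroup ℝ} {T : ℝ}
  {E : ℕ → WeightedFamily B} {τ : limitAlgebra E →ₗ[ℂ] ℂ}

theorem scale (hE : IsSimplicialTower G T E) {t : ℝˣ}
    (ht : (t : ℝ) ∈ positiveInnerMultipliers G) :
    IsSimplicialTower G (t * T) fun n => (E n).scale t where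
  isCuntz n := (hE.isCuntz n).scale
  sum_weights n := by
    rw [weights_scale, Multiset.sum_map_mul_left, Multiset.map_id', hE.sum_weights]
  refines_succ n := (hE.refines_succ n).scale
  isSimplicialChain := by
    convert hE.isSimplicialChain.image_mul ht with n
    rw [weights_scale, Multiset.toFinset_map]

variable [Nontrivial B]

theorem sum_weights_mem_fundamentalGroup (hE : IsSimplicialTower G 1 E)
    (hτ : IsTracialState (limitAlgebra E) τ) {N : ℕ} {ρ : ℕ → ℝ → WeightedFamily B}
    (hEρ : ∀ j, E (N + j) = (E N).subst (ρ j)) {C : WeightedFamily B} (hC : C.IsCuntz)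
    (hCE : ∀ s ∈ C.weights, s ∈ (E N).weights)
    (hF : IsCuntzTower C.weights.sum fun j => C.subst (ρ j))
    (e : limitAlgebra E ≃⋆ₐ[ℂ] limitAlgebra fun j => C.subst (ρ j)) :
    C.weights.sum ∈ fundamentalGroup (limitAlgebra E) τ := by
  have hD : IsCuntzTower 1 fun j => (E N).subst (ρ j) := by
    simpa only [hEρ, id] using hE.toIsCuntzTower.comp (strictMono_id.const_add N)
  have hlim : limitAlgebra (fun j => (E N).subst (ρ j)) = limitAlgebra E := by
    simpa only [hEρ, id] using hE.toIsCuntzTower.limitAlgebra_comp (strictMono_id.const_add N)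
  let c : Fin C.card ≃ C := C.equivFin.symm
  choose x hxE hx using fun k => mem_weights.1 (hCE _ (snd_mem_weights (c k).2))
  -- The column `V` carries the tower grown from `C` onto a corner of the tower `E`.
  let V (k : Fin C.card) : B := (x k).1 * star (c k).1.1
  have hup (k j) : MulMapsTo (V k) (C.subst (ρ j)) ((E N).subst (ρ j)) :=
    hC.mulMapsTo_mul_star_subst (c k).2 (hxE k) (hx k) (ρ j)
  have hdown (k j) : MulMapsTo (star (V k)) ((E N).subst (ρ j)) (C.subst (ρ j)) := by
    simpa [V] using
      (hE.isCuntz N).mulMapsTo_mul_star_subst (hxE k) (c k).2 (hx k).symm (ρ j)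
  have hV : ∑ k, star (V k) * V k = 1 := by
    rw [← hC.sum_coe_mul_star, ← c.sum_comp]
    refine Finset.sum_congr rfl fun k _ => ?_
    rw [star_mul_mul_mul_of_star_mul_self ((hE.isCuntz N).star_mul_self _ (hxE k)), star_star]
  have : IsClosed (limitAlgebra E : Set B) := isClosed_limitAlgebra E
  have hA (k l) (a) (ha : a ∈ limitAlgebra fun j => C.subst (ρ j)) :
      V k * a * star (V l) ∈ limitAlgebra E :=
    hlim ▸ hF.mul_mul_star_mem_limitAlgebra (hup k) (hup l) ha
  obtain ⟨φ, hφ⟩ := exists_isCornerIso_columnConjugation hV hA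
    (fun k l a ha => star_star (V l) ▸
      hD.mul_mul_star_mem_limitAlgebra (hdown k) (hdown l) (hlim.symm ▸ ha)) e
  have htr (k) : τ (columnConjugation hV hA 1 k k) = ((c k).1.2 : ℂ) := by
    rw [← hx, ← div_one (x k).2]
    refine hE.map_mul_star_eq_div hτ (hxE k) ?_
    change V k * 1 * star (V k) = _
    rw [mul_one, star_mul, star_star, mul_assoc, ← mul_assoc (star _), hC.star_mul_self _ (c k).2,
      one_mul]
  refine ⟨C.card, _, Finset.card_pos.2 hC.nonempty, ?_, ?_, ⟨φ, hφ⟩, ?_⟩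
  · rw [← map_mul, mul_one]
  · rw [← map_star, star_one]
  · calc ∑ k, τ (columnConjugation hV hA 1 k k) = ∑ k, ((c k).1.2 : ℂ) :=
          Finset.sum_congr rfl fun k _ => htr k
      _ = (C.weights.sum : ℂ) := by
          rw [c.sum_comp fun y => (y.1.2 : ℂ), WeightedFamily.sum_weights, Complex.ofReal_sum,
            Finset.sum_coe_sort C fun y => (y.2 : ℂ)]

theorem positiveInnerMultipliers_subset_fundamentalGroup (hB : HasCuntzPair B)
    (hE : IsSimplicialTower G 1 E) (hτ : IsTracialState (limitAlgebra E) τ) :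
    positiveInnerMultipliers G ⊆ fundamentalGroup (limitAlgebra E) τ := by
  intro t ht
  have htG : t ∈ G := by simpa using (ht.2 1).2 hE.total_mem
  obtain ⟨N, hN⟩ := hE.isSimplicialChain.exists_mem_closure t htG ht.1
  obtain ⟨C, hC, hCE, rfl⟩ := hB.exists_isCuntz_sum_weights_eq hN ht.1
  replace hCE : ∀ s ∈ C.weights, s ∈ (E N).weights := fun s hs => Multiset.mem_toFinset.1 (hCE s hs)
  obtain ⟨ρ, hEρ, hρ⟩ := hE.exists_subst N
  have hF : IsSimplicialTower G C.weights.sum fun j => C.subst (ρ j) := by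
    refine (hρ C hC hCE).isSimplicialTower
      (hE.comp (strictMono_id.const_add N)).isSimplicialChain fun j s hs => ?_
    obtain ⟨r, hr, hs⟩ := mem_weights_subst.1 hs
    simpa [hEρ] using mem_weights_subst.2 ⟨r, hCE r hr, hs⟩
  have hE' := hE.scale (t := .mk0 _ ht.1.ne') ht
  rw [Units.val_mk0, mul_one] at hE'
  obtain ⟨e⟩ := hE'.nonempty_limitAlgebra_starAlgEquiv hB hF
  rw [limitAlgebra_scale] at e
  exact hE.sum_weights_mem_fundamentalGroup hτ hEρ hC hCE hF.toIsCuntzTower e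

theorem exists_isStarProjection_map_eq (hE : IsSimplicialTower G 1 E)
    (hτ : IsTracialState (limitAlgebra E) τ) {n : ℕ} {s : ℝ} (hs : s ∈ (E n).weights) :
    ∃ q, IsStarProjection q ∧ τ q = (s : ℂ) := by
  obtain ⟨x, hx, rfl⟩ := mem_weights.1 hs
  let q : limitAlgebra E :=
    ⟨x.1 * star x.1, blockAlgebra_le_limitAlgebra E n (mul_star_mem_blockAlgebra hx hx rfl)⟩
  refine ⟨q, ⟨Subtype.ext ?_, Subtype.ext ?_⟩, ?_⟩
  · change x.1 * star x.1 * (x.1 * star x.1) = x.1 * star x.1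
    rw [mul_assoc, ← mul_assoc (star _), (hE.isCuntz n).star_mul_self x hx, one_mul]
  · change star (x.1 * star x.1) = x.1 * star x.1
    rw [star_mul, star_star]
  · simpa using hE.map_mul_star_eq_div hτ hx (a := q) rfl

theorem fundamentalGroup_eq_positiveInnerMultipliers (hB : HasCuntzPair B)
    (hE : IsSimplicialTower G 1 E) (hτ : IsTracialState (limitAlgebra E) τ) :
    fundamentalGroup (limitAlgebra E) τ = positiveInnerMultipliers G := by
  refine (fundamentalGroup_subset_positiveInnerMultipliers hE.isSimpleCStarAlgebra hτ
    (fun _ => hE.isTracialState_unique hτ) (fun g hg => ?_) fun n p hp => ?_).antisymm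
      (hE.positiveInnerMultipliers_subset_fundamentalGroup hB hτ)
  · set P : AddSubgroup ℝ := .closure {g | ∃ q : limitAlgebra E, IsStarProjection q ∧ τ q = (g : ℂ)}
    have hpos {g : ℝ} (hg : g ∈ G) (hg₀ : 0 < g) : g ∈ P := by
      obtain ⟨n, hn⟩ := hE.isSimplicialChain.exists_mem_closure g hg hg₀
      refine AddSubmonoid.closure_le (S := P.toAddSubmonoid).2 (fun s hs => ?_) hn
      exact AddSubgroup.subset_closure
        (hE.exists_isStarProjection_map_eq hτ (Multiset.mem_toFinset.1 hs))
    obtain hg₀ | rfl | hg₀ := lt_trichotomy g 0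
    · exact neg_mem_iff.1 (hpos (neg_mem hg) (neg_pos.2 hg₀))
    · exact zero_mem P
    · exact hpos hg hg₀
  · simpa using hE.exists_total_mul_map_trace_eq_of_isStarProjection hB hτ hp

end IsSimplicialTower

section HilbertBasis

variable {ι H : Type*} [NormedAddCommGroup H] [InnerProductSpace ℂ H] [CompleteSpace H]

open WeightedFamily

theorem exists_star_mul_self_eq_one_of_hilbertBasis (b : HilbertBasis ι ℂ H) {f : ι → ι}
    (hf : Function.Injective f) :
    ∃ s : H →L[ℂ] H, star s * s = 1 ∧ (∀ k, s (b k) = b (f k)) ∧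
      (∀ k, star s (b (f k)) = b k) ∧ ∀ n ∉ Set.range f, star s (b n) = 0 := by
  classical
  have ho : Orthonormal ℂ (b ∘ f) := b.orthonormal.comp f hf
  let s : H →L[ℂ] H :=
    (ho.orthogonalFamily.linearIsometry.comp b.repr.toLinearIsometry).toContinuousLinearMap
  have hs : star s * s = 1 :=
    s.norm_map_iff_adjoint_comp_self.1 (LinearIsometry.norm_map _)
  have hsb (k : ι) : s (b k) = b (f k) := by simp [s, b.repr_self]
  refine ⟨s, hs, hsb, fun k => ?_, fun n hn => ?_⟩
  · rw [← hsb, ← mul_apply_eq_comp, hs, one_apply_eq_self]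
  · refine b.repr.injective (lp.ext (funext fun k => ?_))
    rw [b.repr_apply_apply, ContinuousLinearMap.star_eq_adjoint,
      ContinuousLinearMap.adjoint_inner_right, hsb, map_zero]
    exact b.orthonormal.2 fun h => hn ⟨k, h⟩

theorem hasCuntzPair_of_hilbertBasis (b : HilbertBasis ℕ ℂ H) : HasCuntzPair (H →L[ℂ] H) := by
  obtain ⟨s, hs, hsb, hs', hs₀⟩ := exists_star_mul_self_eq_one_of_hilbertBasis b
    (f := (2 * ·)) fun _ _ h => by simpa using h
  obtain ⟨t, ht, htb, ht', ht₀⟩ := exists_star_mul_self_eq_one_of_hilbertBasis b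
    (f := (2 * · + 1)) fun _ _ h => by simpa using h
  replace hs₀ (k : ℕ) : star s (b (2 * k + 1)) = 0 := hs₀ _ (by rintro ⟨l, hl⟩; lia)
  replace ht₀ (k : ℕ) : star t (b (2 * k)) = 0 := ht₀ _ (by rintro ⟨l, hl⟩; lia)
  have hext {u v : H →L[ℂ] H} (h : ∀ n, u (b n) = v (b n)) : u = v :=
    ContinuousLinearMap.ext_on (Submodule.dense_iff_topologicalClosure_eq_top.2 b.dense_span)
      (Set.forall_mem_range.2 h)
  refine ⟨s, t, hs, ht, hext fun n => ?_, hext fun n => ?_⟩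
  · simp [htb, hs₀]
  · obtain ⟨k, rfl | rfl⟩ := n.even_or_odd'
    · simp [hs', ht₀, hsb]
    · simp [hs₀, ht', htb]

end HilbertBasis

theorem exists_algebra_fundamentalGroup_eq_posUnits_general (G : AddSubgroup ℝ) [Countable G]
    (hG : 1 ∈ G) :
    ∃ (A : Type) (_ : CStarAlgebra A) (_ : TopologicalSpace.SeparableSpace A) (τ : A →ₗ[ℂ] ℂ),
      IsSimpleCStarAlgebra A ∧ IsTracialState A τ ∧
      (∀ σ : A →ₗ[ℂ] ℂ, IsTracialState A σ → σ = τ) ∧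
      fundamentalGroup A τ = positiveInnerMultipliers G := by
  have b : HilbertBasis ℕ ℂ (lp (fun _ : ℕ => ℂ) 2) := .ofRepr (.refl ..)
  have : Nontrivial (lp (fun _ : ℕ => ℂ) 2) := ⟨b 0, 0, b.orthonormal.ne_zero 0⟩
  have hB := hasCuntzPair_of_hilbertBasis b
  obtain ⟨S, hS⟩ := exists_isSimplicialChain G
  obtain ⟨n, hn⟩ := hS.exists_mem_closure 1 hG one_pos
  replace hS := hS.comp (strictMono_id.add_const n)
  obtain ⟨E, hE, hES⟩ := exists_isCuntzTower hB hS (T := 1) (by simpa using hn) one_pos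
  replace hE := hE.isSimplicialTower hS hES
  obtain ⟨τ, hτ⟩ := hE.exists_isTracialState fun n s hs => hE.pos n hs
  exact ⟨WeightedFamily.limitAlgebra E, inferInstance, hE.separableSpace_limitAlgebra, τ,
    hE.isSimpleCStarAlgebra, hτ, fun _ => hE.isTracialState_unique hτ,
    hE.fundamentalGroup_eq_positiveInnerMultipliers hB hτ⟩

theorem positiveInnerMultipliers_toAddSubgroup (R : Subring ℝ) :
    positiveInnerMultipliers R.toAddSubgroup = {t : ℝ | 0 < t ∧ t ∈ R ∧ t⁻¹ ∈ R} := by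
  ext t
  refine and_congr_right fun ht => ⟨fun h => ⟨?_, ?_⟩, fun h g =>
    ⟨fun hg => ?_, fun hg => R.mul_mem h.1 hg⟩⟩
  · simpa using (h 1).2 (one_mem R)
  · exact (h t⁻¹).1 (by simp [mul_inv_cancel₀ ht.ne', one_mem])
  · simpa [inv_mul_cancel_left₀ ht.ne'] using R.mul_mem h.2 hg

/-- every countable unital subring `R` of `ℝ` arises as the fundamental
group of a separable unital simple C*-algebra with unique tracial state, in the sense
that `F(A)` equals the positive invertible elements of `R`. -/
theorem exists_algebra_fundamentalGroup_eq_posUnits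
    (R : Subring ℝ) (hR : Countable R) :
    ∃ (A : Type) (inst : CStarAlgebra A) (instSep : TopologicalSpace.SeparableSpace A)
      (τ : A →ₗ[ℂ] ℂ),
      IsSimpleCStarAlgebra A ∧ IsTracialState A τ ∧
      (∀ σ : A →ₗ[ℂ] ℂ, IsTracialState A σ → σ = τ) ∧
      fundamentalGroup A τ = {t : ℝ | 0 < t ∧ t ∈ R ∧ t⁻¹ ∈ R} := by
  have : Countable R.toAddSubgroup := hR
  exact positiveInnerMultipliers_toAddSubgroup R ▸
    exists_algebra_fundamentalGroup_eq_posUnits_general R.toAddSubgroup (one_mem R)
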